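/- arXiv:1407.7565 — 4 statements merged into one kernel-verified Lean document; each statement's English description precedes it below -/
import Mathlib

section
/- Let V be a finite-dimensional real vector space, let V₁, …, Vₙ (n ≥ 1) be linear subspaces of V, and let A⁺ ⊆ V be a convex cone such that A⁺ ⊆ V₁ ∪ ⋯ ∪ Vₙ. Then there exists an index k ∈ {1, …, n} such that A⁺ ⊆ Vₖ. -/
/-!
A ray `x + m • y`, `m : ℕ`, meets a saturated subgroup `H` at most once unless both `x` and `y`
lie in `H`: two hits put a positive multiple of `y` in `H`, hence `y`, hence `x`. So if `x` avoids
finitely many saturated subgroups and `y` avoids one more, some `x + m • y` avoids all of them.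
Adding the subgroups one at a time, a subsemigroup contained in none of them has an element outside
their union. Subspaces over a field of characteristic zero are saturated.
-/

section AddGroup

variable {G ι : Type*} [AddGroup G]

theorem subsingleton_setOf_add_nsmul_mem {H : AddSubgroup G} (hH : H.NSMulSaturated) {x y : G}
    (hxy : x ∉ H ∨ y ∉ H) : {m : ℕ | x + m • y ∈ H}.Subsingleton := by
  intro a ha b hb
  wlog hab : a ≤ b generalizing a b
  · exact (this hb ha (le_of_not_ge hab)).symm
  obtain ⟨d, rfl⟩ := Nat.exists_eq_add_of_le hab
  have hdy : d • y ∈ H := by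
    rwa [Set.mem_ofPred_eq, add_nsmul, ← add_assoc, H.add_mem_cancel_left ha] at hb
  by_contra hne
  have hy : y ∈ H := (hH hdy).resolve_left (by simpa using hne)
  have hx : x ∈ H := (H.add_mem_cancel_right (H.nsmul_mem hy a)).1 ha
  exact hxy.elim (· hx) (· hy)

theorem exists_forall_add_nsmul_notMem {s : Finset ι} {H : ι → AddSubgroup G}
    (hH : ∀ i ∈ s, (H i).NSMulSaturated) {x y : G} (hxy : ∀ i ∈ s, x ∉ H i ∨ y ∉ H i) :
    ∃ m : ℕ, ∀ i ∈ s, x + m • y ∉ H i := by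
  have hfin : (⋃ i ∈ s, {m : ℕ | x + m • y ∈ H i}).Finite :=
    s.finite_toSet.biUnion fun i hi ↦
      (subsingleton_setOf_add_nsmul_mem (hH i hi) (hxy i hi)).finite
  simpa using hfin.exists_notMem

theorem add_nsmul_mem_of_mem {M : Type*} [AddMonoid M] {S : AddSubsemigroup M} {x y : M}
    (hx : x ∈ S) (hy : y ∈ S) (m : ℕ) : x + m • y ∈ S := by
  induction m with
  | zero => simpa using hx
  | succ m ih => simpa only [succ_nsmul, ← add_assoc] using S.add_mem ih hy

theorem exists_mem_forall_notMem_of_not_subset {S : AddSubsemigroup G} (hS : (S : Set G).Nonempty)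
    {s : Finset ι} {H : ι → AddSubgroup G} (hH : ∀ i ∈ s, (H i).NSMulSaturated)
    (hSH : ∀ i ∈ s, ¬(S : Set G) ⊆ H i) : ∃ x ∈ S, ∀ i ∈ s, x ∉ H i := by
  induction s using Finset.cons_induction with
  | empty => exact hS.imp fun x hx ↦ ⟨hx, by simp⟩
  | cons j s hj ih =>
    obtain ⟨hSj, hSs⟩ := (Finset.forall_mem_cons hj _).1 hSH
    obtain ⟨x, hxS, hx⟩ := ih (fun i hi ↦ hH i (Finset.mem_cons_of_mem hi)) hSs
    obtain ⟨y, hyS, hy⟩ := Set.not_subset.1 hSj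
    obtain ⟨m, hm⟩ := exists_forall_add_nsmul_notMem (x := x) (y := y) hH <|
      (Finset.forall_mem_cons hj _).2 ⟨.inr hy, fun i hi ↦ .inl (hx i hi)⟩
    exact ⟨x + m • y, add_nsmul_mem_of_mem hxS hyS m, hm⟩

theorem convex_cone_subset_of_subset_finite_union_subspaces_general [Finite ι] [Nonempty ι]
    {H : ι → AddSubgroup G} (hH : ∀ i, (H i).NSMulSaturated) {S : AddSubsemigroup G}
    (hS : (S : Set G) ⊆ ⋃ i, (H i : Set G)) : ∃ k, (S : Set G) ⊆ H k := by
  obtain hS₀ | hS₀ := (S : Set G).eq_empty_or_nonempty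
  · simp [hS₀]
  have := Fintype.ofFinite ι
  by_contra! hSH
  obtain ⟨x, hxS, hx⟩ := exists_mem_forall_notMem_of_not_subset hS₀ (s := Finset.univ)
    (fun i _ ↦ hH i) (fun i _ ↦ hSH i)
  obtain ⟨i, hi⟩ := Set.mem_iUnion.1 (hS hxS)
  exact hx i (Finset.mem_univ i) hi

end AddGroup

theorem nsmulSaturated_toAddSubmonoid {K M : Type*} [DivisionSemiring K] [CharZero K]
    [AddCommMonoid M] [Module K M] (W : Submodule K M) : W.toAddSubmonoid.NSMulSaturated := by
  intro n x hnx
  refine or_iff_not_imp_left.2 fun hn ↦ (W.smul_mem_iff (Nat.cast_ne_zero (R := K).2 hn)).1 ?_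
  rwa [Nat.cast_smul_eq_nsmul]

/-- A convex cone in a finite-dimensional real vector space that is
contained in a finite union of linear subspaces is contained in one of them. -/
theorem convex_cone_subset_of_subset_finite_union_subspaces
    {V : Type*} [AddCommGroup V] [Module ℝ V] [FiniteDimensional ℝ V]
    {n : ℕ} (hn : 1 ≤ n) (W : Fin n → Submodule ℝ V) (A : Set V)
    (hA_add : ∀ x ∈ A, ∀ y ∈ A, x + y ∈ A)
    (hA_smul : ∀ c : ℝ, 0 < c → ∀ x ∈ A, c • x ∈ A)
    (hA_sub : A ⊆ ⋃ i : Fin n, (W i : Set V)) :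
    ∃ k : Fin n, A ⊆ (W k : Set V) :=
  have : Nonempty (Fin n) := ⟨⟨0, hn⟩⟩
  convex_cone_subset_of_subset_finite_union_subspaces_general (H := fun i ↦ (W i).toAddSubgroup)
    (S := ⟨A, fun hx hy ↦ hA_add _ hx _ hy⟩) (fun i ↦ nsmulSaturated_toAddSubmonoid (W i)) hA_sub
end

section
/- Let V be a finite-dimensional real vector space, W a finite subgroup of the group of linear automorphisms of V, b ⊆ V a linear subspace, and C₁, C₂ ⊆ V convex cones such that C₁ ⊆ ⋃_{w ∈ W} w(b) and C₂ ⊆ ⋃_{w ∈ W} w(b). If dim span(C₁) + dim span(C₂) > dim b, then there exist w ∈ W and a nonzero vector x ∈ V with x ∈ span(C₁) and x ∈ w(span(C₂)). -/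
/-!
A convex cone `C` covered by fewer than `#K` subspaces has every finite subset `{v₀, …, vₙ₋₁}`
inside one of them: the points `∑ tʲ vⱼ` with `t > 0` lie in `C`, so by the pigeonhole principle
one of the subspaces contains infinitely many of them, and inverting a Vandermonde system recovers
each `vⱼ`. When the subspaces have bounded dimension this puts the whole span of `C` inside one of
them. Hence `span C₁ ≤ w₁ b` and `span C₂ ≤ w₂ b`; then `span C₁` and `w₁ w₂⁻¹ (span C₂)` both
lie in `w₁ b`, where a dimension count shows that they meet.
-/

section

open Cardinal

universe u v w

theorem exists_infinite_fiber_lift {α : Type u} {β : Type v} [Infinite β] (f : β → α)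
    (h : lift.{v} #α < lift.{u} #β) : ∃ a, (f ⁻¹' {a}).Infinite := by
  obtain ⟨⟨a⟩, ha⟩ := exists_infinite_fiber
    (fun x : ULift.{u} β => ULift.up.{v} (f x.down)) (by simpa only [mk_uLift] using h)
  refine ⟨a, Set.Infinite.mono ?_ ((Set.infinite_coe_iff.1 ha).image ULift.down_injective.injOn)⟩
  rintro _ ⟨x, hx, rfl⟩
  exact congrArg ULift.down hx

theorem forall_mem_of_sum_pow_smul_mem {K V : Type*} [Field K] [AddCommGroup V]
    [Module K V] {p : Submodule K V} {n : ℕ} {t : Fin n → K} (ht : Function.Injective t)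
    {v : Fin n → V} (h : ∀ i, ∑ j : Fin n, t i ^ (j : ℕ) • v j ∈ p) (j : Fin n) : v j ∈ p := by
  by_contra hj
  obtain ⟨φ, hφj, hpφ⟩ := p.exists_le_ker_of_notMem hj
  have hφ : (fun j => φ (v j)) = 0 := by
    refine Matrix.eq_zero_of_forall_index_sum_pow_mul_eq_zero ht fun i => ?_
    simpa only [map_sum, map_smul, smul_eq_mul] using LinearMap.mem_ker.1 (hpφ (h i))
  exact hφj (congrFun hφ j)

theorem not_disjoint_of_finrank_lt_add {K V : Type*} [DivisionRing K] [AddCommGroup V]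
    [Module K V] {S T b : Submodule K V} [FiniteDimensional K b] (hS : S ≤ b) (hT : T ≤ b)
    (h : Module.finrank K b < Module.finrank K S + Module.finrank K T) : ¬Disjoint S T := by
  intro hST
  have := Submodule.finiteDimensional_of_le hS
  have := Submodule.finiteDimensional_of_le hT
  have hsum := Submodule.finrank_sup_add_finrank_inf_eq S T
  rw [hST.eq_bot, finrank_bot, add_zero] at hsum
  exact (hsum ▸ h).not_ge (Submodule.finrank_mono (sup_le hS hT))

section ConvexCone

variable {K : Type u} {V : Type v} {ι : Type w} [Field K] [LinearOrder K] [IsStrictOrderedRing K]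
  [AddCommGroup V] [Module K V] [Nonempty ι] {C : ConvexCone K V}

theorem exists_subset_of_convexCone_subset_iUnion (hι : lift.{u} #ι < lift.{w} #K)
    {p : ι → Submodule K V} (hC : (C : Set V) ⊆ ⋃ i, p i) {s : Set V} (hs : s.Finite)
    (hsC : s ⊆ C) : ∃ i, s ⊆ p i := by
  obtain ⟨n, v, -, rfl⟩ := hs.fin_param
  rw [Set.range_subset_iff] at hsC
  obtain hn | hn := isEmpty_or_nonempty (Fin n)
  · exact ⟨Classical.arbitrary ι, by simp only [Set.range_eq_empty, Set.empty_subset]⟩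
  obtain ⟨τ, hτ_inj, hτ_pos⟩ : ∃ τ : K → K, Function.Injective τ ∧ ∀ t, 0 < τ t :=
    ⟨fun t => 1 + orderIsoIooNegOneOne K t,
      (add_right_injective 1).comp
        (Subtype.val_injective.comp (orderIsoIooNegOneOne K).injective),
      fun t => by linarith [(orderIsoIooNegOneOne K t).2.1]⟩
  have hcurve (t : K) : ∑ j : Fin n, τ t ^ (j : ℕ) • v j ∈ C :=
    Finset.sum_induction_nonempty _ (· ∈ C) (fun _ _ hx hy => C.add_mem hx hy)
      Finset.univ_nonempty fun j _ => C.smul_mem (pow_pos (hτ_pos t) j) (hsC j)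
  choose f hf using fun t => Set.mem_iUnion.1 (hC (hcurve t))
  obtain ⟨i, hi⟩ := exists_infinite_fiber_lift f hι
  let t : Fin n ↪ f ⁻¹' {i} := Fin.valEmbedding.trans (hi.natEmbedding _)
  refine ⟨i, Set.range_subset_iff.2 <| forall_mem_of_sum_pow_smul_mem
    (t := fun k => τ (t k)) (hτ_inj.comp (Subtype.val_injective.comp t.injective)) fun k => ?_⟩
  have hk : f (t k) = i := (t k).2
  simpa only [hk, SetLike.mem_coe] using hf (t k)

theorem exists_span_le_of_convexCone_subset_iUnion (hι : lift.{u} #ι < lift.{w} #K)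
    {p : ι → Submodule K V} {d : ℕ} (hp : ∀ i, Module.rank K (p i) ≤ d)
    (hC : (C : Set V) ⊆ ⋃ i, p i) : ∃ i, Submodule.span K (C : Set V) ≤ p i := by
  obtain ⟨s, hsC, hs_span, hs_indep⟩ := exists_linearIndependent K (C : Set V)
  have hs_fin : s.Finite := by
    by_contra hs_inf
    obtain ⟨t, hts, ht_card⟩ := Set.Infinite.exists_subset_card_eq hs_inf (d + 1)
    obtain ⟨i, hi⟩ :=
      exists_subset_of_convexCone_subset_iUnion hι hC t.finite_toSet (hts.trans hsC)
    have hcard : (t.card : Cardinal) ≤ d := calc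
      (t.card : Cardinal) = Module.rank K (Submodule.span K (t : Set V)) := by
        rw [rank_span_set (LinearIndepOn.mono (v := id) hs_indep hts)]
        exact mk_coe_finset.symm
      _ ≤ Module.rank K (p i) := Submodule.rank_mono (Submodule.span_le.2 hi)
      _ ≤ d := hp i
    rw [ht_card, Nat.cast_le] at hcard
    exact d.not_succ_le_self hcard
  obtain ⟨i, hi⟩ := exists_subset_of_convexCone_subset_iUnion hι hC hs_fin hsC
  exact ⟨i, hs_span ▸ Submodule.span_le.2 hi⟩

theorem exists_span_le_map_of_convexCone_subset_iUnion_image {U : Type*} [AddCommGroup U]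
    [Module K U] (hι : lift.{u} #ι < lift.{w} #K) (f : ι → U →ₗ[K] V) (b : Submodule K U)
    [FiniteDimensional K b] (hC : (C : Set V) ⊆ ⋃ i, f i '' b) :
    ∃ i, Submodule.span K (C : Set V) ≤ b.map (f i) := by
  refine exists_span_le_of_convexCone_subset_iUnion (d := Module.finrank K b) hι (fun i => ?_) hC
  rw [← Module.finrank_eq_rank, Nat.cast_le]
  exact Submodule.finrank_map_le (f i) b

end ConvexCone

theorem exists_weyl_translate_inter_ne_bot_general {K : Type u} {V : Type v} [Field K]
    [LinearOrder K] [IsStrictOrderedRing K] [AddCommGroup V] [Module K V]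
    (W : Subgroup (V ≃ₗ[K] V)) (hW : lift.{u} #W < lift.{v} #K)
    (b : Submodule K V) [FiniteDimensional K b] (C₁ C₂ : ConvexCone K V)
    (hC₁ : (C₁ : Set V) ⊆ ⋃ w ∈ (W : Set (V ≃ₗ[K] V)), w '' (b : Set V))
    (hC₂ : (C₂ : Set V) ⊆ ⋃ w ∈ (W : Set (V ≃ₗ[K] V)), w '' (b : Set V))
    (hdim : Module.finrank K b < Module.finrank K (Submodule.span K (C₁ : Set V)) +
      Module.finrank K (Submodule.span K (C₂ : Set V))) :
    ∃ w ∈ W, ∃ x : V, x ≠ 0 ∧ x ∈ Submodule.span K (C₁ : Set V) ∧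
      x ∈ w '' (Submodule.span K (C₂ : Set V) : Set V) := by
  rw [Set.biUnion_eq_iUnion] at hC₁ hC₂
  obtain ⟨⟨w₁, hw₁⟩, h₁⟩ := exists_span_le_map_of_convexCone_subset_iUnion_image hW
    (fun w : W => (w : V ≃ₗ[K] V).toLinearMap) b hC₁
  obtain ⟨⟨w₂, hw₂⟩, h₂⟩ := exists_span_le_map_of_convexCone_subset_iUnion_image hW
    (fun w : W => (w : V ≃ₗ[K] V).toLinearMap) b hC₂
  have h₂' : (Submodule.span K (C₂ : Set V)).map (w₁ * w₂⁻¹ : V ≃ₗ[K] V).toLinearMap ≤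
      b.map w₁.toLinearMap := by
    rintro _ ⟨y, hy, rfl⟩
    obtain ⟨z, hz, rfl⟩ := h₂ hy
    exact ⟨z, hz, congrArg w₁ (w₂.symm_apply_apply z).symm⟩
  have hmeet := not_disjoint_of_finrank_lt_add h₁ h₂'
    (by simpa only [LinearEquiv.finrank_map_eq] using hdim)
  rw [disjoint_iff] at hmeet
  obtain ⟨x, ⟨hx₁, hx₂⟩, hx⟩ := Submodule.exists_mem_ne_zero_of_ne_bot hmeet
  exact ⟨w₁ * w₂⁻¹, W.mul_mem hw₁ (W.inv_mem hw₂), x, hx, hx₁, hx₂⟩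

end

/-- If two convex cones in a finite-dimensional real vector space are each
contained in the union of the images of a subspace `b` under a finite group `W` of linear
automorphisms, and the sum of the dimensions of their spans exceeds `dim b`, then some
`W`-translate of the span of the second cone meets the span of the first cone nontrivially. -/
theorem exists_weyl_translate_inter_ne_bot
    {V : Type*} [AddCommGroup V] [Module ℝ V] [FiniteDimensional ℝ V]
    (W : Subgroup (V ≃ₗ[ℝ] V)) (hW : (W : Set (V ≃ₗ[ℝ] V)).Finite)
    (b : Submodule ℝ V) (C₁ C₂ : Set V)
    (hC₁_add : ∀ x ∈ C₁, ∀ y ∈ C₁, x + y ∈ C₁)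
    (hC₁_smul : ∀ c : ℝ, 0 < c → ∀ x ∈ C₁, c • x ∈ C₁)
    (hC₂_add : ∀ x ∈ C₂, ∀ y ∈ C₂, x + y ∈ C₂)
    (hC₂_smul : ∀ c : ℝ, 0 < c → ∀ x ∈ C₂, c • x ∈ C₂)
    (hC₁_sub : C₁ ⊆ ⋃ w ∈ (W : Set (V ≃ₗ[ℝ] V)), w '' (b : Set V))
    (hC₂_sub : C₂ ⊆ ⋃ w ∈ (W : Set (V ≃ₗ[ℝ] V)), w '' (b : Set V))
    (hdim : Module.finrank ℝ b <
      Module.finrank ℝ (Submodule.span ℝ C₁) + Module.finrank ℝ (Submodule.span ℝ C₂)) :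
    ∃ w ∈ W, ∃ x : V, x ≠ 0 ∧ x ∈ Submodule.span ℝ C₁ ∧
      x ∈ (w : V ≃ₗ[ℝ] V) '' (Submodule.span ℝ C₂ : Set V) :=
  exists_weyl_translate_inter_ne_bot_general W
    ((Cardinal.lift_lt_aleph0.2 hW.lt_aleph0).trans_le
      (Cardinal.aleph0_le_lift.2 (Cardinal.aleph0_le_mk ℝ))) b
    ⟨C₁, hC₁_smul, hC₁_add⟩ ⟨C₂, hC₂_smul, hC₂_add⟩ hC₁_sub hC₂_sub hdim
end

section
/- Let k ≥ 5, let G = SL(2k+1, ℝ) with its standard topology, let J = diag(I_{k−1}, −I_{k+2}) be the diagonal (2k+1)×(2k+1) matrix with the first k−1 diagonal entries equal to 1 and the remaining k+2 diagonal entries equal to −1, and let H = SO(k−1, k+2) = {A ∈ G : Aᵀ J A = J}, a closed subgroup of G. Then there is no closed subgroup L of G satisfying all of the following: (a) L has finitely many connected components; (b) there exists g ∈ G such that g L g⁻¹ is invariant under the map A ↦ (Aᵀ)⁻¹; (c) the action of L on the quotient space G/H by left translations is proper; and (d) the orbit space L\(G/H) of this action is compact. In other words, SL(2k+1, ℝ)/SO(k−1,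 k+2) admits no standard compact Clifford–Klein form. -/
open scoped Matrix

/-- `SL(n, ℝ)` with its standard topology (as a subspace of the space of matrices,
which carries the product topology). -/
instance specialLinearGroup.topologicalSpace (n : Type*) [DecidableEq n] [Fintype n] :
    TopologicalSpace (Matrix.SpecialLinearGroup n ℝ) :=
  instTopologicalSpaceSubtype

/-!
Suppose `L` exists and let `Γ = g L g⁻¹`, a closed group stable under transposition. Compactness of
the orbit space bounds, uniformly in `x`, the minimum over `γ ∈ Γ` of `tr ((γ S γᵀ)²)`, where
`S = x J xᵀ`. If `Q = S²` is trace-orthogonal to every symmetric `X` with `exp X ∈ Γ`, then `S` is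
itself the minimum on its orbit (Kempf–Ness; here it comes down to `1 + t ≤ exp t`), so `tr Q ≤ R`.
As `S` can be chosen with `S² = Q` for any positive definite `Q` of determinant one, homogeneity and
a limit give `tr Q ≤ R (det Q) ^ (1 / n)` for every positive semidefinite `Q` orthogonal to the
symmetric logarithms. A traceless symmetric `Y` orthogonal to them, shifted by its least
eigenvalue, becomes such a `Q` with determinant zero, so `Y = 0`: the symmetric logarithms span all
traceless symmetric matrices.

They also normalise the Lie algebra of `Γ`, which is nonzero because `Γ`, having a nonzero symmetric
logarithm, is infinite, while it has finitely many components; hence this Lie algebra contains all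
off-diagonal matrix units. In particular `Γ ∩ H` contains a hyperbolic element `exp (E_ab + E_ba)`.
The conjugates of its powers by `g⁻¹` form an unbounded subset of `L` fixing the coset `g⁻¹ H`,
which contradicts properness.
-/

open Filter Topology NormedSpace Matrix

-- Instance search does not see through `specialLinearGroup.topologicalSpace` to Mathlib's instance.
instance specialLinearGroup.isTopologicalGroup (n : Type*) [DecidableEq n] [Fintype n] :
    IsTopologicalGroup (Matrix.SpecialLinearGroup n ℝ) :=
  Matrix.SpecialLinearGroup.topologicalGroup

section BanachAlgebra

variable {A : Type*} [NormedRing A] [NormedAlgebra ℝ A] [CompleteSpace A]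

theorem exists_hasFDerivAt_rightInverse_exp :
    ∃ log : A → A, log 1 = 0 ∧ HasFDerivAt log (ContinuousLinearMap.id ℝ A) 1 ∧
      ∀ᶠ a in 𝓝 (1 : A), exp (log a) = a := by
  have h : HasStrictFDerivAt exp
      ((ContinuousLinearEquiv.refl ℝ A : A ≃L[ℝ] A) : A →L[ℝ] A) 0 := hasStrictFDerivAt_exp_zero
  refine ⟨h.localInverse, ?_, ?_, ?_⟩
  · simpa only [exp_zero] using h.localInverse_apply_image
  · have h' := h.to_localInverse.hasFDerivAt
    rwa [exp_zero] at h'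
  · simpa only [exp_zero] using h.eventually_right_inverse

theorem exp_smul_mem_of_tendsto {ι : Type*} {l : Filter ι} [l.NeBot] {S : Submonoid A}
    (hS : IsClosed (S : Set A)) {g : ι → A} {c : ι → ℝ} {X : A} (hg : ∀ᶠ i in l, g i ∈ S)
    (hc : Tendsto c l atTop) (hX : Tendsto (fun i => c i • (g i - 1)) l (𝓝 X)) {t : ℝ}
    (ht : 0 ≤ t) : exp (t • X) ∈ S := by
  let _ : NormedAlgebra ℚ A := NormedAlgebra.restrictScalars ℚ ℝ A
  obtain ⟨log, log_one, hlog, exp_log⟩ := exists_hasFDerivAt_rightInverse_exp (A := A)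
  have hg_sub : Tendsto (fun i => g i - 1) l (𝓝 0) := by
    have h := (tendsto_inv_atTop_zero.comp hc).smul hX
    rw [zero_smul] at h
    refine h.congr' ?_
    filter_upwards [hc.eventually_ne_atTop 0] with i hi
    simp [smul_smul, hi]
  have hg_one : Tendsto g l (𝓝 1) := by simpa using hg_sub.add_const 1
  have hlogX : Tendsto (fun i => c i • log (g i)) l (𝓝 X) := by
    have h := hlog.hasFDerivWithinAt.lim (s := Set.univ) hg_sub (by simp) hX
    simpa [log_one] using h
  have hfloor : Tendsto (fun i => (⌊t * c i⌋₊ / c i : ℝ)) l (𝓝 t) :=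
    (tendsto_nat_floor_mul_div_atTop ht).comp hc
  have hpow : Tendsto (fun i => exp (((⌊t * c i⌋₊ / c i : ℝ)) • c i • log (g i))) l
      (𝓝 (exp (t • X))) :=
    (exp_continuous.tendsto _).comp (hfloor.smul hlogX)
  refine hS.mem_of_tendsto hpow ?_
  filter_upwards [hg, hc.eventually_ne_atTop 0, hg_one.eventually exp_log] with i hi hci hexp
  rw [smul_smul, div_mul_cancel₀ _ hci, Nat.cast_smul_eq_nsmul, NormedSpace.exp_nsmul, hexp]
  exact pow_mem hi _

theorem exp_smul_add_mem {S : Submonoid A} (hS : IsClosed (S : Set A)) {X Y : A}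
    (hX : ∀ t : ℝ, exp (t • X) ∈ S) (hY : ∀ t : ℝ, exp (t • Y) ∈ S) {t : ℝ} (ht : 0 ≤ t) :
    exp (t • (X + Y)) ∈ S := by
  have hderiv : HasDerivAt (fun s : ℝ => exp (s • X) * exp (s • Y)) (X + Y) 0 := by
    simpa using (hasDerivAt_exp_smul_const X (0 : ℝ)).fun_mul (hasDerivAt_exp_smul_const Y (0 : ℝ))
  refine exp_smul_mem_of_tendsto hS (.of_forall fun s => S.mul_mem (hX s) (hY s))
    tendsto_inv_nhdsGT_zero ?_ ht
  simpa using hderiv.tendsto_slope_zero_right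

/-- The Lie algebra of a closed submonoid `S` of a Banach algebra (in practice, of a closed linear
group), encoded as the set of generators of the one-parameter groups contained in `S`. -/
def tangentSubmodule (S : Submonoid A) (hS : IsClosed (S : Set A)) : Submodule ℝ A where
  carrier := {X | ∀ t : ℝ, exp (t • X) ∈ S}
  zero_mem' t := by simp
  add_mem' {X Y} hX hY t := by
    rcases le_total 0 t with ht | ht
    · exact exp_smul_add_mem hS hX hY ht
    · have hneg : ∀ Z : A, (∀ t : ℝ, exp (t • Z) ∈ S) → ∀ t : ℝ, exp (t • -Z) ∈ S :=
        fun Z hZ t => by simpa using hZ (-t)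
      simpa [← neg_add_rev, add_comm] using
        exp_smul_add_mem hS (hneg X hX) (hneg Y hY) (neg_nonneg.2 ht)
  smul_mem' c X hX t := by simpa [smul_smul] using hX (t * c)

variable {S : Submonoid A} {hS : IsClosed (S : Set A)}

theorem exp_mem_of_mem_tangentSubmodule {X : A} (hX : X ∈ tangentSubmodule S hS) : exp X ∈ S := by
  simpa using hX 1

theorem conj_mem_tangentSubmodule (u : Aˣ) (hu : (u : A) ∈ S) (hu' : ((u⁻¹ : Aˣ) : A) ∈ S) {X : A}
    (hX : X ∈ tangentSubmodule S hS) : (u : A) * X * ((u⁻¹ : Aˣ) : A) ∈ tangentSubmodule S hS := by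
  let _ : NormedAlgebra ℚ A := NormedAlgebra.restrictScalars ℚ ℝ A
  intro t
  rw [← smul_mul_assoc, ← mul_smul_comm, NormedSpace.exp_units_conj]
  exact S.mul_mem (S.mul_mem hu (hX t)) hu'

theorem mem_tangentSubmodule_of_nonneg (hinv : ∀ a ∈ S, ∃ b ∈ S, a * b = 1) {X : A}
    (hX : ∀ t : ℝ, 0 ≤ t → exp (t • X) ∈ S) : X ∈ tangentSubmodule S hS := by
  let _ : NormedAlgebra ℚ A := NormedAlgebra.restrictScalars ℚ ℝ A
  intro t
  rcases le_total 0 t with ht | ht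
  · exact hX t ht
  · obtain ⟨b, hb, hab⟩ := hinv _ (hX (-t) (neg_nonneg.2 ht))
    have hinv_exp : exp (t • X) * exp (-t • X) = 1 := by
      rw [← exp_add_of_commute (((Commute.refl X).smul_left t).smul_right (-t)), ← add_smul]
      simp
    rwa [left_inv_eq_right_inv hinv_exp hab]

theorem exists_ne_zero_mem_tangentSubmodule [FiniteDimensional ℝ A]
    (hinv : ∀ a ∈ S, ∃ b ∈ S, a * b = 1) (hacc : AccPt 1 (𝓟 (S : Set A))) :
    ∃ X ∈ tangentSubmodule S hS, X ≠ 0 := by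
  have : ProperSpace A := FiniteDimensional.proper ℝ A
  have : (𝓝[≠] (1 : A) ⊓ 𝓟 (S : Set A)).NeBot := hacc
  let l : Ultrafilter A := Ultrafilter.of (𝓝[≠] (1 : A) ⊓ 𝓟 (S : Set A))
  obtain ⟨hl, hlS⟩ := le_inf_iff.1 (Ultrafilter.of_le (𝓝[≠] (1 : A) ⊓ 𝓟 (S : Set A)))
  have hsphere : ∀ᶠ a in (l : Filter A), ‖a - 1‖⁻¹ • (a - 1) ∈ Metric.sphere (0 : A) 1 := by
    filter_upwards [hl self_mem_nhdsWithin] with a ha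
    simpa [norm_smul] using inv_mul_cancel₀ (norm_ne_zero_iff.2 (sub_ne_zero.2 ha))
  obtain ⟨X, hXsphere, hX⟩ :=
    (isCompact_sphere (0 : A) 1).ultrafilter_le_nhds' (l.map fun a => ‖a - 1‖⁻¹ • (a - 1)) hsphere
  have hnorm : Tendsto (fun a : A => ‖a - 1‖) l (𝓝[>] 0) :=
    (tendsto_norm_sub_self_nhdsNE 1).mono_left hl
  exact ⟨X, mem_tangentSubmodule_of_nonneg hinv fun t ht =>
    exp_smul_mem_of_tendsto hS (le_principal_iff.1 hlS) hnorm.inv_tendsto_nhdsGT_zero hX ht,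
    norm_ne_zero_iff.1 (by simp_all)⟩

end BanachAlgebra

section Hadamard

variable {m n K : Type*} [Finite m] [Finite n] [Field K]

theorem hadamard_map_mem {V : Submodule K (Matrix m n K)} {A : Matrix m n K}
    (hA : ∀ Z ∈ V, A ⊙ Z ∈ V) (f : K → K) {Z : Matrix m n K} (hZ : Z ∈ V) :
    A.map f ⊙ Z ∈ V := by
  classical
  have := Fintype.ofFinite m
  have := Fintype.ofFinite n
  have hpoly (p : Polynomial K) : A.map p.eval ⊙ Z ∈ V := by
    induction p using Polynomial.induction_on' with
    | add p q hp hq =>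
      convert V.add_mem hp hq using 1
      ext
      simp [add_mul]
    | monomial k c =>
      have hpow : A.map (· ^ k) ⊙ Z ∈ V := by
        induction k with
        | zero =>
          convert hZ
          ext
          simp
        | succ k ih =>
          convert hA _ ih using 1
          ext
          simp [pow_succ', mul_assoc]
      convert V.smul_mem c hpow using 1
      ext
      simp [mul_assoc]
  -- Lagrange interpolation: on the finitely many entries of `A`, `f` agrees with a polynomial.
  let s : Finset K := Finset.univ.image fun ij : m × n => A ij.1 ij.2
  convert hpoly (Lagrange.interpolate s id f) using 2
  ext i j
  have hmem : A i j ∈ s := Finset.mem_image_of_mem (fun ij => A ij.1 ij.2) (Finset.mem_univ (i, j))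
  exact (Lagrange.eval_interpolate_at_node f Function.injective_id.injOn hmem).symm

end Hadamard

section LieStabilizer

attribute [local instance] LieRing.ofAssociativeRing

/-- The Lie subalgebra of the elements of `L` whose action preserves the subspace `V`. -/
def lieStabilizer {R L M : Type*} [CommRing R] [LieRing L] [LieAlgebra R L] [AddCommGroup M]
    [Module R M] [LieRingModule L M] [LieModule R L M] (V : Submodule R M) : LieSubalgebra R L where
  carrier := {x | ∀ z ∈ V, ⁅x, z⁆ ∈ V}
  zero_mem' z _ := by simp
  add_mem' hx hy z hz := by simpa using V.add_mem (hx z hz) (hy z hz)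
  smul_mem' c x hx z hz := by simpa using V.smul_mem c (hx z hz)
  lie_mem' hx hy z hz := by simpa using V.sub_mem (hx _ (hy z hz)) (hy _ (hx z hz))

variable {n K : Type*} [Fintype n] [DecidableEq n] [Field K]

theorem single_mem_of_diag_ne {V : Submodule K (Matrix n n K)}
    (hV : ∀ a b : n, a ≠ b → ∀ Z ∈ V, ⁅single a b (1 : K), Z⁆ ∈ V) {X : Matrix n n K}
    (hX : X ∈ V) {a b : n} (hab : a ≠ b) (hdiag : X.IsDiag) (h : X a a ≠ X b b) :
    single a b 1 ∈ V := by
  have hlie : ⁅single a b (1 : K), X⁆ = (X b b - X a a) • single a b 1 := by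
    rw [← hdiag.diagonal_diag, Ring.lie_def]
    ext c d
    simp only [Matrix.sub_apply, mul_diagonal, diagonal_mul, Matrix.smul_apply, smul_eq_mul,
      diagonal_apply_eq, diag_apply, single_apply]
    grind
  exact (V.smul_mem_iff (sub_ne_zero.2 h.symm)).1 (hlie ▸ hV a b hab X hX)

variable [NeZero (2 : K)]

theorem single_mem_of_isSymm_trace_zero_mem {𝔥 : LieSubalgebra K (Matrix n n K)}
    (h : ∀ X : Matrix n n K, X.IsSymm → X.trace = 0 → X ∈ 𝔥) {a b : n} (hab : a ≠ b) :
    single a b 1 ∈ 𝔥 := by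
  have hsymm : single a b 1 + single b a 1 ∈ 𝔥 :=
    h _ (by simp [Matrix.IsSymm, add_comm]) (by simp [hab, hab.symm])
  have hdiag : single a a 1 - single b b 1 ∈ 𝔥 := h _ (by simp [Matrix.IsSymm]) (by simp)
  have hlie : ⁅single a a (1 : K) - single b b 1, single a b (1 : K) + single b a 1⁆ =
      (2 : K) • (single a b 1 - single b a 1) := by
    simp only [Ring.lie_def, mul_add, add_mul, sub_mul, mul_sub, single_mul_single_same, mul_one,
      single_mul_single_of_ne _ _ _ _ hab, single_mul_single_of_ne _ _ _ _ hab.symm]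
    module
  have hsub : single a b 1 - single b a 1 ∈ 𝔥 := by
    simpa only [hlie, inv_smul_smul₀ (two_ne_zero' K)] using
      𝔥.smul_mem (2⁻¹ : K) (𝔥.lie_mem hdiag hsymm)
  have hadd : single a b 1 - single b a 1 + (single a b 1 + single b a 1) =
      (2 : K) • (single a b 1 : Matrix n n K) := by
    module
  simpa only [hadd, inv_smul_smul₀ (two_ne_zero' K)] using
    𝔥.smul_mem (2⁻¹ : K) (𝔥.add_mem hsub hsymm)

variable {V : Submodule K (Matrix n n K)}
    (hV : ∀ a b : n, a ≠ b → ∀ Z ∈ V, ⁅single a b (1 : K), Z⁆ ∈ V)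
include hV

theorem single_swap_mem_of_apply_ne_zero {X : Matrix n n K} (hX : X ∈ V) {a b : n} (hab : a ≠ b)
    (h : X a b ≠ 0) : single b a 1 ∈ V := by
  have hsq : single b a (1 : K) * single b a 1 = 0 := single_mul_single_of_ne _ _ _ _ hab _
  have hlie : ⁅single b a (1 : K), ⁅single b a (1 : K), X⁆⁆ = (-2 * X a b) • single b a 1 :=
    calc ⁅single b a (1 : K), ⁅single b a (1 : K), X⁆⁆
      _ = single b a 1 * single b a 1 * X + X * (single b a 1 * single b a 1) -
          2 • (single b a 1 * X * single b a 1) := by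
        rw [Ring.lie_def, Ring.lie_def]; noncomm_ring
      _ = (-2 * X a b) • single b a 1 := by
        simp [hsq, single_mul_mul_single, ← Nat.cast_smul_eq_nsmul K]
  exact (V.smul_mem_iff (mul_ne_zero (neg_ne_zero.2 two_ne_zero) h)).1
    (hlie ▸ hV b a hab.symm _ (hV b a hab.symm _ hX))

theorem exists_single_mem_of_notMem_range_scalar {X : Matrix n n K} (hX : X ∈ V)
    (hscalar : X ∉ Set.range (scalar n)) : ∃ a b : n, a ≠ b ∧ single a b 1 ∈ V := by
  by_cases hdiag : X.IsDiag
  · obtain ⟨a, b, hab⟩ : ∃ a b, X a a ≠ X b b := by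
      by_contra! hconst
      rcases isEmpty_or_nonempty n with _ | ⟨⟨a⟩⟩
      · exact hscalar ⟨0, Subsingleton.elim _ _⟩
      · refine hscalar ⟨X a a, ?_⟩
        rw [← hdiag.diagonal_diag, scalar_apply, diagonal_eq_diagonal_iff]
        simpa using hconst a
    have hne : a ≠ b := fun h => hab (by rw [h])
    exact ⟨a, b, hne, single_mem_of_diag_ne hV hX hne hdiag hab⟩
  · obtain ⟨a, b, hne, hab⟩ : ∃ a b, a ≠ b ∧ X a b ≠ 0 := by
      simpa [IsDiag, Pairwise] using hdiag
    exact ⟨b, a, hne.symm, single_swap_mem_of_apply_ne_zero hV hX hne hab⟩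

theorem single_mem_of_notMem_range_scalar {X : Matrix n n K} (hX : X ∈ V)
    (hscalar : X ∉ Set.range (scalar n)) {a b : n} (hab : a ≠ b) : single a b 1 ∈ V := by
  have hrow {i j c : n} (h : single i j 1 ∈ V) (hc : c ≠ j) : single c j 1 ∈ V := by
    rcases eq_or_ne c i with rfl | hci
    · exact h
    · simpa [Ring.lie_def, single_mul_single_of_ne _ _ _ _ hc.symm] using hV c i hci _ h
  have hcol {i j c : n} (h : single i j 1 ∈ V) (hc : c ≠ i) : single i c 1 ∈ V := by
    rcases eq_or_ne c j with rfl | hcj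
    · exact h
    · simpa [Ring.lie_def, single_mul_single_of_ne _ _ _ _ hc] using hV j c hcj.symm _ h
  obtain ⟨i, j, hij, h⟩ := exists_single_mem_of_notMem_range_scalar hV hX hscalar
  rcases eq_or_ne a j with rfl | haj
  · rcases eq_or_ne b i with rfl | hbi
    · exact single_swap_mem_of_apply_ne_zero hV h hij (by simp)
    · exact hrow (hcol h hbi) hab
  · exact hcol (hrow h haj) hab.symm

end LieStabilizer

section Hermitian

open Unitary (conjStarAlgAut)

variable {n : Type*} [Fintype n] [DecidableEq n]

theorem exists_eq_conjStarAlgAut_diagonal {X : Matrix n n ℝ} (hX : X.IsSymm) :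
    ∃ (U : unitaryGroup n ℝ) (x : n → ℝ), X = conjStarAlgAut ℝ _ U (diagonal x) :=
  have hX' : X.IsHermitian := isHermitian_iff_isSymm.2 hX
  ⟨hX'.eigenvectorUnitary, hX'.eigenvalues, hX'.spectral_theorem⟩

theorem isSymm_conjStarAlgAut_iff (U : unitaryGroup n ℝ) {X : Matrix n n ℝ} :
    (conjStarAlgAut ℝ _ U X).IsSymm ↔ X.IsSymm := by
  rw [← isHermitian_iff_isSymm, ← isHermitian_iff_isSymm, IsHermitian, IsHermitian,
    ← star_eq_conjTranspose, ← star_eq_conjTranspose, ← map_star, EmbeddingLike.apply_eq_iff_eq]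

theorem trace_conjStarAlgAut (U : unitaryGroup n ℝ) (X : Matrix n n ℝ) :
    (conjStarAlgAut ℝ _ U X).trace = X.trace := by
  rw [Unitary.conjStarAlgAut_apply, trace_mul_comm, ← mul_assoc, Unitary.coe_star_mul_self, one_mul]

theorem det_conjStarAlgAut (U : unitaryGroup n ℝ) (X : Matrix n n ℝ) :
    (conjStarAlgAut ℝ _ U X).det = X.det := by
  rw [Unitary.conjStarAlgAut_apply, det_mul_comm, ← mul_assoc, Unitary.coe_star_mul_self, one_mul]

theorem exp_conjStarAlgAut_diagonal (U : unitaryGroup n ℝ) (x : n → ℝ) :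
    exp (conjStarAlgAut ℝ _ U (diagonal x)) =
      conjStarAlgAut ℝ _ U (diagonal fun a => Real.exp (x a)) := by
  have h := exp_units_conj (Unitary.toUnits U) (diagonal x)
  rw [exp_diagonal] at h
  simpa [Pi.exp_def, ← Real.exp_eq_exp_ℝ] using h

theorem det_exp_of_isSymm {X : Matrix n n ℝ} (hX : X.IsSymm) :
    (exp X).det = Real.exp X.trace := by
  obtain ⟨U, x, rfl⟩ := exists_eq_conjStarAlgAut_diagonal hX
  rw [exp_conjStarAlgAut_diagonal, det_conjStarAlgAut, trace_conjStarAlgAut, det_diagonal,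
    trace_diagonal, Real.exp_sum]

theorem exists_isSymm_exp_eq {Q : Matrix n n ℝ} (hQ : Q.PosDef) :
    ∃ X : Matrix n n ℝ, X.IsSymm ∧ exp X = Q := by
  refine ⟨conjStarAlgAut ℝ _ hQ.1.eigenvectorUnitary
    (diagonal fun a => Real.log (hQ.1.eigenvalues a)), ?_, ?_⟩
  · exact (isSymm_conjStarAlgAut_iff _).2 (isSymm_diagonal _)
  · rw [exp_conjStarAlgAut_diagonal]
    simp only [Real.exp_log (hQ.eigenvalues_pos _)]
    exact hQ.1.spectral_theorem.symm

theorem not_bddAbove_trace_exp_zsmul {X : Matrix n n ℝ} (hX : X.IsSymm) (hX0 : X ≠ 0) :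
    ¬ BddAbove (Set.range fun k : ℤ => (exp (k • X)).trace) := by
  rintro ⟨B, hB⟩
  obtain ⟨U, x, rfl⟩ := exists_eq_conjStarAlgAut_diagonal hX
  obtain ⟨a, ha⟩ : ∃ a, x a ≠ 0 := by
    contrapose! hX0
    simp [funext hX0]
  have hle (k : ℤ) : k * x a ≤ B :=
    calc k * x a ≤ Real.exp (k * x a) := by linarith [Real.add_one_le_exp (k * x a)]
      _ ≤ ∑ b, Real.exp (k * x b) :=
        Finset.single_le_sum (f := fun b => Real.exp (k * x b))
          (fun b _ => Real.exp_nonneg _) (Finset.mem_univ a)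
      _ = (exp (k • conjStarAlgAut ℝ _ U (diagonal x))).trace := by
        rw [← map_zsmul, ← diagonal_smul, exp_conjStarAlgAut_diagonal, trace_conjStarAlgAut,
          trace_diagonal]
        simp
      _ ≤ B := hB ⟨k, rfl⟩
  obtain ⟨k, hk⟩ := exists_nat_gt (B / |x a|)
  rw [div_lt_iff₀ (abs_pos.2 ha)] at hk
  rcases abs_cases (x a) with ⟨h, -⟩ | ⟨h, -⟩
  · exact (hle k).not_gt (by simpa [h] using hk)
  · exact (hle (-k)).not_gt (by simpa [h] using hk)

theorem lie_mem_of_exp_conj_mem {V : Submodule ℝ (Matrix n n ℝ)} {X : Matrix n n ℝ}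
    (hX : X.IsSymm) (hV : ∀ Z ∈ V, exp X * Z * exp (-X) ∈ V) {Z : Matrix n n ℝ}
    (hZ : Z ∈ V) : ⁅X, Z⁆ ∈ V := by
  obtain ⟨U, x, rfl⟩ := exists_eq_conjStarAlgAut_diagonal hX
  let φ := conjStarAlgAut ℝ (Matrix n n ℝ) U
  let W : Submodule ℝ (Matrix n n ℝ) := V.comap φ.toAlgEquiv.toLinearMap
  let A : Matrix n n ℝ := of fun a b => Real.exp (x a - x b)
  have hA (T : Matrix n n ℝ) (hT : T ∈ W) : A ⊙ T ∈ W := by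
    have hAT : φ (A ⊙ T) = exp (φ (diagonal x)) * φ T * exp (-φ (diagonal x)) := by
      rw [← map_neg, diagonal_neg, exp_conjStarAlgAut_diagonal, exp_conjStarAlgAut_diagonal,
        ← map_mul, ← map_mul]
      congr 1
      ext a b
      simp [A, diagonal_mul, mul_diagonal, sub_eq_add_neg, Real.exp_add, mul_right_comm]
    change φ (A ⊙ T) ∈ V
    exact hAT ▸ hV _ hT
  obtain ⟨T, rfl⟩ := EquivLike.surjective φ Z
  have hlie : ⁅φ (diagonal x), φ T⁆ = φ (A.map Real.log ⊙ T) := by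
    rw [Ring.lie_def, ← map_mul, ← map_mul, ← map_sub]
    congr 1
    ext a b
    simp [A, diagonal_mul, mul_diagonal, sub_mul, mul_comm (T a b)]
  rw [hlie]
  exact hadamard_map_mem hA Real.log hZ

theorem trace_mul_self_add_le_trace_exp_mul {X S : Matrix n n ℝ} (hX : X.IsSymm)
    (hS : S.IsSymm) :
    (S * S).trace + 2 * (X * (S * S)).trace ≤ (exp X * S * (exp X * S)).trace := by
  obtain ⟨U, x, rfl⟩ := exists_eq_conjStarAlgAut_diagonal hX
  obtain ⟨T, rfl⟩ := EquivLike.surjective (conjStarAlgAut ℝ _ U) S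
  rw [isSymm_conjStarAlgAut_iff] at hS
  rw [exp_conjStarAlgAut_diagonal]
  simp only [← map_mul, trace_conjStarAlgAut]
  have hdiag (y : n → ℝ) : (diagonal y * (T * T)).trace = ∑ a, ∑ b, y a * T a b ^ 2 := by
    simp only [trace, diag_apply, diagonal_mul]
    simp only [mul_apply, Finset.mul_sum, hS.apply]
    simp only [← sq]
  have hleft : (T * T).trace + 2 * (diagonal x * (T * T)).trace =
      ∑ a, ∑ b, (1 + x a + x b) * T a b ^ 2 := by
    have hswap : ∑ a, ∑ b, x b * T a b ^ 2 = ∑ a, ∑ b, x a * T a b ^ 2 := by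
      rw [Finset.sum_comm]
      simp only [hS.apply]
    have hone := hdiag 1
    rw [Pi.one_def, diagonal_one, one_mul] at hone
    simp only [add_mul, Finset.sum_add_distrib, hswap, hone, hdiag]
    ring
  have hright : (diagonal (fun a => Real.exp (x a)) * T *
      (diagonal (fun a => Real.exp (x a)) * T)).trace =
        ∑ a, ∑ b, Real.exp (x a + x b) * T a b ^ 2 := by
    simp only [trace, diag_apply, mul_apply (M := diagonal _ * T), diagonal_mul, Real.exp_add,
      hS.apply, sq, mul_mul_mul_comm]
  rw [hleft, hright]
  gcongr with a _ b _
  linarith [Real.add_one_le_exp (x a + x b)]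

theorem trace_mul_self_le_of_transpose_mul_self_eq_exp {X S l : Matrix n n ℝ} (hX : X.IsSymm)
    (hS : S.IsSymm) (hl : lᵀ * l = exp X) (hXS : (X * (S * S)).trace = 0) :
    (S * S).trace ≤ (l * S * lᵀ * (l * S * lᵀ)).trace :=
  calc (S * S).trace = (S * S).trace + 2 * (X * (S * S)).trace := by rw [hXS]; ring
    _ ≤ (exp X * S * (exp X * S)).trace := trace_mul_self_add_le_trace_exp_mul hX hS
    _ = (lᵀ * (l * S * lᵀ * l * S)).trace := by simp only [← hl, mul_assoc]
    _ = (l * S * lᵀ * (l * S * lᵀ)).trace := by rw [trace_mul_comm]; simp only [mul_assoc]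

theorem exists_det_eq_one_eq_mul_diagonal_mul_transpose [Nonempty n] {Q : Matrix n n ℝ}
    (hQ : Q.IsHermitian) :
    ∃ U : Matrix n n ℝ, U.det = 1 ∧ Uᵀ * U = 1 ∧ Q = U * diagonal hQ.eigenvalues * Uᵀ := by
  obtain ⟨a⟩ := ‹Nonempty n›
  let U : Matrix n n ℝ := hQ.eigenvectorUnitary
  let δ : n → ℝ := Function.update 1 a U.det
  have hU : Uᵀ * U = 1 := Unitary.coe_star_mul_self hQ.eigenvectorUnitary
  have hUdet : U.det * U.det = 1 := by
    rw [← det_one (n := n), ← hU, det_mul, det_transpose]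
  have hδ (b : n) : δ b * δ b = 1 := by
    rcases eq_or_ne b a with rfl | hb <;> simp_all [δ]
  refine ⟨U * diagonal δ, ?_, ?_, ?_⟩
  · rw [det_mul, det_diagonal, Finset.prod_update_of_mem (Finset.mem_univ a)]
    simpa using hUdet
  · rw [transpose_mul, diagonal_transpose, mul_assoc, ← mul_assoc Uᵀ, hU, one_mul,
      diagonal_mul_diagonal]
    simp only [hδ, diagonal_one]
  · calc Q = U * diagonal hQ.eigenvalues * Uᵀ := hQ.spectral_theorem
      _ = U * (diagonal δ * diagonal hQ.eigenvalues * diagonal δ) * Uᵀ := by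
        simp only [diagonal_mul_diagonal, mul_right_comm _ _ (δ _), hδ, one_mul]
      _ = U * diagonal δ * diagonal hQ.eigenvalues * (U * diagonal δ)ᵀ := by
        simp only [transpose_mul, diagonal_transpose, mul_assoc]

theorem exists_det_eq_one_mul_self_eq [Nonempty n] {ε : n → ℝ} (hε : ∀ a, ε a = 1 ∨ ε a = -1)
    {Q : Matrix n n ℝ} (hQ : Q.PosDef) (hdet : Q.det = 1) :
    ∃ g : Matrix n n ℝ, g.det = 1 ∧ g * diagonal ε * gᵀ * (g * diagonal ε * gᵀ) = Q := by
  obtain ⟨U, hUdet, hU, hQU⟩ := exists_det_eq_one_eq_mul_diagonal_mul_transpose hQ.1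
  let d : n → ℝ := fun a => √√(hQ.1.eigenvalues a)
  have hd (a : n) : d a ^ 4 = hQ.1.eigenvalues a := by
    rw [pow_mul (d a) 2 2, Real.sq_sqrt (Real.sqrt_nonneg _),
      Real.sq_sqrt (hQ.eigenvalues_pos a).le]
  have hprod : ∏ a, d a = 1 := by
    have h : (∏ a, d a) ^ 4 = 1 := by
      simpa [hQ.1.det_eq_prod_eigenvalues, ← Finset.prod_pow, hd] using hdet
    exact (pow_eq_one_iff_of_nonneg (Finset.prod_nonneg fun a _ => Real.sqrt_nonneg _)
      (by simp)).1 h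
  have hdiag : diagonal d * diagonal ε * diagonal d * (diagonal d * diagonal ε * diagonal d) =
      diagonal hQ.1.eigenvalues := by
    simp only [diagonal_mul_diagonal]
    congr 1
    ext a
    have hεa : ε a * ε a = 1 := by rcases hε a with h | h <;> simp [h]
    linear_combination d a ^ 4 * hεa + hd a
  refine ⟨U * diagonal d, by rw [det_mul, hUdet, det_diagonal, hprod, one_mul], ?_⟩
  calc U * diagonal d * diagonal ε * (U * diagonal d)ᵀ *
        (U * diagonal d * diagonal ε * (U * diagonal d)ᵀ)
    _ = U * diagonal d * diagonal ε * diagonal d * (Uᵀ * U) *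
        diagonal d * diagonal ε * diagonal d * Uᵀ := by
      simp only [transpose_mul, diagonal_transpose, mul_assoc]
    _ = U * diagonal hQ.1.eigenvalues * Uᵀ := by
      rw [hU, ← hdiag]
      simp only [mul_assoc, mul_one]
    _ = Q := hQU.symm

end Hermitian

section TraceForm

open Unitary (conjStarAlgAut)

variable {n : Type*} [Fintype n] [DecidableEq n] {W : Submodule ℝ (Matrix n n ℝ)} {R : ℝ}

theorem trace_le_mul_rpow_det [Nonempty n]
    (hR : ∀ Q : Matrix n n ℝ, Q.PosDef → Q.det = 1 → (∀ X ∈ W, (X * Q).trace = 0) → Q.trace ≤ R)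
    {Q : Matrix n n ℝ} (hQ : Q.PosDef) (hQW : ∀ X ∈ W, (X * Q).trace = 0) :
    Q.trace ≤ R * Q.det ^ (Fintype.card n : ℝ)⁻¹ := by
  have hr : 0 < Q.det ^ (Fintype.card n : ℝ)⁻¹ := Real.rpow_pos_of_pos hQ.det_pos _
  rw [← div_le_iff₀ hr, div_eq_inv_mul, ← smul_eq_mul, ← trace_smul]
  refine hR _ (hQ.smul (inv_pos.2 hr)) ?_ fun X hX => by simp [hQW X hX]
  rw [det_smul, inv_pow, Real.rpow_inv_natCast_pow hQ.det_pos.le Fintype.card_ne_zero,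
    inv_mul_cancel₀ hQ.det_pos.ne']

theorem trace_le_mul_rpow_det_of_posSemidef [Nonempty n] (hW : ∀ X ∈ W, X.trace = 0)
    (hR : ∀ Q : Matrix n n ℝ, Q.PosDef → Q.det = 1 → (∀ X ∈ W, (X * Q).trace = 0) → Q.trace ≤ R)
    {Q : Matrix n n ℝ} (hQ : Q.PosSemidef) (hQW : ∀ X ∈ W, (X * Q).trace = 0) :
    Q.trace ≤ R * Q.det ^ (Fintype.card n : ℝ)⁻¹ := by
  have hlim : Tendsto (fun δ : ℝ => Q + δ • (1 : Matrix n n ℝ)) (𝓝[>] 0) (𝓝 Q) := by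
    have : Continuous fun δ : ℝ => Q + δ • (1 : Matrix n n ℝ) := by fun_prop
    simpa using (this.tendsto 0).mono_left nhdsWithin_le_nhds
  have hexp : 0 ≤ (Fintype.card n : ℝ)⁻¹ := by positivity
  refine le_of_tendsto_of_tendsto ((continuous_id.matrix_trace.tendsto Q).comp hlim)
    ((((Real.continuous_rpow_const hexp).comp continuous_id.matrix_det).tendsto Q).comp hlim
      |>.const_mul R) ?_
  filter_upwards [self_mem_nhdsWithin] with δ hδ
  exact trace_le_mul_rpow_det hR (PosDef.posSemidef_add hQ (PosDef.one.smul hδ))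
    fun X hX => by simp [mul_add, hQW X hX, hW X hX]

theorem eq_zero_of_trace_mul_eq_zero [Nonempty n] (hW : ∀ X ∈ W, X.trace = 0)
    (hR : ∀ Q : Matrix n n ℝ, Q.PosDef → Q.det = 1 → (∀ X ∈ W, (X * Q).trace = 0) → Q.trace ≤ R)
    {Y : Matrix n n ℝ} (hY : Y.IsSymm) (hYW : ∀ X ∈ W, (X * Y).trace = 0) (hYtr : Y.trace = 0) :
    Y = 0 := by
  obtain ⟨U, y, rfl⟩ := exists_eq_conjStarAlgAut_diagonal hY
  obtain ⟨a, ha⟩ := Finite.exists_min y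
  have hQ : conjStarAlgAut ℝ _ U (diagonal fun b => y b - y a) =
      conjStarAlgAut ℝ _ U (diagonal y) - y a • 1 := by
    rw [← diagonal_sub, map_sub, ← smul_one_eq_diagonal, map_smul, map_one]
  have hpos : (conjStarAlgAut ℝ _ U (diagonal fun b => y b - y a)).PosSemidef := by
    rw [Unitary.conjStarAlgAut_apply]
    exact (posSemidef_diagonal_iff.2 fun b => sub_nonneg.2 (ha b)).mul_mul_conjTranspose_same _
  have hdet : (conjStarAlgAut ℝ _ U (diagonal fun b => y b - y a)).det = 0 := by
    rw [det_conjStarAlgAut, det_diagonal]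
    exact Finset.prod_eq_zero (Finset.mem_univ a) (sub_self _)
  have htrace := trace_le_mul_rpow_det_of_posSemidef hW hR hpos fun X hX => by
    rw [hQ, mul_sub, trace_sub, hYW X hX, mul_smul_comm, mul_one, trace_smul, hW X hX, smul_zero,
      sub_zero]
  have hya : 0 ≤ y a := by
    rw [hdet, Real.zero_rpow (by simp), mul_zero, hQ, trace_sub, hYtr] at htrace
    simpa [Fintype.card_pos] using htrace
  rw [trace_conjStarAlgAut, trace_diagonal,
    Fintype.sum_eq_zero_iff_of_nonneg fun b => hya.trans (ha b)] at hYtr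
  simp [hYtr]

theorem mem_of_trace_eq_zero [Nonempty n] (hWsymm : ∀ X ∈ W, X.IsSymm) (hW : ∀ X ∈ W, X.trace = 0)
    (hR : ∀ Q : Matrix n n ℝ, Q.PosDef → Q.det = 1 → (∀ X ∈ W, (X * Q).trace = 0) → Q.trace ≤ R)
    {Z : Matrix n n ℝ} (hZ : Z.IsSymm) (hZtr : Z.trace = 0) : Z ∈ W := by
  let B : LinearMap.BilinForm ℝ (Matrix n n ℝ) :=
    (LinearMap.mul ℝ (Matrix n n ℝ)).compr₂ (traceLinearMap n ℝ ℝ)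
  have hB (X Y : Matrix n n ℝ) : B X Y = (X * Y).trace := rfl
  have hrefl : B.IsRefl := fun X Y h => by rwa [hB, trace_mul_comm]
  have hnondeg : (B.restrict W).Nondegenerate := by
    have hsymm : (B.restrict W).IsRefl := fun X Y => hrefl X Y
    refine hsymm.nondegenerate_iff_separatingLeft.2 ?_
    intro X hX
    have hXX : (X.1ᴴ * X.1).trace = 0 := by
      rw [isHermitian_iff_isSymm.2 (hWsymm X X.2)]
      exact hX X
    exact Subtype.ext (trace_conjTranspose_mul_self_eq_zero_iff.1 hXX)
  obtain ⟨X, hX, Y, hY, rfl⟩ := Submodule.mem_sup.1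
    ((LinearMap.BilinForm.isCompl_orthogonal_of_restrict_nondegenerate hrefl hnondeg).sup_eq_top ▸
      Submodule.mem_top : Z ∈ W ⊔ B.orthogonal W)
  have hY0 : Y = 0 := by
    have hYsymm : Y.IsSymm := by simpa using hZ.sub (hWsymm X hX)
    exact eq_zero_of_trace_mul_eq_zero hW hR hYsymm hY (by simpa [hW X hX] using hZtr)
  simpa [hY0] using hX

end TraceForm

section OrbitSpace

theorem exists_forall_exists_smul_le {L X : Type*} [Group L] [TopologicalSpace X] [MulAction L X]
    [ContinuousConstSMul L X] [CompactSpace (Quotient (MulAction.orbitRel L X))] {F : X → ℝ}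
    (hF : Continuous F) : ∃ R, ∀ x, ∃ l : L, F (l • x) ≤ R := by
  let π : X → Quotient (MulAction.orbitRel L X) := Quotient.mk _
  have hopen (k : ℕ) : IsOpen (π '' {x | F x < k}) :=
    isOpenMap_quotient_mk'_mul _ (isOpen_lt hF continuous_const)
  have hcover : Set.univ ⊆ ⋃ k : ℕ, π '' {x | F x < k} := by
    rintro ⟨x⟩ -
    obtain ⟨k, hk⟩ := exists_nat_gt (F x)
    exact Set.mem_iUnion.2 ⟨k, x, hk, rfl⟩
  have hmono : Monotone fun k : ℕ => π '' {x | F x < k} := fun i j hij =>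
    Set.image_mono fun x (hx : F x < i) => hx.trans_le (Nat.cast_le.2 hij)
  obtain ⟨k, hk⟩ := isCompact_univ.elim_directed_cover _ hopen hcover hmono.directed_le
  refine ⟨k, fun x => ?_⟩
  obtain ⟨y, hy, hyx⟩ := hk (Set.mem_univ (π x))
  obtain ⟨l, rfl⟩ : y ∈ MulAction.orbit L x := Quotient.exact hyx
  exact ⟨l, le_of_lt hy⟩

end OrbitSpace

section ConnectedComponents

theorem finite_connectedComponents_of_surjective {X Y : Type*} [TopologicalSpace X]
    [TopologicalSpace Y] [Finite (ConnectedComponents X)] {f : X → Y} (hf : Continuous f)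
    (hsurj : Function.Surjective f) : Finite (ConnectedComponents Y) :=
  Finite.of_surjective hf.connectedComponentsMap fun y => by
    obtain ⟨y, rfl⟩ := ConnectedComponents.surjective_coe y
    obtain ⟨x, rfl⟩ := hsurj y
    exact ⟨x, rfl⟩

theorem accPt_one_of_infinite {G : Type*} [TopologicalSpace G] [Group G] [ContinuousMul G]
    [Infinite G] [Finite (ConnectedComponents G)] : AccPt (1 : G) ⊤ := by
  rw [AccPt, inf_top_eq, neBot_iff, ne_eq, ← isOpen_singleton_iff_punctured_nhds]
  intro hopen
  have := discreteTopology_of_isOpen_singleton_one hopen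
  have hinj : Function.Injective ((↑) : G → ConnectedComponents G) := fun a b hab => by
    simpa [connectedComponent_eq_singleton] using ConnectedComponents.coe_eq_coe'.1 hab
  exact not_finite_iff_infinite.2 ‹Infinite G› (Finite.of_injective _ hinj)

end ConnectedComponents

section FormNorm

variable {n : Type*} [Fintype n]

/-- The squared Hilbert–Schmidt norm of the symmetric matrix `x J xᵀ`, which determines the point
`x H` of `G/H`. Its infimum on an orbit of `Γ` is a function on the orbit space. -/
def formNormSq (J x : Matrix n n ℝ) : ℝ :=
  (x * J * xᵀ * (x * J * xᵀ)).trace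

theorem formNormSq_mul_right {J A : Matrix n n ℝ} (hA : A * J * Aᵀ = J) (x : Matrix n n ℝ) :
    formNormSq J (x * A) = formNormSq J x := by
  have h : x * A * J * (x * A)ᵀ = x * (A * J * Aᵀ) * xᵀ := by
    simp only [transpose_mul, mul_assoc]
  rw [formNormSq, h, hA, formNormSq]

end FormNorm

section MatrixGroup

attribute [local instance] Matrix.linftyOpNormedRing Matrix.linftyOpNormedAlgebra

variable {n : Type*} [Fintype n] [DecidableEq n] {Γ : Subgroup (SpecialLinearGroup n ℝ)}

theorem transpose_exp_mul_mul_exp {J Y : Matrix n n ℝ} (hJ : IsUnit J) (hY : Yᵀ * J = -(J * Y)) :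
    (exp Y)ᵀ * J * exp Y = J := by
  have hJdet : IsUnit J.det := (isUnit_iff_isUnit_det J).1 hJ
  have hconj : J * Y * J⁻¹ = -Yᵀ := by
    rw [← neg_eq_iff_eq_neg.2 hY, neg_mul, mul_nonsing_inv_cancel_right _ _ hJdet]
  have hexp : (exp Y)ᵀ = J * (exp Y)⁻¹ * J⁻¹ := by
    rw [← Matrix.exp_transpose, ← neg_neg Yᵀ, ← hconj, ← Matrix.exp_neg, ← Matrix.exp_conj _ _ hJ,
      mul_neg, neg_mul]
  rw [hexp, nonsing_inv_mul_cancel_right _ _ hJdet, mul_assoc,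
    nonsing_inv_mul _ ((isUnit_iff_isUnit_det _).1 (Matrix.isUnit_exp Y)), mul_one]

/-- The group `Γ` as a multiplicative submonoid of the algebra of matrices, which is where
exponentials live. -/
def matrixSubmonoid (Γ : Subgroup (SpecialLinearGroup n ℝ)) : Submonoid (Matrix n n ℝ) :=
  Γ.toSubmonoid.map SpecialLinearGroup.coeMonoidHom

theorem isClosed_matrixSubmonoid (hΓ : IsClosed (Γ : Set (SpecialLinearGroup n ℝ))) :
    IsClosed (matrixSubmonoid Γ : Set (Matrix n n ℝ)) :=
  SpecialLinearGroup.isClosedEmbedding_val.isClosedMap _ hΓ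

theorem det_eq_one_of_mem_matrixSubmonoid {A : Matrix n n ℝ} (hA : A ∈ matrixSubmonoid Γ) :
    A.det = 1 := by
  obtain ⟨γ, -, rfl⟩ := hA
  exact γ.det_coe

theorem inv_mem_matrixSubmonoid {A : Matrix n n ℝ} (hA : A ∈ matrixSubmonoid Γ) :
    A⁻¹ ∈ matrixSubmonoid Γ := by
  obtain ⟨γ, hγ, rfl⟩ := hA
  refine ⟨γ⁻¹, Γ.inv_mem hγ, (inv_eq_right_inv ?_).symm⟩
  rw [← map_mul, mul_inv_cancel, map_one]

theorem exists_mul_eq_one_of_mem_matrixSubmonoid {A : Matrix n n ℝ}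
    (hA : A ∈ matrixSubmonoid Γ) : ∃ B ∈ matrixSubmonoid Γ, A * B = 1 :=
  ⟨A⁻¹, inv_mem_matrixSubmonoid hA,
    mul_nonsing_inv _ (by simp [det_eq_one_of_mem_matrixSubmonoid hA])⟩

theorem exp_zsmul_mem_matrixSubmonoid {X : Matrix n n ℝ} (hX : exp X ∈ matrixSubmonoid Γ) (k : ℤ) :
    exp (k • X) ∈ matrixSubmonoid Γ := by
  rw [Matrix.exp_zsmul]
  obtain ⟨k, rfl | rfl⟩ := k.eq_nat_or_neg
  · rw [zpow_natCast]
    exact pow_mem hX k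
  · rw [zpow_neg_natCast]
    exact inv_mem_matrixSubmonoid (pow_mem hX k)

theorem accPt_one_matrixSubmonoid [Infinite Γ] [Finite (ConnectedComponents Γ)] :
    AccPt 1 (𝓟 (matrixSubmonoid Γ : Set (Matrix n n ℝ))) := by
  let ι : Γ → Matrix n n ℝ := fun γ => (γ : SpecialLinearGroup n ℝ)
  have hι : Continuous ι := continuous_subtype_val.comp continuous_subtype_val
  have h := (accPt_one_of_infinite (G := Γ)).map hι.continuousAt
    (Subtype.val_injective.comp Subtype.val_injective)
  rw [← principal_univ, map_principal, Set.image_univ] at h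
  refine h.mono (principal_mono.2 ?_)
  rintro _ ⟨γ, rfl⟩
  exact ⟨γ, γ.2, rfl⟩

theorem eq_zero_of_mem_tangentSubmodule_of_mem_range_scalar [Nonempty n]
    {h : IsClosed (matrixSubmonoid Γ : Set (Matrix n n ℝ))} {X : Matrix n n ℝ}
    (hX : X ∈ tangentSubmodule (matrixSubmonoid Γ) h) (hscalar : X ∈ Set.range (scalar n)) :
    X = 0 := by
  obtain ⟨c, rfl⟩ := hscalar
  have hexp : exp (scalar n c) ∈ matrixSubmonoid Γ := exp_mem_of_mem_tangentSubmodule hX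
  have hdet := det_eq_one_of_mem_matrixSubmonoid hexp
  rw [det_exp_of_isSymm (by simp), Real.exp_eq_one_iff] at hdet
  have hc : c = 0 := by simpa using hdet
  simp [hc]

/-- The symmetric logarithms of elements of `Γ`. For a self-adjoint real algebraic group these form
the `𝔭`-part of the Cartan decomposition of its Lie algebra. -/
def symmLogs (Γ : Subgroup (SpecialLinearGroup n ℝ)) : Set (Matrix n n ℝ) :=
  {X | X.IsSymm ∧ exp X ∈ matrixSubmonoid Γ}

theorem isSymm_of_mem_span_symmLogs {X : Matrix n n ℝ} (hX : X ∈ Submodule.span ℝ (symmLogs Γ)) :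
    X.IsSymm := by
  induction hX using Submodule.span_induction with
  | mem X hX => exact hX.1
  | zero => exact isSymm_zero
  | add X Y _ _ hX hY => exact hX.add hY
  | smul c X _ hX => exact hX.smul c

theorem trace_eq_zero_of_mem_span_symmLogs {X : Matrix n n ℝ}
    (hX : X ∈ Submodule.span ℝ (symmLogs Γ)) : X.trace = 0 := by
  induction hX using Submodule.span_induction with
  | mem X hX =>
    rw [← Real.exp_eq_one_iff, ← det_exp_of_isSymm hX.1]
    exact det_eq_one_of_mem_matrixSubmonoid hX.2
  | zero => exact trace_zero _ _
  | add X Y _ _ hX hY => rw [trace_add, hX, hY, add_zero]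
  | smul c X _ hX => rw [trace_smul, hX, smul_zero]

theorem not_bddAbove_trace_matrixSubmonoid {X : Matrix n n ℝ} (hX : X ∈ symmLogs Γ)
    (hX0 : X ≠ 0) : ¬ BddAbove (trace '' (matrixSubmonoid Γ : Set (Matrix n n ℝ))) := by
  refine mt (fun hbdd => hbdd.mono ?_) (not_bddAbove_trace_exp_zsmul hX.1 hX0)
  rintro _ ⟨k, rfl⟩
  exact ⟨_, exp_zsmul_mem_matrixSubmonoid hX.2 k, rfl⟩

theorem infinite_of_mem_symmLogs {X : Matrix n n ℝ} (hX : X ∈ symmLogs Γ) (hX0 : X ≠ 0) :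
    Infinite Γ := by
  by_contra hfin
  have : Finite Γ := not_infinite_iff_finite.1 hfin
  exact not_bddAbove_trace_matrixSubmonoid hX hX0
    (((Set.toFinite (Γ : Set (SpecialLinearGroup n ℝ))).image _).image _).bddAbove

attribute [local instance] LieRing.ofAssociativeRing

theorem span_symmLogs_le_lieStabilizer (h : IsClosed (matrixSubmonoid Γ : Set (Matrix n n ℝ))) :
    Submodule.span ℝ (symmLogs Γ) ≤
      (lieStabilizer (tangentSubmodule (matrixSubmonoid Γ) h)).toSubmodule := by
  refine Submodule.span_le.2 fun X hX Z hZ => lie_mem_of_exp_conj_mem hX.1 (fun Y hY => ?_) hZ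
  obtain ⟨u, hu⟩ := Matrix.isUnit_exp X
  have hu' : ((u⁻¹ : (Matrix n n ℝ)ˣ) : Matrix n n ℝ) = exp (-X) := by
    rw [Matrix.exp_neg, coe_units_inv, hu]
  have hmem' : exp (-X) ∈ matrixSubmonoid Γ := by
    simpa using exp_zsmul_mem_matrixSubmonoid hX.2 (-1)
  rw [← hu, ← hu']
  exact conj_mem_tangentSubmodule u (hu ▸ hX.2) (hu' ▸ hmem') hY

theorem infinite_of_mem_span_symmLogs {X : Matrix n n ℝ}
    (hX : X ∈ Submodule.span ℝ (symmLogs Γ)) (hX0 : X ≠ 0) : Infinite Γ := by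
  obtain ⟨Y, hY, hY0⟩ : ∃ Y ∈ symmLogs Γ, Y ≠ 0 := by
    contrapose! hX0
    rwa [Submodule.span_eq_bot.2 hX0, Submodule.mem_bot] at hX
  exact infinite_of_mem_symmLogs hY hY0

theorem single_mem_tangentSubmodule [Finite (ConnectedComponents Γ)]
    (h : IsClosed (matrixSubmonoid Γ : Set (Matrix n n ℝ)))
    (hlogs : ∀ X : Matrix n n ℝ, X.IsSymm → X.trace = 0 → X ∈ Submodule.span ℝ (symmLogs Γ))
    {a b : n} (hab : a ≠ b) : single a b 1 ∈ tangentSubmodule (matrixSubmonoid Γ) h := by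
  have : Nonempty n := ⟨a⟩
  have : Infinite Γ :=
    infinite_of_mem_span_symmLogs
      (hlogs (single a a 1 - single b b 1) (by simp [Matrix.IsSymm]) (by simp))
      fun h0 => by simpa [hab.symm] using congr_fun₂ h0 a a
  obtain ⟨X, hX, hX0⟩ := exists_ne_zero_mem_tangentSubmodule (hS := h)
    (fun _ => exists_mul_eq_one_of_mem_matrixSubmonoid) accPt_one_matrixSubmonoid
  have hstab (c d : n) (hcd : c ≠ d) :
      single c d (1 : ℝ) ∈ lieStabilizer (tangentSubmodule (matrixSubmonoid Γ) h) :=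
    single_mem_of_isSymm_trace_zero_mem
      (fun X hX hXtr => span_symmLogs_le_lieStabilizer h (hlogs X hX hXtr)) hcd
  exact single_mem_of_notMem_range_scalar hstab hX
    (mt (eq_zero_of_mem_tangentSubmodule_of_mem_range_scalar hX) hX0) hab

theorem trace_le_of_formNormSq_le [Nonempty n] (hself : ∀ γ ∈ Γ, γ.transpose ∈ Γ) {ε : n → ℝ}
    (hε : ∀ a, ε a = 1 ∨ ε a = -1) {R : ℝ}
    (hR : ∀ x : SpecialLinearGroup n ℝ, ∃ γ ∈ Γ,
      formNormSq (diagonal ε) (γ * x : SpecialLinearGroup n ℝ) ≤ R)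
    {Q : Matrix n n ℝ} (hQ : Q.PosDef) (hdet : Q.det = 1)
    (hQlogs : ∀ X ∈ Submodule.span ℝ (symmLogs Γ), (X * Q).trace = 0) : Q.trace ≤ R := by
  obtain ⟨x, hx, hxQ⟩ := exists_det_eq_one_mul_self_eq hε hQ hdet
  obtain ⟨γ, hγ, hγR⟩ := hR ⟨x, hx⟩
  let l : Matrix n n ℝ := γ
  have hl : (lᵀ * l).PosDef := by
    have hldet : IsUnit l.det := by simp [l]
    exact PosDef.conjTranspose_mul_self l
      (mulVec_injective_of_isUnit ((isUnit_iff_isUnit_det l).2 hldet))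
  obtain ⟨X, hX, hXl⟩ := exists_isSymm_exp_eq hl
  have hXlogs : X ∈ symmLogs Γ :=
    ⟨hX, hXl ▸ ⟨γ.transpose * γ, Γ.mul_mem (hself γ hγ) hγ, rfl⟩⟩
  have hS : (x * diagonal ε * xᵀ).IsSymm := by
    simp [Matrix.IsSymm, transpose_mul, mul_assoc]
  calc Q.trace = (x * diagonal ε * xᵀ * (x * diagonal ε * xᵀ)).trace := by rw [hxQ]
    _ ≤ (l * (x * diagonal ε * xᵀ) * lᵀ * (l * (x * diagonal ε * xᵀ) * lᵀ)).trace :=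
      trace_mul_self_le_of_transpose_mul_self_eq_exp hX hS hXl.symm
        (hxQ ▸ hQlogs X (Submodule.subset_span hXlogs))
    _ = formNormSq (diagonal ε) (l * x) := by
      simp only [formNormSq, transpose_mul, mul_assoc]
    _ ≤ R := hγR

theorem mem_span_symmLogs_of_formNormSq_le [Nonempty n] (hself : ∀ γ ∈ Γ, γ.transpose ∈ Γ)
    {ε : n → ℝ} (hε : ∀ a, ε a = 1 ∨ ε a = -1) {R : ℝ}
    (hR : ∀ x : SpecialLinearGroup n ℝ, ∃ γ ∈ Γ,
      formNormSq (diagonal ε) (γ * x : SpecialLinearGroup n ℝ) ≤ R)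
    {X : Matrix n n ℝ} (hX : X.IsSymm) (hXtr : X.trace = 0) :
    X ∈ Submodule.span ℝ (symmLogs Γ) :=
  mem_of_trace_eq_zero (fun _ => isSymm_of_mem_span_symmLogs)
    (fun _ => trace_eq_zero_of_mem_span_symmLogs)
    (fun _ hQ hdet => trace_le_of_formNormSq_le hself hε hR hQ hdet) hX hXtr

theorem exp_single_add_single_mem [Finite (ConnectedComponents Γ)]
    (hΓ : IsClosed (Γ : Set (SpecialLinearGroup n ℝ))) (hself : ∀ γ ∈ Γ, γ.transpose ∈ Γ)
    {ε : n → ℝ} (hε : ∀ a, ε a = 1 ∨ ε a = -1) {R : ℝ}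
    (hR : ∀ x : SpecialLinearGroup n ℝ, ∃ γ ∈ Γ,
      formNormSq (diagonal ε) (γ * x : SpecialLinearGroup n ℝ) ≤ R) {a b : n} (hab : a ≠ b) :
    exp (single a b 1 + single b a 1 : Matrix n n ℝ) ∈ matrixSubmonoid Γ := by
  have : Nonempty n := ⟨a⟩
  have hlogs (X : Matrix n n ℝ) : X.IsSymm → X.trace = 0 → X ∈ Submodule.span ℝ (symmLogs Γ) :=
    mem_span_symmLogs_of_formNormSq_le hself hε hR
  exact exp_mem_of_mem_tangentSubmodule (hS := isClosed_matrixSubmonoid hΓ)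
    (add_mem (single_mem_tangentSubmodule _ hlogs hab)
      (single_mem_tangentSubmodule _ hlogs hab.symm))

end MatrixGroup

section HomogeneousSpace

variable {n : Type*} [Fintype n] [DecidableEq n] {L H : Subgroup (SpecialLinearGroup n ℝ)}

theorem mul_mul_transpose_eq_of_transpose_mul_mul_eq {J A : Matrix n n ℝ} (hJ : J * J = 1)
    (hA : Aᵀ * J * A = J) : A * J * Aᵀ = J := by
  have h : J * Aᵀ * J * A = 1 := by rw [mul_assoc J, mul_assoc J, hA, hJ]
  calc A * J * Aᵀ = A * (J * Aᵀ * J) * J := by simp only [mul_assoc, hJ, mul_one]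
    _ = J := by rw [mul_eq_one_comm.1 h, one_mul]

theorem transpose_single_add_single_mul_diagonal {ε : n → ℝ} {a b : n} (h : ε a = -ε b) :
    (single a b 1 + single b a 1)ᵀ * diagonal ε =
      -(diagonal ε * (single a b 1 + single b a 1)) := by
  ext c d
  simp only [transpose_add, transpose_single, mul_diagonal, diagonal_mul, Matrix.neg_apply,
    Matrix.add_apply, single_apply]
  grind

theorem isClosed_map_conj (hL : IsClosed (L : Set (SpecialLinearGroup n ℝ)))
    (g : SpecialLinearGroup n ℝ) :
    IsClosed (L.map (MulAut.conj g).toMonoidHom : Set (SpecialLinearGroup n ℝ)) :=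
  ((Homeomorph.mulLeft g).trans (Homeomorph.mulRight g⁻¹)).isClosedMap _ hL

theorem finite_connectedComponents_map_conj [Finite (ConnectedComponents L)]
    (g : SpecialLinearGroup n ℝ) :
    Finite (ConnectedComponents (L.map (MulAut.conj g).toMonoidHom)) := by
  have hcont : Continuous fun l : L => MulAut.conj g (l : SpecialLinearGroup n ℝ) := by
    simp only [MulAut.conj_apply]
    fun_prop
  exact finite_connectedComponents_of_surjective (X := L)
    (f := (MulAut.conj g).toMonoidHom.subgroupMap L) (hcont.subtype_mk _)
    (MonoidHom.subgroupMap_surjective _ _)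

theorem transpose_mem_of_inv_transpose_mem {Γ : Subgroup (SpecialLinearGroup n ℝ)}
    {γ δ : SpecialLinearGroup n ℝ} (hδ : δ ∈ Γ) (h : (γ : Matrix n n ℝ)ᵀ⁻¹ = δ) :
    γ.transpose ∈ Γ := by
  have hγδ : γ.transpose * δ = 1 := by
    have hcoe : (γ : Matrix n n ℝ)ᵀ * δ = 1 := by rw [← h, mul_nonsing_inv _ (by simp)]
    exact Subtype.ext hcoe
  rw [eq_inv_of_mul_eq_one_left hγδ]
  exact Γ.inv_mem hδ

theorem exists_formNormSq_le
    [CompactSpace (Quotient (MulAction.orbitRel L (SpecialLinearGroup n ℝ ⧸ H)))]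
    {J : Matrix n n ℝ} (hH : ∀ A ∈ H, (A : Matrix n n ℝ) * J * (A : Matrix n n ℝ)ᵀ = J)
    (g : SpecialLinearGroup n ℝ) :
    ∃ R, ∀ x : SpecialLinearGroup n ℝ, ∃ γ ∈ L.map (MulAut.conj g).toMonoidHom,
      formNormSq J (γ * x : SpecialLinearGroup n ℝ) ≤ R := by
  let F : SpecialLinearGroup n ℝ ⧸ H → ℝ := fun y =>
    y.liftOn' (fun x => formNormSq J (g * x : SpecialLinearGroup n ℝ)) fun x y hxy => by
      obtain ⟨A, hA, rfl⟩ : ∃ A ∈ H, x * A = y := ⟨_, QuotientGroup.leftRel_apply.1 hxy, by simp⟩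
      simp only [← mul_assoc, Matrix.SpecialLinearGroup.coe_mul (g * x),
        formNormSq_mul_right (hH A hA)]
  have hF : Continuous F := by
    refine Continuous.quotient_liftOn' ?_ _
    simp only [formNormSq]
    fun_prop
  have : ContinuousConstSMul L (SpecialLinearGroup n ℝ ⧸ H) :=
    ⟨fun l => continuous_const_smul (l : SpecialLinearGroup n ℝ)⟩
  obtain ⟨R, hR⟩ := exists_forall_exists_smul_le (L := L) hF
  refine ⟨R, fun x => ?_⟩
  obtain ⟨l, hl⟩ := hR ((g⁻¹ * x : SpecialLinearGroup n ℝ) : SpecialLinearGroup n ℝ ⧸ H)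
  refine ⟨MulAut.conj g l, Subgroup.mem_map_of_mem _ l.2, ?_⟩
  have hmul : MulAut.conj g l * x = g * (l * (g⁻¹ * x)) := by
    simp only [MulAut.conj_apply, mul_assoc]
  rw [hmul]
  exact hl

theorem bddAbove_trace_of_proper
    (hproper : ∀ C : Set (SpecialLinearGroup n ℝ ⧸ H), IsCompact C →
      IsCompact {l : L | ((fun x => l • x) '' C ∩ C).Nonempty})
    (g : SpecialLinearGroup n ℝ) :
    BddAbove (trace '' (matrixSubmonoid (L.map (MulAut.conj g).toMonoidHom ⊓ H) :
      Set (Matrix n n ℝ))) := by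
  let x₀ : SpecialLinearGroup n ℝ ⧸ H := (g⁻¹ : SpecialLinearGroup n ℝ)
  have hcont : Continuous fun l : L => (MulAut.conj g l : Matrix n n ℝ).trace := by
    simp only [MulAut.conj_apply]
    fun_prop
  refine ((hproper {x₀} isCompact_singleton).bddAbove_image hcont.continuousOn).mono ?_
  rintro _ ⟨_, ⟨_, ⟨⟨l, hl, rfl⟩, hlH⟩, rfl⟩, rfl⟩
  refine ⟨⟨l, hl⟩, ⟨x₀, ⟨x₀, rfl, ?_⟩, rfl⟩, rfl⟩
  refine (QuotientGroup.eq.2 ?_).symm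
  simpa [mul_assoc] using hlH

theorem no_standard_compact_clifford_klein_form_SO_general {ε : n → ℝ}
    (hε : ∀ a, ε a = 1 ∨ ε a = -1) {a b : n} (ha : ε a = 1) (hb : ε b = -1)
    (hH : ∀ A : SpecialLinearGroup n ℝ,
      A ∈ H ↔ (A : Matrix n n ℝ)ᵀ * diagonal ε * (A : Matrix n n ℝ) = diagonal ε) :
    ¬ ∃ L : Subgroup (SpecialLinearGroup n ℝ),
      IsClosed (L : Set (SpecialLinearGroup n ℝ)) ∧
      Finite (ConnectedComponents L) ∧
      (∃ g : SpecialLinearGroup n ℝ, ∀ A ∈ L, ∃ B ∈ L,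
        (((g * A * g⁻¹ : SpecialLinearGroup n ℝ) : Matrix n n ℝ)ᵀ)⁻¹ =
          ((g * B * g⁻¹ : SpecialLinearGroup n ℝ) : Matrix n n ℝ)) ∧
      (∀ C : Set (SpecialLinearGroup n ℝ ⧸ H), IsCompact C →
        IsCompact {l : L | ((fun x => l • x) '' C ∩ C).Nonempty}) ∧
      CompactSpace (Quotient (MulAction.orbitRel L (SpecialLinearGroup n ℝ ⧸ H))) := by
  rintro ⟨L, hL, hfin, ⟨g, hg⟩, hproper, hcompact⟩
  have hab : a ≠ b := fun h => by norm_num [h, hb] at ha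
  have hJ : diagonal ε * diagonal ε = 1 := by
    rw [diagonal_mul_diagonal, ← diagonal_one]
    exact congr_arg diagonal (funext fun c => mul_self_eq_one_iff.2 (hε c))
  have hself : ∀ γ ∈ L.map (MulAut.conj g).toMonoidHom,
      γ.transpose ∈ L.map (MulAut.conj g).toMonoidHom := by
    rintro _ ⟨A, hA, rfl⟩
    obtain ⟨B, hB, hAB⟩ := hg A hA
    exact transpose_mem_of_inv_transpose_mem (Subgroup.mem_map_of_mem _ hB) hAB
  obtain ⟨R, hR⟩ := exists_formNormSq_le (L := L)
    (fun A hA => mul_mul_transpose_eq_of_transpose_mul_mul_eq hJ ((hH A).1 hA)) g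
  have := finite_connectedComponents_map_conj (L := L) g
  obtain ⟨γ, hγ, (hγX : (γ : Matrix n n ℝ) = _)⟩ :=
    exp_single_add_single_mem (isClosed_map_conj hL g) hself hε hR hab
  have hγH : γ ∈ H := by
    rw [hH, hγX]
    exact transpose_exp_mul_mul_exp (IsUnit.of_mul_eq_one _ hJ)
      (transpose_single_add_single_mul_diagonal (by rw [ha, hb, neg_neg]))
  exact not_bddAbove_trace_matrixSubmonoid
    ⟨by simp [Matrix.IsSymm, add_comm], γ, Subgroup.mem_inf.2 ⟨hγ, hγH⟩, hγX⟩
    (fun h => by simpa [hab, hab.symm] using congr_fun₂ h a b) (bddAbove_trace_of_proper hproper g)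

end HomogeneousSpace

/-- For `k ≥ 5`, the homogeneous space `SL(2k+1, ℝ)/SO(k-1, k+2)` admits no
standard compact Clifford–Klein form: there is no closed subgroup `L` of `G = SL(2k+1, ℝ)` with
finitely many connected components, some conjugate of which is invariant under the Cartan
involution `A ↦ (Aᵀ)⁻¹` (i.e. `L` is reductive in `G`), acting properly on `G/H` with compact
orbit space `L\(G/H)`. -/
theorem no_standard_compact_clifford_klein_form_SO
    (k : ℕ) (hk : 5 ≤ k)
    (J : Matrix (Fin (2*k+1)) (Fin (2*k+1)) ℝ)
    (hJ : J = Matrix.diagonal (fun i : Fin (2*k+1) => if (i : ℕ) < k - 1 then (1 : ℝ) else -1))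
    (H : Subgroup (Matrix.SpecialLinearGroup (Fin (2*k+1)) ℝ))
    (hH : ∀ A : Matrix.SpecialLinearGroup (Fin (2*k+1)) ℝ,
      A ∈ H ↔ (A : Matrix (Fin (2*k+1)) (Fin (2*k+1)) ℝ)ᵀ * J
        * (A : Matrix (Fin (2*k+1)) (Fin (2*k+1)) ℝ) = J) :
    ¬ ∃ L : Subgroup (Matrix.SpecialLinearGroup (Fin (2*k+1)) ℝ),
      -- `L` is a closed subgroup of `G`
      IsClosed (L : Set (Matrix.SpecialLinearGroup (Fin (2*k+1)) ℝ)) ∧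
      -- (a) `L` has finitely many connected components
      Finite (ConnectedComponents L) ∧
      -- (b) some conjugate `g L g⁻¹` is invariant under the Cartan involution `A ↦ (Aᵀ)⁻¹`
      (∃ g : Matrix.SpecialLinearGroup (Fin (2*k+1)) ℝ, ∀ A ∈ L, ∃ B ∈ L,
        (((g * A * g⁻¹ : Matrix.SpecialLinearGroup (Fin (2*k+1)) ℝ) :
            Matrix (Fin (2*k+1)) (Fin (2*k+1)) ℝ)ᵀ)⁻¹
          = ((g * B * g⁻¹ : Matrix.SpecialLinearGroup (Fin (2*k+1)) ℝ) :
            Matrix (Fin (2*k+1)) (Fin (2*k+1)) ℝ)) ∧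
      -- (c) the left-translation action of `L` on `G/H` is proper
      (∀ C : Set (Matrix.SpecialLinearGroup (Fin (2*k+1)) ℝ ⧸ H), IsCompact C →
        IsCompact {l : L | ((fun x => l • x) '' C ∩ C).Nonempty}) ∧
      -- (d) the orbit space `L\(G/H)` is compact
      CompactSpace (Quotient (MulAction.orbitRel L
        (Matrix.SpecialLinearGroup (Fin (2*k+1)) ℝ ⧸ H))) := by
  subst hJ
  exact no_standard_compact_clifford_klein_form_SO_general (by intro a; split_ifs <;> simp)
    (a := ⟨0, by lia⟩) (b := ⟨2 * k, by lia⟩) (if_pos (show 0 < k - 1 by lia))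
    (if_neg (show ¬ 2 * k < k - 1 by lia)) hH
end

section
/- Let k ≥ 5 and let G = SL(2k+1, ℝ) with its standard topology. Let Ω be the standard symplectic (2k−2)×(2k−2) matrix (Ω = [[0, I_{k−1}], [−I_{k−1}, 0]] in block form), let Sp(k−1, ℝ) = {B ∈ GL(2k−2, ℝ) : Bᵀ Ω B = Ω}, and let H be the closed subgroup of G consisting of all block-diagonal matrices diag(B, I₃) with B ∈ Sp(k−1, ℝ). Then there is no closed subgroup L of G satisfying all of the following: (a) L has finitely many connected components; (b) there exists g ∈ G such that g L g⁻¹ is invariant under the map A ↦ (Aᵀ)⁻¹; (c) the action of L on the quotient space G/H by left translations is proper; and (d) the orbit space L\(G/H) of this action is compact. In other words, SL(2k+1, ℝ)/Sp(k−1, ℝ) admits no standard compact Clifford–Klein form. -/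
/-!
Conjugate `L` so that it is stable under transposition, and write `𝔭_L`, `𝔭_H` for the spaces of
symmetric matrices in the Lie algebras of `L` and of `H = Sp(p, ℝ) ⊆ SL(2p + r, ℝ)`, where
`p = k - 1` and `r = 3`. The two conditions on the action bound `dim 𝔭_L` from opposite sides.

Compactness of `L \ G / H`: if some symmetric traceless `W ≠ 0` were trace-orthogonal to `𝔭_L` and
`𝔭_H`, then `a = √(α + β W)` could be taken of determinant one and arbitrarily large norm, while
convexity of `exp` shows that `a` has the least norm in its double coset `L a H`. Hence
`dim 𝔭_L + dim 𝔭_H + 1` is at least the dimension of the space of all symmetric matrices.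

Properness: a symmetric matrix that vanishes on the diagonal blocks of sizes `p` and `p + r` has
eigenvalues `±σ i` and zeros, so it is conjugate to an element of `𝔭_H`. Were it a nonzero element
of `𝔭_L`, it would generate a noncompact subgroup of `L` fixing a point of `G / H`. Thus `𝔭_L`
embeds into the pairs of symmetric matrices of sizes `p` and `p + r`. Together with
`dim 𝔭_H = p (p + 1)` these bounds give `p r ≤ p + 1`.
-/

open scoped Matrix

/-- `SL(n, ℝ)` with its standard topology (as a subspace of the space of matrices,
which carries the product topology). -/
instance specialLinearGroup.topologicalSpace' (n : Type*) [DecidableEq n] [Fintype n] :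
    TopologicalSpace (Matrix.SpecialLinearGroup n ℝ) :=
  instTopologicalSpaceSubtype

namespace CliffordKlein

open Filter NormedSpace Topology

lemma isSymm_iff_isHermitian {n : Type*} {X : Matrix n n ℝ} : X.IsSymm ↔ X.IsHermitian := by
  rw [Matrix.IsHermitian, Matrix.conjTranspose_eq_transpose_of_trivial, Matrix.IsSymm]

section SpectralCalculus

variable {n : Type*} [Fintype n] [DecidableEq n]

/-- The matrix `U diag(x) Uᵀ`. For orthogonal `U` it is the symmetric matrix with eigenvalues `x`
in the orthonormal basis formed by the columns of `U`; writing symmetric matrices in this form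
replaces functional calculus by operations on `x`. -/
def diagConj (U : Matrix n n ℝ) (x : n → ℝ) : Matrix n n ℝ :=
  U * Matrix.diagonal x * Uᵀ

lemma isSymm_diagConj (U : Matrix n n ℝ) (x : n → ℝ) : (diagConj U x).IsSymm := by
  simp [Matrix.IsSymm, diagConj, Matrix.mul_assoc]

lemma exists_eq_diagConj {X : Matrix n n ℝ} (hX : X.IsSymm) :
    ∃ U : Matrix n n ℝ, ∃ x : n → ℝ, Uᵀ * U = 1 ∧ X = diagConj U x := by
  have hH := isSymm_iff_isHermitian.mp hX
  refine ⟨hH.eigenvectorUnitary, hH.eigenvalues, ?_, ?_⟩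
  · simpa only [Matrix.star_eq_conjTranspose, Matrix.conjTranspose_eq_transpose_of_trivial]
      using Unitary.coe_star_mul_self hH.eigenvectorUnitary
  · simpa [diagConj, Unitary.conjStarAlgAut_apply, Matrix.star_eq_conjTranspose, Function.comp_def]
      using hH.spectral_theorem

lemma diagConj_zero (U : Matrix n n ℝ) : diagConj U 0 = 0 := by
  simp [diagConj]

lemma diagConj_neg (U : Matrix n n ℝ) (x : n → ℝ) : diagConj U (-x) = -diagConj U x := by
  rw [diagConj, Pi.neg_def, ← Matrix.diagonal_neg, Matrix.mul_neg, Matrix.neg_mul, diagConj]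

lemma diagConj_add (U : Matrix n n ℝ) (x y : n → ℝ) :
    diagConj U (x + y) = diagConj U x + diagConj U y := by
  rw [diagConj, Pi.add_def, ← Matrix.diagonal_add, Matrix.mul_add, Matrix.add_mul, diagConj,
    diagConj]

lemma diagConj_smul (U : Matrix n n ℝ) (c : ℝ) (x : n → ℝ) :
    diagConj U (c • x) = c • diagConj U x := by
  rw [diagConj, Matrix.diagonal_smul, Matrix.mul_smul, Matrix.smul_mul, diagConj]

variable {U : Matrix n n ℝ}

lemma diagConj_one (hU : Uᵀ * U = 1) : diagConj U 1 = 1 := by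
  rw [diagConj, Pi.one_def, Matrix.diagonal_one, mul_one, mul_eq_one_comm.mp hU]

lemma diagConj_mul_diagConj (hU : Uᵀ * U = 1) (x y : n → ℝ) :
    diagConj U x * diagConj U y = diagConj U (x * y) :=
  calc diagConj U x * diagConj U y
      = U * Matrix.diagonal x * (Uᵀ * U) * Matrix.diagonal y * Uᵀ := by
        simp only [diagConj, Matrix.mul_assoc]
    _ = diagConj U (x * y) := by
        rw [hU, mul_one, Matrix.mul_assoc U, Matrix.diagonal_mul_diagonal, diagConj, Pi.mul_def]

lemma trace_diagConj (hU : Uᵀ * U = 1) (x : n → ℝ) : (diagConj U x).trace = ∑ i, x i := by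
  rw [diagConj, Matrix.trace_mul_comm, ← Matrix.mul_assoc, hU, one_mul, Matrix.trace_diagonal]

lemma det_diagConj (hU : Uᵀ * U = 1) (x : n → ℝ) : (diagConj U x).det = ∏ i, x i := by
  rw [diagConj, Matrix.det_mul_comm, ← Matrix.mul_assoc, hU, one_mul, Matrix.det_diagonal]

lemma exp_diagConj (hU : Uᵀ * U = 1) (x : n → ℝ) :
    exp (diagConj U x) = diagConj U fun i => Real.exp (x i) := by
  have hexp : exp x = fun i => Real.exp (x i) := by
    ext i
    rw [Pi.coe_exp, Real.exp_eq_exp_ℝ]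
  rw [diagConj, ← Matrix.inv_eq_left_inv hU,
    Matrix.exp_conj _ _ (.of_mul_eq_one _ (mul_eq_one_comm.mp hU)), Matrix.exp_diagonal, hexp,
    Matrix.inv_eq_left_inv hU, diagConj]

end SpectralCalculus

section SymmetricExponential

variable {n : Type*} [Fintype n] [DecidableEq n]

open scoped Matrix.Norms.L2Operator in
lemma exp_injective_of_isSymm {X Y : Matrix n n ℝ} (hX : X.IsSymm) (hY : Y.IsSymm)
    (h : exp X = exp Y) : X = Y := by
  rw [← CFC.log_exp X (isSymm_iff_isHermitian.mp hX), h,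
    CFC.log_exp Y (isSymm_iff_isHermitian.mp hY)]

open scoped Matrix.Norms.L2Operator MatrixOrder in
lemma exists_isSymm_exp_eq_transpose_mul_self {B : Matrix n n ℝ} (hB : IsUnit B) :
    ∃ X : Matrix n n ℝ, X.IsSymm ∧ exp X = Bᵀ * B := by
  have hpos : (Bᵀ * B).PosDef := by
    rw [← Matrix.conjTranspose_eq_transpose_of_trivial]
    exact Matrix.PosDef.conjTranspose_mul_self B (Matrix.mulVec_injective_of_isUnit hB)
  exact ⟨CFC.log (Bᵀ * B), isSymm_iff_isHermitian.mpr (cfc_predicate _ _),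
    CFC.exp_log _ hpos.isStrictlyPositive⟩

lemma det_exp_of_isSymm {X : Matrix n n ℝ} (hX : X.IsSymm) :
    (exp X).det = Real.exp X.trace := by
  obtain ⟨U, x, hU, rfl⟩ := exists_eq_diagConj hX
  rw [exp_diagConj hU, det_diagConj hU, trace_diagConj hU, Real.exp_sum]

lemma trace_eq_zero_of_det_exp_eq_one {X : Matrix n n ℝ} (hX : X.IsSymm)
    (h : (exp X).det = 1) : X.trace = 0 := by
  rwa [det_exp_of_isSymm hX, Real.exp_eq_one_iff] at h

lemma trace_diagConj_mul_diagConj {a : Matrix n n ℝ} (ha : a.IsSymm) (U V : Matrix n n ℝ)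
    (x z : n → ℝ) : (diagConj V z * a * diagConj U x * a).trace =
      ∑ i, ∑ j, z i * x j * (Vᵀ * a * U) i j ^ 2 := by
  have hT : Uᵀ * a * V = (Vᵀ * a * U)ᵀ := by simp [ha.eq, Matrix.mul_assoc]
  calc (diagConj V z * a * diagConj U x * a).trace
      = (V * (Matrix.diagonal z * Vᵀ * a * (U * Matrix.diagonal x * Uᵀ) * a)).trace := by
        simp only [diagConj, Matrix.mul_assoc]
    _ = (Matrix.diagonal z * (Vᵀ * a * U) * (Matrix.diagonal x * (Uᵀ * a * V))).trace := by
        rw [Matrix.trace_mul_comm]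
        simp only [Matrix.mul_assoc]
    _ = ∑ i, ∑ j, z i * x j * (Vᵀ * a * U) i j ^ 2 := by
        rw [hT]
        simp only [Matrix.trace, Matrix.diag, Matrix.mul_apply (M := Matrix.diagonal z * _),
          Matrix.diagonal_mul, Matrix.transpose_apply]
        exact Finset.sum_congr rfl fun i _ => Finset.sum_congr rfl fun j _ => by ring

/-- The entrywise inequality `1 + z i + x j ≤ exp (z i) * exp (x j)` in eigenbases of `Z`, `X`. -/
lemma trace_exp_mul_exp_ge {Z X a : Matrix n n ℝ} (hZ : Z.IsSymm) (hX : X.IsSymm)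
    (ha : a.IsSymm) : (a * a).trace + (Z * (a * a)).trace + (X * (a * a)).trace ≤
      (exp Z * a * exp X * a).trace := by
  obtain ⟨U, x, hU, rfl⟩ := exists_eq_diagConj hX
  obtain ⟨V, z, hV, rfl⟩ := exists_eq_diagConj hZ
  have trace_a : (a * a).trace = ∑ i, ∑ j, (Vᵀ * a * U) i j ^ 2 := by
    simpa [diagConj_one hU, diagConj_one hV] using trace_diagConj_mul_diagConj ha U V 1 1
  have trace_Z : (diagConj V z * (a * a)).trace = ∑ i, ∑ j, z i * (Vᵀ * a * U) i j ^ 2 := by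
    simpa [diagConj_one hU, Matrix.mul_assoc] using trace_diagConj_mul_diagConj ha U V 1 z
  have trace_X : (diagConj U x * (a * a)).trace = ∑ i, ∑ j, x j * (Vᵀ * a * U) i j ^ 2 := by
    rw [← Matrix.mul_assoc, Matrix.trace_mul_comm, ← Matrix.mul_assoc]
    simpa [diagConj_one hV] using trace_diagConj_mul_diagConj ha U V x 1
  rw [exp_diagConj hU, exp_diagConj hV, trace_diagConj_mul_diagConj ha, trace_a, trace_Z, trace_X]
  simp only [← Finset.sum_add_distrib]
  refine Finset.sum_le_sum fun i _ => Finset.sum_le_sum fun j _ => ?_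
  have hexp := Real.add_one_le_exp (z i + x j)
  rw [← Real.exp_add]
  nlinarith [sq_nonneg ((Vᵀ * a * U) i j)]

lemma trace_mul_self_le {X : Matrix n n ℝ} (hX : X.IsSymm) :
    (X * X).trace ≤ (exp X).trace ^ 2 + (exp (-X)).trace ^ 2 := by
  obtain ⟨U, x, hU, rfl⟩ := exists_eq_diagConj hX
  rw [← diagConj_neg, exp_diagConj hU, exp_diagConj hU, diagConj_mul_diagConj hU,
    trace_diagConj hU, trace_diagConj hU, trace_diagConj hU]
  have sum_sq_le (y : n → ℝ) : ∑ i, Real.exp (y i) ^ 2 ≤ (∑ i, Real.exp (y i)) ^ 2 :=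
    Finset.sum_sq_le_sq_sum_of_nonneg fun i _ => (Real.exp_pos _).le
  refine le_trans ?_ (add_le_add (sum_sq_le x) (sum_sq_le (-x)))
  rw [← Finset.sum_add_distrib]
  refine Finset.sum_le_sum fun i _ => ?_
  have h₁ := Real.add_one_le_exp (x i)
  have h₂ := Real.add_one_le_exp (-x i)
  rw [Pi.mul_apply, Pi.neg_apply]
  rcases le_total 0 (x i) with h | h <;> nlinarith [Real.exp_pos (x i), Real.exp_pos (-x i)]

end SymmetricExponential

section UnimodularShift

variable {n : Type*} [Fintype n]

lemma exists_neg_isMin_of_sum_eq_zero {w : n → ℝ} (hw : w ≠ 0) (hsum : ∑ i, w i = 0) :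
    ∃ i₀, w i₀ < 0 ∧ ∀ i, w i₀ ≤ w i := by
  obtain ⟨i, hi⟩ : ∃ i, w i < 0 := by
    by_contra! hnonneg
    refine hw (funext fun i => ?_)
    exact (Finset.sum_eq_zero_iff_of_nonneg fun i _ => hnonneg i).mp hsum i (Finset.mem_univ i)
  have : Nonempty n := ⟨i⟩
  obtain ⟨i₀, hmin⟩ := Finite.exists_min w
  exact ⟨i₀, (hmin i).trans_lt hi, hmin⟩

/-- As `s` decreases to `-min w`, the scalar `c` normalising the product of the `c * (s + w i)`
to `1` tends to infinity, hence so does their sum `c * s * card n`. -/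
lemma exists_prod_eq_one_lt_sum {w : n → ℝ} (hw : w ≠ 0) (hsum : ∑ i, w i = 0) (R : ℝ) :
    ∃ c s : ℝ, (∀ i, 0 < c * (s + w i)) ∧ ∏ i, c * (s + w i) = 1 ∧
      R < ∑ i, c * (s + w i) := by
  obtain ⟨i₀, hneg, hmin⟩ := exists_neg_isMin_of_sum_eq_zero hw hsum
  have hcard : 0 < (Fintype.card n : ℝ) := by
    exact_mod_cast Fintype.card_pos_iff.mpr ⟨i₀⟩
  have hpos (s : ℝ) (hs : s ∈ Set.Ioi (-w i₀)) (i : n) : 0 < s + w i := by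
    linarith [hmin i, Set.mem_Ioi.mp hs]
  have hprod (s : ℝ) (hs : s ∈ Set.Ioi (-w i₀)) : 0 < ∏ i, (s + w i) :=
    Finset.prod_pos fun i _ => hpos s hs i
  let c (s : ℝ) : ℝ := (∏ i, (s + w i))⁻¹ ^ (Fintype.card n : ℝ)⁻¹
  have tendsto_prod : Tendsto (fun s => ∏ i, (s + w i)) (𝓝[>] (-w i₀)) (𝓝[>] 0) := by
    refine tendsto_nhdsWithin_iff.mpr ⟨?_, eventually_mem_nhdsWithin.mono hprod⟩
    have hcont : Continuous fun s : ℝ => ∏ i, (s + w i) := by fun_prop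
    rw [← Finset.prod_eq_zero (f := fun i => -w i₀ + w i) (Finset.mem_univ i₀) (by simp)]
    exact hcont.continuousWithinAt
  have tendsto_c : Tendsto c (𝓝[>] (-w i₀)) atTop :=
    (tendsto_rpow_atTop (inv_pos.mpr hcard)).comp (tendsto_inv_nhdsGT_zero.comp tendsto_prod)
  have tendsto_sum : Tendsto (fun s => c s * (Fintype.card n * s)) (𝓝[>] (-w i₀)) atTop :=
    tendsto_c.atTop_mul_pos (mul_pos hcard (neg_pos.mpr hneg))
      ((tendsto_const_nhds.mul tendsto_id).mono_left nhdsWithin_le_nhds)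
  obtain ⟨s, hlt, hs⟩ := ((tendsto_sum.eventually_gt_atTop R).and eventually_mem_nhdsWithin).exists
  have hinv : 0 < (∏ i, (s + w i))⁻¹ := inv_pos.mpr (hprod s hs)
  refine ⟨c s, s, fun i => mul_pos (Real.rpow_pos_of_pos hinv _) (hpos s hs i), ?_, ?_⟩
  · rw [Finset.prod_mul_distrib, Finset.prod_const, Finset.card_univ,
      Real.rpow_inv_natCast_pow hinv.le (by exact_mod_cast hcard.ne'),
      inv_mul_cancel₀ (hprod s hs).ne']
  · rwa [← Finset.mul_sum, Finset.sum_add_distrib, hsum, add_zero, Finset.sum_const,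
      Finset.card_univ, nsmul_eq_mul]

lemma exists_isSymm_det_eq_one_lt_trace [DecidableEq n] {W : Matrix n n ℝ} (hW : W.IsSymm)
    (hW0 : W ≠ 0) (htrace : W.trace = 0) (R : ℝ) :
    ∃ (a : Matrix n n ℝ) (α β : ℝ), a.IsSymm ∧ a.det = 1 ∧ a * a = α • 1 + β • W ∧
      R < (a * a).trace := by
  obtain ⟨U, w, hU, rfl⟩ := exists_eq_diagConj hW
  rw [trace_diagConj hU] at htrace
  have hw : w ≠ 0 := by
    rintro rfl
    exact hW0 (diagConj_zero U)
  obtain ⟨c, s, hpos, hprod, hlt⟩ := exists_prod_eq_one_lt_sum hw htrace R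
  have sq_eq : diagConj U (fun i => √(c * (s + w i))) * diagConj U (fun i => √(c * (s + w i))) =
      diagConj U fun i => c * (s + w i) := by
    rw [diagConj_mul_diagConj hU]
    exact congrArg _ (funext fun i => Real.mul_self_sqrt (hpos i).le)
  refine ⟨diagConj U fun i => √(c * (s + w i)), c * s, c, isSymm_diagConj _ _, ?_, ?_, ?_⟩
  · rw [det_diagConj hU, ← Real.sqrt_prod _ fun i _ => (hpos i).le, hprod, Real.sqrt_one]
  · rw [sq_eq, ← diagConj_one hU, ← diagConj_smul, ← diagConj_smul, ← diagConj_add]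
    congr 1
    ext i
    simp only [Pi.add_apply, Pi.smul_apply, Pi.one_apply, smul_eq_mul]
    ring
  · rwa [sq_eq, trace_diagConj hU]

end UnimodularShift

section DerivativeOfExp

variable {𝔸 : Type*} [NormedRing 𝔸] [NormedAlgebra ℝ 𝔸] [CompleteSpace 𝔸]

lemma contDiff_exp : ContDiff ℝ 1 (exp : 𝔸 → 𝔸) :=
  contDiff_iff_contDiffAt.mpr fun x => (NormedSpace.exp_analytic (𝕂 := ℝ) x).contDiffAt

lemma hasDerivAt_exp_comp {γ : ℝ → 𝔸} {x ξ : 𝔸} (hγ : HasDerivAt γ ξ 0) (h0 : γ 0 = x) :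
    HasDerivAt (fun s => exp (γ s)) (fderiv ℝ exp x ξ) 0 := by
  subst h0
  exact (contDiff_exp.differentiable one_ne_zero _).hasFDerivAt.comp_hasDerivAt 0 hγ

lemma hasDerivAt_add_smul {E : Type*} [NormedAddCommGroup E] [NormedSpace ℝ E] (x ξ : E) :
    HasDerivAt (fun s : ℝ => x + s • ξ) ξ 0 := by
  simpa only [one_smul, id_eq] using ((hasDerivAt_id (0 : ℝ)).smul_const ξ).const_add x

lemma hasDerivAt_exp_smul_zero (ξ : 𝔸) : HasDerivAt (fun s : ℝ => exp (s • ξ)) ξ 0 := by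
  simpa using hasDerivAt_exp_smul_const (𝕂 := ℝ) ξ (0 : ℝ)

lemma fderiv_exp_apply_of_commute {x ξ : 𝔸} (h : Commute x ξ) :
    fderiv ℝ exp x ξ = exp x * ξ := by
  let : NormedAlgebra ℚ 𝔸 := .restrictScalars ℚ ℝ 𝔸
  refine (hasDerivAt_exp_comp (hasDerivAt_add_smul x ξ) (by simp)).unique ?_
  simp only [exp_add_of_commute (h.smul_right _)]
  exact (hasDerivAt_exp_smul_zero ξ).const_mul (exp x)

lemma fderiv_exp_apply_commutator (x ζ : 𝔸) :
    fderiv ℝ exp x (ζ * x - x * ζ) = ζ * exp x - exp x * ζ := by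
  let : NormedAlgebra ℚ 𝔸 := .restrictScalars ℚ ℝ 𝔸
  have hasDerivAt_conj (y : 𝔸) :
      HasDerivAt (fun s : ℝ => exp (s • ζ) * y * exp (s • -ζ)) (ζ * y - y * ζ) 0 := by
    simpa only [zero_smul, exp_zero, one_mul, mul_one, mul_neg, ← sub_eq_add_neg] using!
      ((hasDerivAt_exp_smul_zero ζ).mul_const y).mul (hasDerivAt_exp_smul_zero (-ζ))
  refine (hasDerivAt_exp_comp (hasDerivAt_conj x) (by simp)).unique ?_
  have exp_conj (s : ℝ) : exp (exp (s • ζ) * x * exp (s • -ζ)) =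
      exp (s • ζ) * exp x * exp (s • -ζ) := by
    let := invertibleExp (s • ζ)
    simpa [invOf_exp] using exp_units_conj (unitOfInvertible (exp (s • ζ))) x
  simpa only [exp_conj] using hasDerivAt_conj (exp x)

lemma fderiv_exp_apply_conj (u : 𝔸ˣ) (x ξ : 𝔸) :
    fderiv ℝ exp (u * x * ↑u⁻¹) (u * ξ * ↑u⁻¹) = u * fderiv ℝ exp x ξ * ↑u⁻¹ := by
  let : NormedAlgebra ℚ 𝔸 := .restrictScalars ℚ ℝ 𝔸
  refine (hasDerivAt_exp_comp
    (((hasDerivAt_add_smul x ξ).const_mul (u : 𝔸)).mul_const _) (by simp)).unique ?_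
  simp only [exp_units_conj]
  exact ((hasDerivAt_exp_comp (hasDerivAt_add_smul x ξ) (by simp)).const_mul _).mul_const _

end DerivativeOfExp

section DaleckiiKrein

open scoped Matrix.Norms.Operator

variable {n : Type*} [Fintype n] [DecidableEq n]

lemma exp_diagonal (x : n → ℝ) :
    exp (Matrix.diagonal x) = Matrix.diagonal fun i => Real.exp (x i) := by
  simpa [diagConj] using exp_diagConj (U := 1) (by simp) x

/-- The Daleckii–Krein formula for `exp`. Write `ξ` as the sum of its part supported where
`x i = x j`, which commutes with `diagonal x`, and a commutator with `diagonal x`. -/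
lemma fderiv_exp_diagonal_apply (x : n → ℝ) (ξ : Matrix n n ℝ) (i j : n) :
    fderiv ℝ exp (Matrix.diagonal x) ξ i j = dslope Real.exp (x i) (x j) * ξ i j := by
  let ξ₀ : Matrix n n ℝ := Matrix.of fun i j => if x i = x j then ξ i j else 0
  let ζ : Matrix n n ℝ := Matrix.of fun i j => ξ i j / (x j - x i)
  have decomposition : ξ = ξ₀ + (ζ * Matrix.diagonal x - Matrix.diagonal x * ζ) := by
    ext i j
    by_cases h : x i = x j
    · simp [ξ₀, ζ, h]
    · have := sub_ne_zero.mpr (Ne.symm h)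
      simp only [Matrix.add_apply, Matrix.sub_apply, Matrix.mul_diagonal, Matrix.diagonal_mul,
        Matrix.of_apply, ξ₀, ζ, if_neg h]
      field_simp
      ring
  have commute : Commute (Matrix.diagonal x) ξ₀ := by
    ext i j
    by_cases h : x i = x j <;> simp [ξ₀, h, mul_comm]
  have fderiv_eq : fderiv ℝ exp (Matrix.diagonal x) ξ = exp (Matrix.diagonal x) * ξ₀ +
      (ζ * exp (Matrix.diagonal x) - exp (Matrix.diagonal x) * ζ) := by
    conv_lhs => rw [decomposition]
    exact (map_add _ _ _).trans (congrArg₂ (· + ·) (fderiv_exp_apply_of_commute commute)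
      (fderiv_exp_apply_commutator _ _))
  rw [fderiv_eq, exp_diagonal]
  by_cases h : x i = x j
  · simp [ξ₀, ζ, h, dslope_same]
  · simp only [Matrix.add_apply, Matrix.sub_apply, Matrix.mul_diagonal, Matrix.diagonal_mul,
      Matrix.of_apply, ξ₀, ζ, if_neg h, dslope_of_ne _ (Ne.symm h), slope_def_field]
    ring

lemma dslope_exp_pos (x y : ℝ) : 0 < dslope Real.exp x y := by
  by_cases h : y = x
  · simpa [h] using Real.exp_pos x
  · rw [dslope_of_ne _ h]
    exact (Real.exp_strictMono.strictMonoOn Set.univ).slope_pos trivial trivial (Ne.symm h)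

lemma trace_conj_mul_diagConj_mul {U : Matrix n n ℝ} (hU : Uᵀ * U = 1) (A B : Matrix n n ℝ)
    (e : n → ℝ) : (U * A * Uᵀ * (diagConj U e * (U * B * Uᵀ) * diagConj U e)).trace =
      ∑ i, ∑ j, A i j * (e j * B j i * e i) :=
  calc (U * A * Uᵀ * (diagConj U e * (U * B * Uᵀ) * diagConj U e)).trace
      = (U * A * (Uᵀ * U) * Matrix.diagonal e * (Uᵀ * U) * B * (Uᵀ * U) *
          Matrix.diagonal e * Uᵀ).trace := by simp only [diagConj, Matrix.mul_assoc]
    _ = (A * (Matrix.diagonal e * B * Matrix.diagonal e)).trace := by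
        rw [hU, Matrix.trace_mul_comm]
        simp only [mul_one, ← Matrix.mul_assoc, hU, one_mul]
    _ = ∑ i, ∑ j, A i j * (e j * B j i * e i) := by
        simp only [Matrix.trace, Matrix.diag, Matrix.mul_apply (M := A), Matrix.mul_diagonal,
          Matrix.diagonal_mul]

lemma trace_mul_conj_fderiv_exp_pos {X ξ : Matrix n n ℝ} (hX : X.IsSymm) (hξ : ξ.IsSymm)
    (hξ0 : ξ ≠ 0) : 0 < (ξ * (exp (-(1 / 2 : ℝ) • X) * fderiv ℝ exp X ξ *
      exp (-(1 / 2 : ℝ) • X))).trace := by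
  obtain ⟨U, x, hU, rfl⟩ := exists_eq_diagConj hX
  obtain ⟨A, rfl⟩ : ∃ A, ξ = U * A * Uᵀ := ⟨Uᵀ * ξ * U, by
    simp only [← Matrix.mul_assoc, mul_eq_one_comm.mp hU, one_mul]
    rw [Matrix.mul_assoc, mul_eq_one_comm.mp hU, mul_one]⟩
  have hA : A.IsSymm := by
    have h := congrArg (fun M => Uᵀ * M * U) hξ.eq
    simpa only [Matrix.IsSymm, Matrix.transpose_mul, Matrix.transpose_transpose,
      Matrix.mul_assoc, hU, mul_one,
      ← Matrix.mul_assoc Uᵀ U, one_mul] using h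
  obtain ⟨i, j, hij⟩ : ∃ i j, A i j ≠ 0 := by
    by_contra! h
    exact hξ0 (by rw [show A = 0 from Matrix.ext h, mul_zero, zero_mul])
  have conj : fderiv ℝ exp (diagConj U x) (U * A * Uᵀ) =
      U * fderiv ℝ exp (Matrix.diagonal x) A * Uᵀ :=
    fderiv_exp_apply_conj ⟨U, Uᵀ, mul_eq_one_comm.mp hU, hU⟩ _ _
  rw [conj, ← diagConj_smul, exp_diagConj hU]
  set e : n → ℝ := fun i => Real.exp ((-(1 / 2 : ℝ) • x) i)
  have he (i : n) : 0 < e i := Real.exp_pos _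
  have term_eq (i j : n) : A i j * (e j * fderiv ℝ exp (Matrix.diagonal x) A j i * e i) =
      e j * e i * dslope Real.exp (x j) (x i) * A i j ^ 2 := by
    rw [fderiv_exp_diagonal_apply, hA.apply]
    ring
  have coeff_pos (i j : n) : 0 < e j * e i * dslope Real.exp (x j) (x i) :=
    mul_pos (mul_pos (he j) (he i)) (dslope_exp_pos _ _)
  have trace_eq := (trace_conj_mul_diagConj_mul hU A (fderiv ℝ exp (Matrix.diagonal x) A) e).trans
    (Finset.sum_congr rfl fun i _ => Finset.sum_congr rfl fun j _ => term_eq i j)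
  refine trace_eq ▸ Finset.sum_pos' (fun i _ => Finset.sum_nonneg fun j _ =>
    mul_nonneg (coeff_pos i j).le (sq_nonneg _)) ⟨i, Finset.mem_univ i, ?_⟩
  exact Finset.sum_pos' (fun j _ => mul_nonneg (coeff_pos i j).le (sq_nonneg _))
    ⟨j, Finset.mem_univ j, mul_pos (coeff_pos i j) (pow_two_pos_of_ne_zero hij)⟩

end DaleckiiKrein

section LieProductFormula

variable {𝔸 : Type*} [NormedRing 𝔸] [NormedAlgebra ℝ 𝔸] [CompleteSpace 𝔸]

lemma hasStrictFDerivAt_exp_zero_refl :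
    HasStrictFDerivAt exp ((ContinuousLinearEquiv.refl ℝ 𝔸 : 𝔸 ≃L[ℝ] 𝔸) : 𝔸 →L[ℝ] 𝔸) 0 :=
  hasStrictFDerivAt_exp_zero

lemma eventually_eq_of_exp_eq {σ : 𝔸 → 𝔸} (hσ : Tendsto σ (𝓝 0) (𝓝 0)) :
    ∀ᶠ y in 𝓝 (0 : 𝔸), exp (σ y) = exp y → σ y = y := by
  have leftInverse := (hasStrictFDerivAt_exp_zero_refl (𝔸 := 𝔸)).eventually_left_inverse
  filter_upwards [leftInverse, hσ.eventually leftInverse] with y hy hσy h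
  exact hσy.symm.trans ((congrArg _ h).trans hy)

lemma tendsto_exp_inv_smul_mul_exp_inv_smul_pow (x y : 𝔸) :
    Tendsto (fun j : ℕ => (exp ((j : ℝ)⁻¹ • x) * exp ((j : ℝ)⁻¹ • y)) ^ j) atTop
      (𝓝 (exp (x + y))) := by
  let : NormedAlgebra ℚ 𝔸 := .restrictScalars ℚ ℝ 𝔸
  have strict := hasStrictFDerivAt_exp_zero_refl (𝔸 := 𝔸)
  set log : 𝔸 → 𝔸 := strict.localInverse
  set f : ℝ → 𝔸 := fun s => exp (s • x) * exp (s • y)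
  have hf0 : f 0 = exp 0 := by simp [f]
  have hf : HasDerivAt f (x + y) 0 := by
    simpa only [zero_smul, exp_zero, one_mul, mul_one] using!
      (hasDerivAt_exp_smul_zero x).mul (hasDerivAt_exp_smul_zero y)
  have hlogf : HasDerivAt (fun s => log (f s)) (x + y) 0 :=
    (hf0 ▸ strict.to_localInverse.hasFDerivAt).comp_hasDerivAt 0 hf
  have hlog0 : log (f 0) = 0 := hf0 ▸ strict.localInverse_apply_image
  have hinv : Tendsto (fun j : ℕ => (j : ℝ)⁻¹) atTop (𝓝[≠] 0) :=
    tendsto_nhdsWithin_iff.mpr ⟨tendsto_inv_atTop_nhds_zero_nat,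
      (eventually_ne_atTop 0).mono fun j hj => inv_ne_zero (Nat.cast_ne_zero.mpr hj)⟩
  have hlim : Tendsto (fun j : ℕ => j • log (f (j : ℝ)⁻¹)) atTop (𝓝 (x + y)) := by
    simpa only [Function.comp_def, zero_add, hlog0, sub_zero, inv_inv, Nat.cast_smul_eq_nsmul]
      using (hasDerivAt_iff_tendsto_slope_zero.mp hlogf).comp hinv
  have exp_log : ∀ᶠ j : ℕ in atTop, exp (log (f (j : ℝ)⁻¹)) = f (j : ℝ)⁻¹ :=
    (hf0 ▸ hf.continuousAt.tendsto.comp (tendsto_nhds_of_tendsto_nhdsWithin hinv)).eventually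
      strict.eventually_right_inverse
  refine ((exp_continuous.tendsto _).comp hlim).congr' (exp_log.mono fun j hj => ?_)
  rw [Function.comp_apply, exp_nsmul, hj]

variable {S : Submonoid 𝔸}

lemma exp_add_mem (hS : IsClosed (S : Set 𝔸)) {x y : 𝔸} (hx : ∀ t : ℝ, exp (t • x) ∈ S)
    (hy : ∀ t : ℝ, exp (t • y) ∈ S) : exp (x + y) ∈ S :=
  hS.mem_of_tendsto (tendsto_exp_inv_smul_mul_exp_inv_smul_pow x y)
    (.of_forall fun _ => pow_mem (mul_mem (hx _) (hy _)) _)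

lemma exp_zsmul_mem (hinv : ∀ y, exp y ∈ S → exp (-y) ∈ S) {y : 𝔸} (hy : exp y ∈ S) (k : ℤ) :
    exp (k • y) ∈ S := by
  let : NormedAlgebra ℚ 𝔸 := .restrictScalars ℚ ℝ 𝔸
  have exp_nsmul_mem (m : ℕ) : exp (m • y) ∈ S := exp_nsmul (𝔸 := 𝔸) m y ▸ pow_mem hy m
  obtain ⟨m, rfl | rfl⟩ := k.eq_nat_or_neg
  · exact natCast_zsmul y m ▸ exp_nsmul_mem m
  · rw [neg_smul, natCast_zsmul]
    exact hinv _ (exp_nsmul_mem m)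

lemma exp_smul_mem_of_tendsto (hS : IsClosed (S : Set 𝔸))
    (hinv : ∀ y, exp y ∈ S → exp (-y) ∈ S) {y : ℕ → 𝔸} (hy : ∀ j, exp (y j) ∈ S)
    (hlim : Tendsto y atTop (𝓝 0)) {z : 𝔸}
    (hz : Tendsto (fun j => ‖y j‖⁻¹ • y j) atTop (𝓝 z)) (t : ℝ) :
    exp (t • z) ∈ S := by
  let : NormedAlgebra ℚ 𝔸 := .restrictScalars ℚ ℝ 𝔸
  have fract_smul : Tendsto (fun j => Int.fract (t / ‖y j‖) • y j) atTop (𝓝 0) := by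
    refine squeeze_zero_norm (fun j => ?_) (tendsto_norm_zero.comp hlim)
    rw [norm_smul, Real.norm_of_nonneg (Int.fract_nonneg _)]
    exact mul_le_of_le_one_left (norm_nonneg _) (Int.fract_lt_one _).le
  have floor_smul : Tendsto (fun j => ⌊t / ‖y j‖⌋ • y j) atTop (𝓝 (t • z)) := by
    refine (sub_zero (t • z) ▸ (hz.const_smul t).sub fract_smul).congr fun j => ?_
    rw [smul_smul, ← sub_smul, ← div_eq_mul_inv, Int.self_sub_fract, Int.cast_smul_eq_zsmul]
  exact hS.mem_of_tendsto ((exp_continuous.tendsto _).comp floor_smul)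
    (.of_forall fun j => exp_zsmul_mem hinv (hy j) _)

end LieProductFormula

section PolarChart

variable {𝔸 : Type*} [NormedRing 𝔸] [NormedAlgebra ℝ 𝔸] [CompleteSpace 𝔸]

omit [CompleteSpace 𝔸] in
/-- The chart `(x, y) ↦ exp (x / 2) * exp y * exp (x / 2)`, which is onto a neighbourhood of
`exp x` once `x` and `y` are confined to suitable complementary subspaces. -/
noncomputable def polarChart (z : 𝔸 × 𝔸) : 𝔸 :=
  exp ((1 / 2 : ℝ) • z.1) * exp z.2 * exp ((1 / 2 : ℝ) • z.1)

lemma exp_half_mul_exp_half (x : 𝔸) : exp ((1 / 2 : ℝ) • x) * exp ((1 / 2 : ℝ) • x) = exp x := by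
  let : NormedAlgebra ℚ 𝔸 := .restrictScalars ℚ ℝ 𝔸
  rw [← exp_add_of_commute (Commute.refl _), ← add_smul]
  norm_num

lemma exp_neg_half_conj_exp_half_conj (x y : 𝔸) : exp (-(1 / 2 : ℝ) • x) *
    (exp ((1 / 2 : ℝ) • x) * y * exp ((1 / 2 : ℝ) • x)) * exp (-(1 / 2 : ℝ) • x) = y := by
  let : NormedAlgebra ℚ 𝔸 := .restrictScalars ℚ ℝ 𝔸
  have exp_mul_exp {a b : ℝ} (h : a + b = 0) : exp (a • x) * exp (b • x) = 1 := by
    rw [← exp_add_of_commute (((Commute.refl x).smul_left a).smul_right b), ← add_smul, h,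
      zero_smul, exp_zero]
  rw [← mul_assoc, ← mul_assoc, exp_mul_exp (neg_add_cancel _), one_mul, mul_assoc,
    exp_mul_exp (add_neg_cancel _), mul_one]

lemma polarChart_zero_right (x : 𝔸) : polarChart (x, 0) = exp x := by
  rw [polarChart, exp_zero, mul_one, exp_half_mul_exp_half]

lemma contDiff_polarChart : ContDiff ℝ 1 (polarChart : 𝔸 × 𝔸 → 𝔸) :=
  have hfst := contDiff_exp.comp (contDiff_fst.const_smul (1 / 2 : ℝ))
  (hfst.mul (contDiff_exp.comp contDiff_snd)).mul hfst

lemma fderiv_polarChart_apply (x ξ η : 𝔸) :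
    fderiv ℝ polarChart (x, (0 : 𝔸)) (ξ, η) =
      fderiv ℝ exp x ξ + exp ((1 / 2 : ℝ) • x) * η * exp ((1 / 2 : ℝ) • x) := by
  have hasDerivAt_line (v : 𝔸 × 𝔸) : HasDerivAt (fun s : ℝ => polarChart ((x, 0) + s • v))
      (fderiv ℝ polarChart (x, (0 : 𝔸)) v) 0 :=
    (contDiff_polarChart.differentiable one_ne_zero _).hasFDerivAt.comp_hasDerivAt_of_eq 0
      (hasDerivAt_add_smul (x, (0 : 𝔸)) v) (by simp)
  have fst_eq : fderiv ℝ polarChart (x, (0 : 𝔸)) (ξ, 0) = fderiv ℝ exp x ξ := by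
    refine (hasDerivAt_line (ξ, 0)).unique ?_
    simpa only [Prod.smul_mk, smul_zero, Prod.mk_add_mk, add_zero, polarChart_zero_right] using
      hasDerivAt_exp_comp (hasDerivAt_add_smul x ξ) (by simp)
  have snd_eq : fderiv ℝ polarChart (x, (0 : 𝔸)) (0, η) =
      exp ((1 / 2 : ℝ) • x) * η * exp ((1 / 2 : ℝ) • x) := by
    refine (hasDerivAt_line (0, η)).unique ?_
    simpa [polarChart] using ((hasDerivAt_exp_smul_zero η).const_mul _).mul_const _
  rw [← fst_eq, ← snd_eq, ← map_add, Prod.mk_add_mk, add_zero, zero_add]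

end PolarChart

section TraceForm

variable {n : Type*}

variable (n) in
/-- The space of symmetric real matrices. -/
def symmetricMatrices : Submodule ℝ (Matrix n n ℝ) where
  carrier := {X | X.IsSymm}
  zero_mem' := Matrix.isSymm_zero
  add_mem' := Matrix.IsSymm.add
  smul_mem' c _ hX := hX.smul c

variable [Fintype n]

variable (n) in
/-- The bilinear form `(X, Y) ↦ tr (X * Y)`, positive definite on symmetric matrices. -/
def matrixTraceForm : LinearMap.BilinForm ℝ (Matrix n n ℝ) :=
  (LinearMap.mul ℝ (Matrix n n ℝ)).compr₂ (Matrix.traceLinearMap n ℝ ℝ)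

/-- The orthogonal complement of a subspace with respect to the form `tr (X * Y)`. -/
def traceOrthogonal (P : Submodule ℝ (Matrix n n ℝ)) : Submodule ℝ (Matrix n n ℝ) :=
  (matrixTraceForm n).orthogonal P

lemma mem_traceOrthogonal {P : Submodule ℝ (Matrix n n ℝ)} {Y : Matrix n n ℝ} :
    Y ∈ traceOrthogonal P ↔ ∀ X ∈ P, (X * Y).trace = 0 :=
  LinearMap.BilinForm.mem_orthogonal_iff

lemma finrank_le_finrank_add_finrank_traceOrthogonal (P : Submodule ℝ (Matrix n n ℝ)) :
    Module.finrank ℝ (Matrix n n ℝ) ≤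
      Module.finrank ℝ P + Module.finrank ℝ (traceOrthogonal P) := by
  have isRefl : (matrixTraceForm n).IsRefl := fun X Y h => (Matrix.trace_mul_comm Y X).trans h
  exact (LinearMap.BilinForm.finrank_add_finrank_orthogonal isRefl P).symm ▸ Nat.le_add_right _ _

lemma eq_zero_of_isSymm_of_trace_mul_self_nonpos {X : Matrix n n ℝ} (hX : X.IsSymm)
    (h : (X * X).trace ≤ 0) : X = 0 := by
  have hsq : Xᴴ * X = X * X := by rw [Matrix.conjTranspose_eq_transpose_of_trivial, hX.eq]
  have nonneg := (Matrix.posSemidef_conjTranspose_mul_self X).trace_nonneg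
  rw [hsq] at nonneg
  rw [← Matrix.trace_conjTranspose_mul_self_eq_zero_iff, hsq]
  exact le_antisymm h nonneg

end TraceForm

section LocalSurjectivity

open scoped Matrix.Norms.Operator

variable {n : Type*} [Fintype n] [DecidableEq n]

lemma eq_zero_of_fderiv_exp_add_conj_eq_zero {X ξ η : Matrix n n ℝ} (hX : X.IsSymm)
    (hξ : ξ.IsSymm) (hξη : (ξ * η).trace = 0)
    (h : fderiv ℝ exp X ξ + exp ((1 / 2 : ℝ) • X) * η * exp ((1 / 2 : ℝ) • X) = 0) :
    ξ = 0 ∧ η = 0 := by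
  set e := exp ((1 / 2 : ℝ) • X)
  have hconj : exp (-(1 / 2 : ℝ) • X) * fderiv ℝ exp X ξ * exp (-(1 / 2 : ℝ) • X) = -η :=
    calc exp (-(1 / 2 : ℝ) • X) * fderiv ℝ exp X ξ * exp (-(1 / 2 : ℝ) • X)
        = exp (-(1 / 2 : ℝ) • X) * (e * -η * e) * exp (-(1 / 2 : ℝ) • X) := by
          rw [eq_neg_of_add_eq_zero_left h, Matrix.mul_neg e, Matrix.neg_mul (e * η)]
      _ = -η := exp_neg_half_conj_exp_half_conj X (-η)
  have hξ0 : ξ = 0 := by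
    by_contra hξ0
    have hpos := trace_mul_conj_fderiv_exp_pos hX hξ hξ0
    rw [hconj, Matrix.mul_neg, Matrix.trace_neg, hξη, neg_zero] at hpos
    exact hpos.false
  have hfderiv : fderiv ℝ exp X ξ = 0 := (congrArg _ hξ0).trans (map_zero _)
  refine ⟨hξ0, neg_eq_zero.mp ?_⟩
  rw [← hconj, hfderiv, mul_zero, zero_mul]

lemma map_polarChart_nhds {P : Submodule ℝ (Matrix n n ℝ)} (hP : P ≤ symmetricMatrices n)
    (X : P) : map (fun z : P × traceOrthogonal P => polarChart ((z.1 : Matrix n n ℝ), z.2.1))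
      (𝓝 (X, 0)) = 𝓝 (exp (X : Matrix n n ℝ)) := by
  let inclusion : P × traceOrthogonal P →L[ℝ] Matrix n n ℝ × Matrix n n ℝ :=
    P.subtypeL.prodMap (traceOrthogonal P).subtypeL
  let D : P × traceOrthogonal P →L[ℝ] Matrix n n ℝ :=
    (fderiv ℝ polarChart ((X : Matrix n n ℝ), (0 : Matrix n n ℝ))).comp inclusion
  have hstrict : HasStrictFDerivAt (polarChart ∘ inclusion) D (X, 0) :=
    (contDiff_polarChart.contDiffAt.hasStrictFDerivAt one_ne_zero).comp (X, 0)
      inclusion.hasStrictFDerivAt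
  have hinj : Function.Injective (D : P × traceOrthogonal P →ₗ[ℝ] Matrix n n ℝ) := by
    refine (injective_iff_map_eq_zero _).mpr fun ⟨ξ, η⟩ h => ?_
    have := eq_zero_of_fderiv_exp_add_conj_eq_zero (hP X.2) (hP ξ.2)
      (mem_traceOrthogonal.mp η.2 _ ξ.2) ((fderiv_polarChart_apply _ _ _).symm.trans h)
    exact Prod.ext (Subtype.ext this.1) (Subtype.ext this.2)
  have hfinrank : Module.finrank ℝ (P × traceOrthogonal P) = Module.finrank ℝ (Matrix n n ℝ) :=
    (LinearMap.finrank_le_finrank_of_injective hinj).antisymm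
      ((finrank_le_finrank_add_finrank_traceOrthogonal P).trans_eq Module.finrank_prod.symm)
  have hsurj := (LinearMap.injective_iff_surjective_of_finrank_eq_finrank hfinrank).mp hinj
  have hmap := hstrict.map_nhds_eq_of_surj (LinearMap.range_eq_top.mpr hsurj)
  exact hmap.trans (congrArg 𝓝 (polarChart_zero_right _))

end LocalSurjectivity

section PolarDecomposition

variable {n : Type*} [Fintype n]

open scoped Matrix.Norms.Frobenius in
lemma isCompact_setOf_mem_and_trace_mul_self_le {P : Submodule ℝ (Matrix n n ℝ)}
    (hP : P ≤ symmetricMatrices n) (c : ℝ) :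
    IsCompact {X : Matrix n n ℝ | X ∈ P ∧ (X * X).trace ≤ c} := by
  have : ProperSpace (Matrix n n ℝ) := FiniteDimensional.proper ℝ _
  have norm_sq_eq {X : Matrix n n ℝ} (hX : X.IsSymm) : ‖X‖ ^ 2 = (X * X).trace := by
    rw [Matrix.frobenius_norm_def, ← Real.sqrt_eq_rpow, Real.sq_sqrt (by positivity)]
    simp only [Matrix.trace, Matrix.diag, Matrix.mul_apply, Real.rpow_two, Real.norm_eq_abs,
      sq_abs]
    exact Finset.sum_congr rfl fun i _ => Finset.sum_congr rfl fun j _ => by rw [hX.apply, sq]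
  refine (isCompact_closedBall (0 : Matrix n n ℝ) √c).of_isClosed_subset
    (P.closed_of_finiteDimensional.inter
      (isClosed_le (continuous_id.matrix_mul continuous_id).matrix_trace continuous_const)) ?_
  rintro X ⟨hX, hXc⟩
  exact mem_closedBall_zero_iff.mpr (Real.le_sqrt_of_sq_le ((norm_sq_eq (hP hX)).trans_le hXc))

variable [DecidableEq n]

/-- A closed group of real matrices of determinant one that is stable under transposition, encoded
as a submonoid of the matrix ring. -/
structure IsSelfAdjointGroup (S : Submonoid (Matrix n n ℝ)) : Prop where
  isClosed : IsClosed (S : Set (Matrix n n ℝ))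
  inv_mem : ∀ A ∈ S, A⁻¹ ∈ S
  transpose_mem : ∀ A ∈ S, Aᵀ ∈ S
  det_eq_one : ∀ A ∈ S, A.det = 1

namespace IsSelfAdjointGroup

open scoped Matrix.Norms.Operator

variable {S : Submonoid (Matrix n n ℝ)} (hS : IsSelfAdjointGroup S)

/-- The symmetric matrices in the Lie algebra of a self-adjoint group, i.e. its `𝔭`-part. -/
def symmPart : Submodule ℝ (Matrix n n ℝ) where
  carrier := {X | X.IsSymm ∧ ∀ t : ℝ, exp (t • X) ∈ S}
  zero_mem' := ⟨Matrix.isSymm_zero, fun t => by simp⟩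
  add_mem' := fun ⟨hX, hXS⟩ ⟨hY, hYS⟩ => ⟨hX.add hY, fun t => by
    rw [smul_add]
    exact exp_add_mem hS.isClosed (fun s => by rw [smul_smul]; exact hXS _)
      (fun s => by rw [smul_smul]; exact hYS _)⟩
  smul_mem' := fun c _ ⟨hX, hXS⟩ => ⟨hX.smul c, fun t => by rw [smul_smul]; exact hXS _⟩

include hS

lemma symmPart_le_symmetricMatrices : hS.symmPart ≤ symmetricMatrices n := fun _ hX => hX.1

lemma exp_mem {X : Matrix n n ℝ} (hX : X ∈ hS.symmPart) : exp X ∈ S := by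
  simpa only [one_smul] using hX.2 1

lemma exp_neg_mem (X : Matrix n n ℝ) (hX : exp X ∈ S) : exp (-X) ∈ S :=
  Matrix.exp_neg X ▸ hS.inv_mem _ hX

lemma trace_eq_zero {X : Matrix n n ℝ} (hX : X ∈ hS.symmPart) : X.trace = 0 :=
  trace_eq_zero_of_det_exp_eq_one hX.1 (hS.det_eq_one _ (hS.exp_mem hX))

/-- Otherwise a sequence of such `Y` tends to `0`; a limit of the directions `Y / ‖Y‖` lies in
`symmPart`, because integer multiples of `Y` exponentiate into `S`, and is orthogonal to it. -/
lemma eventually_eq_zero_of_exp_mem :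
    ∀ᶠ Y in 𝓝 0, Y ∈ symmetricMatrices n ⊓ traceOrthogonal hS.symmPart → exp Y ∈ S → Y = 0 := by
  have : ProperSpace (Matrix n n ℝ) := FiniteDimensional.proper ℝ _
  set V := symmetricMatrices n ⊓ traceOrthogonal hS.symmPart
  have : FirstCountableTopology (Matrix n n ℝ) :=
    inferInstanceAs (FirstCountableTopology (n → n → ℝ))
  by_contra hcon
  obtain ⟨Y, hY0, hY⟩ := exists_seq_forall_of_frequently (not_eventually.mp hcon)
  push Not at hY
  have mem_sphere (j : ℕ) : ‖Y j‖⁻¹ • Y j ∈ Metric.sphere (0 : Matrix n n ℝ) 1 := by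
    rw [mem_sphere_zero_iff_norm, norm_smul, norm_inv, norm_norm,
      inv_mul_cancel₀ (norm_ne_zero_iff.mpr (hY j).2.2)]
  obtain ⟨Z, hZ, φ, hφ, hlim⟩ := (isCompact_sphere _ _).tendsto_subseq mem_sphere
  have hZV : Z ∈ V := V.closed_of_finiteDimensional.mem_of_tendsto hlim
    (.of_forall fun j => V.smul_mem _ (hY _).1)
  have hZS : Z ∈ hS.symmPart := ⟨hZV.1, exp_smul_mem_of_tendsto hS.isClosed hS.exp_neg_mem
    (fun j => (hY (φ j)).2.1) (hY0.comp hφ.tendsto_atTop) hlim⟩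
  have hZ0 := eq_zero_of_isSymm_of_trace_mul_self_nonpos hZV.1
    (mem_traceOrthogonal.mp hZV.2 Z hZS).le
  exact Metric.ne_of_mem_sphere hZ one_ne_zero hZ0

lemma eventually_mem_exp_image {X : Matrix n n ℝ} (hX : X ∈ hS.symmPart) :
    ∀ᶠ p in 𝓝 (exp X), p.IsSymm → p ∈ S → p ∈ exp '' (hS.symmPart : Set (Matrix n n ℝ)) := by
  rw [← map_polarChart_nhds hS.symmPart_le_symmetricMatrices ⟨X, hX⟩, eventually_map]
  have hsnd : Tendsto (fun z : hS.symmPart × traceOrthogonal hS.symmPart =>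
      (z.2 : Matrix n n ℝ)) (𝓝 (⟨X, hX⟩, 0)) (𝓝 0) :=
    (continuous_subtype_val.comp continuous_snd).tendsto' _ _ rfl
  have htranspose : Tendsto Matrix.transpose (𝓝 (0 : Matrix n n ℝ)) (𝓝 0) :=
    continuous_id.matrix_transpose.tendsto' _ _ Matrix.transpose_zero
  filter_upwards [hsnd.eventually hS.eventually_eq_zero_of_exp_mem,
    hsnd.eventually (eventually_eq_of_exp_eq htranspose)]
  rintro ⟨⟨A, hA⟩, ⟨Y, hY⟩⟩ (eq_zero : Y ∈ _ → _ → Y = 0) (symm_of_exp : exp Yᵀ = exp Y → Yᵀ = Y)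
    (hsymm : (polarChart (A, Y)).IsSymm) (hmem : polarChart (A, Y) ∈ S)
  have hexpY : exp (-(1 / 2 : ℝ) • A) * polarChart (A, Y) * exp (-(1 / 2 : ℝ) • A) = exp Y :=
    exp_neg_half_conj_exp_half_conj A (exp Y)
  have hYsymm : Y.IsSymm := symm_of_exp <| by
    rw [Matrix.exp_transpose, ← hexpY, Matrix.transpose_mul, Matrix.transpose_mul, hsymm.eq,
      ← Matrix.exp_transpose, (hA.1.smul _).eq, Matrix.mul_assoc]
  have hYS : exp Y ∈ S := hexpY ▸ mul_mem (mul_mem (hA.2 _) hmem) (hA.2 _)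
  obtain rfl : Y = 0 := eq_zero ⟨hYsymm, hY⟩ hYS
  exact ⟨A, hA, (polarChart_zero_right A).symm⟩

lemma isClosed_exp_image : IsClosed (exp '' (hS.symmPart : Set (Matrix n n ℝ))) := by
  rw [← closure_subset_iff_isClosed]
  intro p hp
  let f : Matrix n n ℝ → ℝ := fun p => p.trace ^ 2 + p.adjugate.trace ^ 2
  have hf : Continuous f := (continuous_id.matrix_trace.pow 2).add
    (continuous_id.matrix_adjugate.matrix_trace.pow 2)
  have trace_le (X) (hX : X ∈ hS.symmPart) : (X * X).trace ≤ f (exp X) := by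
    simpa only [Matrix.exp_neg, Matrix.inv_def, hS.det_eq_one _ (hS.exp_mem hX),
      Ring.inverse_one, one_smul] using trace_mul_self_le hX.1
  have hcompact := (isCompact_setOf_mem_and_trace_mul_self_le hS.symmPart_le_symmetricMatrices
    (f p + 1)).image (exp_continuous (𝔸 := Matrix n n ℝ))
  have hlt : ∀ᶠ q in 𝓝 p, f q < f p + 1 := hf.continuousAt.eventually_lt_const (lt_add_one _)
  obtain ⟨X, hX, rfl⟩ : p ∈ exp '' {X | X ∈ hS.symmPart ∧ (X * X).trace ≤ f p + 1} := by
    refine hcompact.isClosed.closure_subset (mem_closure_iff_frequently.mpr ?_)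
    refine ((mem_closure_iff_frequently.mp hp).and_eventually hlt).mono ?_
    rintro q ⟨⟨X, hX, rfl⟩, h⟩
    exact ⟨X, ⟨hX, (trace_le X hX).trans h.le⟩, rfl⟩
  exact ⟨X, hX.1, rfl⟩

lemma transpose_mul_self_mem {A : Matrix n n ℝ} (hA : A ∈ S) : Aᵀ * A ∈ S :=
  mul_mem (hS.transpose_mem A hA) hA

lemma transpose_mul_self_mem_exp_image_of_mem_connectedComponent {A : S}
    (hA : A ∈ connectedComponent 1) :
    (A : Matrix n n ℝ)ᵀ * A ∈ exp '' (hS.symmPart : Set (Matrix n n ℝ)) := by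
  let gram : S → Matrix n n ℝ := fun A => (A : Matrix n n ℝ)ᵀ * A
  have hgram : Continuous gram :=
    continuous_subtype_val.matrix_transpose.matrix_mul continuous_subtype_val
  have hclopen : IsClopen (gram ⁻¹' (exp '' (hS.symmPart : Set (Matrix n n ℝ)))) := by
    refine ⟨hS.isClosed_exp_image.preimage hgram, isOpen_iff_mem_nhds.mpr ?_⟩
    rintro B ⟨X, hX, hXB⟩
    have hev := hS.eventually_mem_exp_image hX
    rw [hXB] at hev
    filter_upwards [hgram.continuousAt.eventually hev] with C hC
    exact hC (Matrix.isSymm_transpose_mul_self _) (hS.transpose_mul_self_mem C.2)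
  exact hclopen.connectedComponent_subset ⟨0, hS.symmPart.zero_mem, by simp [gram]⟩ hA

lemma exists_mem_symmPart_exp_eq_transpose_mul_self
    (hcomp : ∀ A : S, ∃ N ≠ 0, A ^ N ∈ connectedComponent 1) {A : Matrix n n ℝ} (hA : A ∈ S) :
    ∃ X ∈ hS.symmPart, exp X = Aᵀ * A := by
  obtain ⟨Y, hY, hYexp⟩ := exists_isSymm_exp_eq_transpose_mul_self
    ((Matrix.isUnit_iff_isUnit_det A).mpr (hS.det_eq_one A hA ▸ isUnit_one))
  obtain ⟨N, hN, hcompN⟩ := hcomp ⟨Aᵀ * A, hS.transpose_mul_self_mem hA⟩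
  obtain ⟨X, hX, hXexp⟩ := hS.transpose_mul_self_mem_exp_image_of_mem_connectedComponent hcompN
  have hYX : (2 * N : ℝ) • Y = X := by
    refine exp_injective_of_isSymm (hY.smul _) hX.1 (.trans ?_ hXexp.symm)
    have hsymm : ((Aᵀ * A) ^ N)ᵀ = (Aᵀ * A) ^ N := by
      rw [Matrix.transpose_pow, Matrix.isSymm_transpose_mul_self]
    calc exp ((2 * N : ℝ) • Y) = exp ((2 * N) • Y) := by
          rw [← Nat.cast_smul_eq_nsmul ℝ, Nat.cast_mul, Nat.cast_two]
      _ = ((Aᵀ * A) ^ N)ᵀ * (Aᵀ * A) ^ N := by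
          rw [Matrix.exp_nsmul, hYexp, two_mul, pow_add, hsymm]
  refine ⟨Y, ?_, hYexp⟩
  have hN2 : (2 * N : ℝ) ≠ 0 := by positivity
  rw [← inv_smul_smul₀ hN2 Y, hYX]
  exact hS.symmPart.smul_mem _ hX

end IsSelfAdjointGroup

end PolarDecomposition

section DimensionInequality

variable {n : Type*} [Fintype n]

/-- A symmetric matrix as a function on unordered pairs of indices. -/
def symmetricMatricesEquiv (n : Type*) : symmetricMatrices n ≃ₗ[ℝ] (Sym2 n → ℝ) where
  toFun X := Sym2.lift ⟨X.1, fun i j => X.2.apply j i⟩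
  invFun f := ⟨Matrix.of fun i j => f s(i, j), Matrix.IsSymm.ext fun i j => by
    rw [Matrix.of_apply, Matrix.of_apply, Sym2.eq_swap]⟩
  map_add' _ _ := funext fun s => s.ind fun _ _ => rfl
  map_smul' _ _ := funext fun s => s.ind fun _ _ => rfl
  left_inv _ := rfl
  right_inv _ := funext fun s => s.ind fun _ _ => rfl

lemma finrank_symmetricMatrices :
    Module.finrank ℝ (symmetricMatrices n) = (Fintype.card n + 1).choose 2 := by
  classical
  rw [(symmetricMatricesEquiv n).finrank_eq, Module.finrank_fintype_fun_eq_card, Sym2.card]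

lemma finrank_symmetricMatrices_le_of_inf_traceOrthogonal_eq_bot
    {P : Submodule ℝ (Matrix n n ℝ)} (h : symmetricMatrices n ⊓ traceOrthogonal P = ⊥) :
    Module.finrank ℝ (symmetricMatrices n) ≤ Module.finrank ℝ P := by
  have hsum := Submodule.finrank_sup_add_finrank_inf_eq (symmetricMatrices n) (traceOrthogonal P)
  rw [h, finrank_bot, add_zero] at hsum
  have hle := Submodule.finrank_le (symmetricMatrices n ⊔ traceOrthogonal P)
  have hP := finrank_le_finrank_add_finrank_traceOrthogonal P
  omega

variable [DecidableEq n] {S T : Set (Matrix n n ℝ)} {P Q : Submodule ℝ (Matrix n n ℝ)}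

lemma trace_mul_eq_zero_of_mem_traceOrthogonal {W X b : Matrix n n ℝ} {α β : ℝ}
    (hb : b = α • 1 + β • W) (hW : W ∈ traceOrthogonal P) (hX : X ∈ P) (hXtr : X.trace = 0) :
    (X * b).trace = 0 := by
  rw [hb, Matrix.mul_add, Matrix.trace_add, Matrix.mul_smul, Matrix.mul_smul, Matrix.trace_smul,
    Matrix.trace_smul, mul_one, hXtr, mem_traceOrthogonal.mp hW X hX, smul_zero, smul_zero,
    add_zero]

/-- For `W ≠ 0` there is a symmetric `a` of determinant one and arbitrarily large norm with
`a * a = α • 1 + β • W`. This `a * a` is orthogonal to `P` and `Q`, so `trace_exp_mul_exp_ge` says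
that no double coset representative `l * a * b` is shorter than `a`. -/
lemma eq_zero_of_bounded_of_mem_traceOrthogonal
    (hP : ∀ X ∈ P, X.IsSymm ∧ X.trace = 0) (hQ : ∀ Z ∈ Q, Z.IsSymm ∧ Z.trace = 0)
    (hS : ∀ l ∈ S, ∃ X ∈ P, exp X = lᵀ * l) (hT : ∀ b ∈ T, ∃ Z ∈ Q, exp Z = b * bᵀ)
    {R : ℝ} (hR : ∀ a : Matrix n n ℝ, a.det = 1 →
      ∃ l ∈ S, ∃ b ∈ T, ((l * a * b)ᵀ * (l * a * b)).trace ≤ R)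
    {W : Matrix n n ℝ} (hW : W.IsSymm) (hWtr : W.trace = 0) (hWP : W ∈ traceOrthogonal P)
    (hWQ : W ∈ traceOrthogonal Q) : W = 0 := by
  by_contra hW0
  obtain ⟨a, α, β, ha, hdet, haa, hlt⟩ := exists_isSymm_det_eq_one_lt_trace hW hW0 hWtr R
  obtain ⟨l, hl, b, hb, hle⟩ := hR a hdet
  obtain ⟨X, hX, hXexp⟩ := hS l hl
  obtain ⟨Z, hZ, hZexp⟩ := hT b hb
  have trace_eq : ((l * a * b)ᵀ * (l * a * b)).trace = (exp Z * a * exp X * a).trace := by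
    rw [hXexp, hZexp, Matrix.transpose_mul, Matrix.transpose_mul, ha.eq, Matrix.mul_assoc bᵀ,
      Matrix.mul_assoc b, Matrix.mul_assoc b, Matrix.mul_assoc b, Matrix.trace_mul_comm b]
    simp only [Matrix.mul_assoc]
  have hge := trace_exp_mul_exp_ge (hQ Z hZ).1 (hP X hX).1 ha
  rw [trace_mul_eq_zero_of_mem_traceOrthogonal haa hWQ hZ (hQ Z hZ).2,
    trace_mul_eq_zero_of_mem_traceOrthogonal haa hWP hX (hP X hX).2] at hge
  linarith

lemma choose_two_le_finrank_add_finrank_of_bounded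
    (hP : ∀ X ∈ P, X.IsSymm ∧ X.trace = 0) (hQ : ∀ Z ∈ Q, Z.IsSymm ∧ Z.trace = 0)
    (hS : ∀ l ∈ S, ∃ X ∈ P, exp X = lᵀ * l) (hT : ∀ b ∈ T, ∃ Z ∈ Q, exp Z = b * bᵀ)
    {R : ℝ} (hR : ∀ a : Matrix n n ℝ, a.det = 1 →
      ∃ l ∈ S, ∃ b ∈ T, ((l * a * b)ᵀ * (l * a * b)).trace ≤ R) :
    (Fintype.card n + 1).choose 2 ≤ Module.finrank ℝ P + Module.finrank ℝ Q + 1 := by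
  have inf_eq_bot : symmetricMatrices n ⊓ traceOrthogonal (P ⊔ Q ⊔ ℝ ∙ 1) = ⊥ := by
    rw [Submodule.eq_bot_iff]
    rintro W ⟨hW, hWorth⟩
    have hWle {V : Submodule ℝ (Matrix n n ℝ)} (hV : V ≤ P ⊔ Q ⊔ ℝ ∙ 1) :
        W ∈ traceOrthogonal V :=
      mem_traceOrthogonal.mpr fun X hX => mem_traceOrthogonal.mp hWorth X (hV hX)
    have hWtr : W.trace = 0 := by
      simpa using mem_traceOrthogonal.mp (hWle le_sup_right) 1 (Submodule.mem_span_singleton_self 1)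
    exact eq_zero_of_bounded_of_mem_traceOrthogonal hP hQ hS hT hR hW hWtr
      (hWle (le_sup_left.trans le_sup_left)) (hWle (le_sup_right.trans le_sup_left))
  calc (Fintype.card n + 1).choose 2
      = Module.finrank ℝ (symmetricMatrices n) := finrank_symmetricMatrices.symm
    _ ≤ Module.finrank ℝ ↥(P ⊔ Q ⊔ ℝ ∙ 1) :=
        finrank_symmetricMatrices_le_of_inf_traceOrthogonal_eq_bot inf_eq_bot
    _ ≤ Module.finrank ℝ ↥(P ⊔ Q) + Module.finrank ℝ ↥(ℝ ∙ (1 : Matrix n n ℝ)) :=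
        Submodule.finrank_add_le_finrank_add_finrank _ _
    _ ≤ Module.finrank ℝ P + Module.finrank ℝ Q + 1 :=
        add_le_add (Submodule.finrank_add_le_finrank_add_finrank _ _)
          ((finrank_span_le_card _).trans_eq (by simp))

end DimensionInequality

section SymplecticExponential

lemma exp_map_prodMk_zero {𝔸 𝔹 ℭ : Type*} [NormedRing 𝔸] [NormedAlgebra ℝ 𝔸] [CompleteSpace 𝔸]
    [NormedRing 𝔹] [NormedAlgebra ℝ 𝔹] [CompleteSpace 𝔹] [NormedRing ℭ] [NormedAlgebra ℝ ℭ]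
    (f : 𝔸 × 𝔹 →+* ℭ) (hf : Continuous f) (a : 𝔸) : exp (f (a, 0)) = f (exp a, 1) := by
  let : NormedAlgebra ℚ 𝔸 := .restrictScalars ℚ ℝ 𝔸
  let : NormedAlgebra ℚ 𝔹 := .restrictScalars ℚ ℝ 𝔹
  let : NormedAlgebra ℚ ℭ := .restrictScalars ℚ ℝ ℭ
  rw [← map_exp f hf]
  congr 1
  ext <;> simp

/-- The symmetric matrices `fromBlocks P Q Q (-P)` of the symplectic Lie algebra, placed in the
upper-left corner. -/
def symplecticSymm (ι κ : Type*) : symmetricMatrices ι × symmetricMatrices ι →ₗ[ℝ]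
    Matrix ((ι ⊕ ι) ⊕ κ) ((ι ⊕ ι) ⊕ κ) ℝ where
  toFun X := Matrix.fromBlocks (Matrix.fromBlocks X.1 X.2 X.2 (-X.1)) 0 0 0
  map_add' X Y := by simp [Matrix.fromBlocks_add, add_comm]
  map_smul' c X := by simp [Matrix.fromBlocks_smul]

lemma isSymm_symplecticSymm {ι κ : Type*} (X : symmetricMatrices ι × symmetricMatrices ι) :
    (symplecticSymm ι κ X).IsSymm :=
  (X.1.2.fromBlocks X.2.2 X.1.2.neg).fromBlocks Matrix.transpose_zero Matrix.isSymm_zero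

lemma trace_symplecticSymm {ι κ : Type*} [Fintype ι] [Fintype κ]
    (X : symmetricMatrices ι × symmetricMatrices ι) : (symplecticSymm ι κ X).trace = 0 := by
  simp [symplecticSymm, Matrix.trace]

lemma finrank_range_symplecticSymm_le {ι κ : Type*} [Fintype ι] :
    Module.finrank ℝ (symplecticSymm ι κ).range ≤ 2 * (Fintype.card ι + 1).choose 2 := by
  refine (LinearMap.finrank_range_le _).trans_eq ?_
  rw [Module.finrank_prod, finrank_symmetricMatrices, two_mul]

variable {ι κ : Type*} [Fintype ι] [DecidableEq ι] [Fintype κ] [DecidableEq κ]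

lemma exp_fromBlocks_zero (A : Matrix ι ι ℝ) :
    exp (Matrix.fromBlocks A 0 0 (0 : Matrix κ κ ℝ)) = Matrix.fromBlocks (exp A) 0 0 1 := by
  open scoped Matrix.Norms.Operator in
  let f : Matrix ι ι ℝ × Matrix κ κ ℝ →+* Matrix (ι ⊕ κ) (ι ⊕ κ) ℝ :=
    { toFun := fun x => Matrix.fromBlocks x.1 0 0 x.2
      map_one' := Matrix.fromBlocks_one
      map_zero' := Matrix.fromBlocks_zero
      map_mul' := fun x y => by simp [Matrix.fromBlocks_multiply]
      map_add' := fun x y => by simp [Matrix.fromBlocks_add] }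
  exact exp_map_prodMk_zero f
    (continuous_fst.matrix_fromBlocks continuous_const continuous_const continuous_snd) A

lemma exp_mem_symplecticGroup_iff {Z : Matrix (ι ⊕ ι) (ι ⊕ ι) ℝ} (hZ : Z.IsSymm) :
    exp Z ∈ Matrix.symplecticGroup ι ℝ ↔ Z * Matrix.J ι ℝ = -(Matrix.J ι ℝ * Z) := by
  have hJ : IsUnit (Matrix.J ι ℝ) := (Matrix.isUnit_iff_isUnit_det _).mpr (Matrix.isUnit_det_J ι ℝ)
  have conj_eq_iff (A B : Matrix (ι ⊕ ι) (ι ⊕ ι) ℝ) :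
      Matrix.J ι ℝ * A * (Matrix.J ι ℝ)⁻¹ = B ↔ B * Matrix.J ι ℝ = Matrix.J ι ℝ * A := by
    rw [← hJ.mul_left_inj, Matrix.nonsing_inv_mul_cancel_right _ _ (Matrix.isUnit_det_J ι ℝ),
      eq_comm]
  have hconj : (Matrix.J ι ℝ * -Z * (Matrix.J ι ℝ)⁻¹).IsSymm := by
    simp [Matrix.IsSymm, Matrix.J_inv, Matrix.J_transpose, hZ.eq, Matrix.mul_assoc]
  have exp_neg_mul : exp (-Z) * exp Z = 1 := by
    rw [← Matrix.exp_add_of_commute _ _ (Commute.neg_left (.refl Z)), neg_add_cancel, exp_zero]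
  calc exp Z ∈ Matrix.symplecticGroup ι ℝ
      ↔ exp Z * Matrix.J ι ℝ * exp Z = Matrix.J ι ℝ := by
        rw [SymplecticGroup.mem_iff, ← Matrix.exp_transpose, hZ.eq]
    _ ↔ exp Z * Matrix.J ι ℝ = Matrix.J ι ℝ * exp (-Z) := by
        rw [← (Matrix.isUnit_exp Z).mul_left_inj (b := exp Z * Matrix.J ι ℝ),
          Matrix.mul_assoc (Matrix.J ι ℝ), exp_neg_mul, mul_one]
    _ ↔ exp (Matrix.J ι ℝ * -Z * (Matrix.J ι ℝ)⁻¹) = exp Z := by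
        rw [Matrix.exp_conj _ _ hJ, conj_eq_iff]
    _ ↔ Matrix.J ι ℝ * -Z * (Matrix.J ι ℝ)⁻¹ = Z :=
        ⟨exp_injective_of_isSymm hconj hZ, congrArg exp⟩
    _ ↔ Z * Matrix.J ι ℝ = -(Matrix.J ι ℝ * Z) := by rw [conj_eq_iff, Matrix.mul_neg]

lemma fromBlocks_mul_J_eq_neg_iff {P Q Q' P' : Matrix ι ι ℝ} :
    Matrix.fromBlocks P Q Q' P' * Matrix.J ι ℝ = -(Matrix.J ι ℝ * Matrix.fromBlocks P Q Q' P') ↔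
      Q' = Q ∧ P' = -P := by
  simp only [Matrix.J, Matrix.fromBlocks_multiply, Matrix.fromBlocks_neg, Matrix.fromBlocks_inj]
  simp only [mul_zero, mul_one, mul_neg, zero_add, add_zero, zero_mul, neg_mul, one_mul, neg_neg]
  grind

/-- The symplectic group of `ι ⊕ ι`, embedded in the upper-left corner of the matrices indexed by
`(ι ⊕ ι) ⊕ κ`. -/
def cornerSymplectic (ι κ : Type*) [Fintype ι] [DecidableEq ι] [DecidableEq κ] :
    Set (Matrix ((ι ⊕ ι) ⊕ κ) ((ι ⊕ ι) ⊕ κ) ℝ) :=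
  (Matrix.fromBlocks · 0 0 1) '' (Matrix.symplecticGroup ι ℝ)

lemma exists_exp_eq_mul_transpose_self_of_mem_cornerSymplectic
    {b : Matrix ((ι ⊕ ι) ⊕ κ) ((ι ⊕ ι) ⊕ κ) ℝ} (hb : b ∈ cornerSymplectic ι κ) :
    ∃ Z ∈ (symplecticSymm ι κ).range, exp Z = b * bᵀ := by
  obtain ⟨B, hB, rfl⟩ := hb
  have hB' : Bᵀ ∈ Matrix.symplecticGroup ι ℝ := SymplecticGroup.transpose_mem hB
  obtain ⟨Z, hZ, hexp⟩ := exists_isSymm_exp_eq_transpose_mul_self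
    ((Matrix.isUnit_iff_isUnit_det _).mpr (SymplecticGroup.symplectic_det hB'))
  rw [Matrix.transpose_transpose] at hexp
  have hmem : exp Z ∈ Matrix.symplecticGroup ι ℝ :=
    hexp ▸ mul_mem hB hB'
  have hcomm := (exp_mem_symplecticGroup_iff hZ).mp hmem
  obtain ⟨P, Q, Q', P', rfl⟩ : ∃ P Q Q' P', Z = Matrix.fromBlocks P Q Q' P' :=
    ⟨_, _, _, _, (Matrix.fromBlocks_toBlocks Z).symm⟩
  obtain ⟨hP, -, hQ, -⟩ := Matrix.isSymm_fromBlocks_iff.mp hZ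
  obtain ⟨rfl, rfl⟩ := fromBlocks_mul_J_eq_neg_iff.mp hcomm
  refine ⟨_, ⟨(⟨P, hP⟩, ⟨Q', hQ⟩), rfl⟩, (exp_fromBlocks_zero _).trans ?_⟩
  rw [hexp, Matrix.fromBlocks_transpose, Matrix.fromBlocks_multiply]
  simp

end SymplecticExponential

section SingularValues

variable {ι κ : Type*} [Fintype ι] [DecidableEq ι] [Fintype κ] [DecidableEq κ]

omit [DecidableEq ι] [DecidableEq κ] in
lemma exists_orthonormalBasis_forall_eq_norm_smul {E : Type*} [NormedAddCommGroup E]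
    [InnerProductSpace ℝ E] [FiniteDimensional ℝ E]
    (hcard : Module.finrank ℝ E = Fintype.card (ι ⊕ κ)) {c : ι → E}
    (hc : Pairwise fun i j => inner ℝ (c i) (c j) = 0) :
    ∃ b : OrthonormalBasis (ι ⊕ κ) ℝ E, ∀ i, c i = ‖c i‖ • b (.inl i) := by
  let v : ι ⊕ κ → E := Sum.elim (fun i => ‖c i‖⁻¹ • c i) 0
  have orthonormal : Orthonormal ℝ ((Sum.inl '' {i | c i ≠ 0}).domRestrict v) := by
    constructor
    · rintro ⟨-, i, hi, rfl⟩
      exact norm_smul_inv_norm hi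
    · rintro ⟨-, i, hi, rfl⟩ ⟨-, j, hj, rfl⟩ hij
      have hij' : i ≠ j := fun h => hij (Subtype.ext (congrArg Sum.inl h))
      simp [v, real_inner_smul_left, real_inner_smul_right, hc hij']
  obtain ⟨b, hb⟩ := orthonormal.exists_orthonormalBasis_extension_of_card_eq hcard
  refine ⟨b, fun i => ?_⟩
  by_cases hi : c i = 0
  · rw [hi, norm_zero, zero_smul]
  · rw [hb (.inl i) ⟨i, hi, rfl⟩]
    exact (smul_inv_smul₀ (norm_ne_zero_iff.mpr hi) (c i)).symm

lemma exists_eq_mul_fromRows_diagonal {C : Matrix (ι ⊕ κ) ι ℝ} (hC : (Cᵀ * C).IsDiag) :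
    ∃ (U : Matrix (ι ⊕ κ) (ι ⊕ κ) ℝ) (σ : ι → ℝ),
      Uᵀ * U = 1 ∧ C = U * Matrix.fromRows (Matrix.diagonal σ) (0 : Matrix κ ι ℝ) := by
  let c (i : ι) : EuclideanSpace ℝ (ι ⊕ κ) := WithLp.toLp 2 (C.col i)
  have pairwise_orthogonal : Pairwise fun i j => inner ℝ (c i) (c j) = 0 := fun i j hij => by
    simpa [c, PiLp.inner_apply, Matrix.mul_apply, mul_comm] using hC hij
  obtain ⟨b, hb⟩ := exists_orthonormalBasis_forall_eq_norm_smul (κ := κ) (by simp)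
    pairwise_orthogonal
  refine ⟨Matrix.of fun p q => b q p, fun i => ‖c i‖, ?_, ?_⟩
  · ext p q
    rw [Matrix.one_apply, ← orthonormal_iff_ite.mp b.orthonormal p q]
    simp [PiLp.inner_apply, Matrix.mul_apply, mul_comm]
  · ext p i
    have hcol : C p i = ‖c i‖ * b (.inl i) p :=
      congrArg (fun v : EuclideanSpace ℝ (ι ⊕ κ) => v p) (hb i)
    rw [hcol]
    simp [Matrix.mul_apply, Matrix.diagonal_apply, mul_comm]

lemma exists_singularValueDecomposition (B : Matrix (ι ⊕ κ) ι ℝ) :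
    ∃ (U : Matrix (ι ⊕ κ) (ι ⊕ κ) ℝ) (V : Matrix ι ι ℝ) (σ : ι → ℝ), Uᵀ * U = 1 ∧ Vᵀ * V = 1 ∧
      B = U * Matrix.fromRows (Matrix.diagonal σ) (0 : Matrix κ ι ℝ) * Vᵀ := by
  obtain ⟨V, x, hV, hBV⟩ := exists_eq_diagConj (X := Bᵀ * B) (by simp [Matrix.IsSymm])
  have gram_eq : (B * V)ᵀ * (B * V) = Matrix.diagonal x :=
    calc (B * V)ᵀ * (B * V) = Vᵀ * (Bᵀ * B) * V := by
          simp only [Matrix.transpose_mul, Matrix.mul_assoc]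
      _ = Vᵀ * V * Matrix.diagonal x * (Vᵀ * V) := by
          rw [hBV, diagConj]
          simp only [Matrix.mul_assoc]
      _ = Matrix.diagonal x := by rw [hV, one_mul, mul_one]
  obtain ⟨U, σ, hU, hUσ⟩ := exists_eq_mul_fromRows_diagonal (gram_eq ▸ Matrix.isDiag_diagonal x)
  refine ⟨U, V, σ, hU, hV, ?_⟩
  rw [← hUσ, Matrix.mul_assoc, mul_eq_one_comm.mp hV, Matrix.mul_one]

/-- The matrix with blocks `0, diag(σ), diag(σ), 0`, the standard element of a maximal split abelian
subspace of the symplectic Lie algebra. -/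
def offDiagonal (σ : ι → ℝ) : Matrix (ι ⊕ ι) (ι ⊕ ι) ℝ :=
  Matrix.fromBlocks 0 (Matrix.diagonal σ) (Matrix.diagonal σ) 0

omit [Fintype ι] in
lemma isSymm_offDiagonal (σ : ι → ℝ) : (offDiagonal σ).IsSymm := by
  simp [Matrix.IsSymm, offDiagonal, Matrix.fromBlocks_transpose]

lemma exp_smul_offDiagonal_mem_symplecticGroup (σ : ι → ℝ) (t : ℝ) :
    exp (t • offDiagonal σ) ∈ Matrix.symplecticGroup ι ℝ := by
  rw [exp_mem_symplecticGroup_iff ((isSymm_offDiagonal σ).smul t), offDiagonal,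
    Matrix.fromBlocks_smul, fromBlocks_mul_J_eq_neg_iff]
  simp

omit [Fintype ι] [Fintype κ] [DecidableEq κ] in
lemma fromBlocks_offDiagonal_eq_submatrix (σ : ι → ℝ) :
    Matrix.fromBlocks (offDiagonal σ) 0 0 (0 : Matrix κ κ ℝ) =
      (Matrix.fromBlocks 0 (Matrix.fromRows (Matrix.diagonal σ) (0 : Matrix κ ι ℝ))ᵀ
        (Matrix.fromRows (Matrix.diagonal σ) (0 : Matrix κ ι ℝ)) 0).submatrix
          (Equiv.sumAssoc ι ι κ) (Equiv.sumAssoc ι ι κ) := by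
  rw [offDiagonal, Matrix.transpose_fromRows, Matrix.diagonal_transpose]
  ext ((i | i) | i) ((j | j) | j) <;> rfl

lemma exists_fromBlocks_eq_mul_mul_transpose (B : Matrix (ι ⊕ κ) ι ℝ) :
    ∃ (Q : Matrix ((ι ⊕ ι) ⊕ κ) ((ι ⊕ ι) ⊕ κ) ℝ) (σ : ι → ℝ), Qᵀ * Q = 1 ∧
      (Matrix.fromBlocks 0 Bᵀ B 0).submatrix (Equiv.sumAssoc ι ι κ) (Equiv.sumAssoc ι ι κ) =
        Q * Matrix.fromBlocks (offDiagonal σ) 0 0 0 * Qᵀ := by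
  obtain ⟨U, V, σ, hU, hV, rfl⟩ := exists_singularValueDecomposition B
  refine ⟨(Matrix.fromBlocks V 0 0 U).submatrix (Equiv.sumAssoc ι ι κ) (Equiv.sumAssoc ι ι κ), σ,
    ?_, ?_⟩
  · rw [Matrix.transpose_submatrix, Matrix.submatrix_mul_equiv, Matrix.fromBlocks_transpose,
      Matrix.fromBlocks_multiply]
    simp [hU, hV]
  · rw [fromBlocks_offDiagonal_eq_submatrix, Matrix.transpose_submatrix,
      Matrix.submatrix_mul_equiv, Matrix.submatrix_mul_equiv, Matrix.fromBlocks_transpose,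
      Matrix.fromBlocks_multiply, Matrix.fromBlocks_multiply]
    simp only [Matrix.mul_zero, Matrix.zero_mul, add_zero, zero_add, Matrix.transpose_zero,
      Matrix.transpose_mul, Matrix.transpose_transpose, Matrix.mul_assoc]

lemma exists_det_eq_one_of_eq_mul_fromBlocks_mul_transpose [Nonempty κ]
    {Q : Matrix (ι ⊕ κ) (ι ⊕ κ) ℝ} (hQ : Qᵀ * Q = 1) (D : Matrix ι ι ℝ) :
    ∃ q : Matrix (ι ⊕ κ) (ι ⊕ κ) ℝ, qᵀ * q = 1 ∧ q.det = 1 ∧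
      q * Matrix.fromBlocks D 0 0 0 * qᵀ = Q * Matrix.fromBlocks D 0 0 0 * Qᵀ := by
  obtain ⟨k⟩ := ‹Nonempty κ›
  have det_mul_det : Q.det * Q.det = 1 := by
    simpa [Matrix.det_mul] using congrArg Matrix.det hQ
  let δ : Matrix κ κ ℝ := Matrix.diagonal (Function.update 1 k Q.det)
  have δ_mul_δ : δ * δ = 1 := by
    rw [Matrix.diagonal_mul_diagonal, ← Matrix.diagonal_one]
    congr 1
    ext i
    obtain rfl | hi := eq_or_ne i k <;> simp [*]
  have det_δ : δ.det = Q.det := by simp [δ, Matrix.det_diagonal, Finset.prod_update_of_mem]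
  have transpose_eq : (Matrix.fromBlocks 1 0 0 δ : Matrix (ι ⊕ κ) (ι ⊕ κ) ℝ)ᵀ =
      Matrix.fromBlocks 1 0 0 δ := by
    simp [Matrix.fromBlocks_transpose, δ]
  refine ⟨Q * Matrix.fromBlocks 1 0 0 δ, ?_, ?_, ?_⟩
  · rw [Matrix.transpose_mul, Matrix.mul_assoc, ← Matrix.mul_assoc Qᵀ, hQ, one_mul, transpose_eq,
      Matrix.fromBlocks_multiply]
    simp [δ_mul_δ]
  · rw [Matrix.det_mul, Matrix.det_fromBlocks_zero₂₁, Matrix.det_one, one_mul, det_δ, det_mul_det]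
  · rw [Matrix.transpose_mul, transpose_eq, ← Matrix.mul_assoc, Matrix.mul_assoc Q,
      Matrix.mul_assoc Q, Matrix.fromBlocks_multiply, Matrix.fromBlocks_multiply]
    simp

end SingularValues

section DimensionBounds

/-- The restriction of a symmetric matrix to a set of indices, parametrised by `f`. -/
def symmSubmatrix {m n : Type*} (f : m → n) : symmetricMatrices n →ₗ[ℝ] symmetricMatrices m where
  toFun X := ⟨X.1.submatrix f f, X.2.submatrix f⟩
  map_add' _ _ := rfl
  map_smul' _ _ := rfl

/-- The restrictions of a symmetric matrix to the first copy of `ι` and to the complementary set of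
indices, i.e. its two diagonal blocks for the decomposition `ι ⊕ (ι ⊕ κ)`. -/
def diagonalBlocks (ι κ : Type*) : symmetricMatrices ((ι ⊕ ι) ⊕ κ) →ₗ[ℝ]
    symmetricMatrices ι × symmetricMatrices (ι ⊕ κ) :=
  (symmSubmatrix (Sum.inl ∘ Sum.inl)).prod (symmSubmatrix ((Equiv.sumAssoc ι ι κ).symm ∘ Sum.inr))

lemma exists_eq_submatrix_fromBlocks {ι κ : Type*} {X : symmetricMatrices ((ι ⊕ ι) ⊕ κ)}
    (hX : diagonalBlocks ι κ X = 0) : ∃ B : Matrix (ι ⊕ κ) ι ℝ, X.1 =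
      (Matrix.fromBlocks 0 Bᵀ B 0).submatrix (Equiv.sumAssoc ι ι κ) (Equiv.sumAssoc ι ι κ) := by
  refine ⟨X.1.submatrix ((Equiv.sumAssoc ι ι κ).symm ∘ Sum.inr) (Sum.inl ∘ Sum.inl),
    (Matrix.reindex (Equiv.sumAssoc ι ι κ) (Equiv.sumAssoc ι ι κ)).eq_symm_apply.mpr ?_⟩
  have first_eq (i j : ι) : X.1 (.inl (.inl i)) (.inl (.inl j)) = 0 :=
    congrFun₂ (congrArg (fun Y => Y.1.1) hX) i j
  have second_eq (p q : ι ⊕ κ) : X.1 ((Equiv.sumAssoc ι ι κ).symm (.inr p))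
      ((Equiv.sumAssoc ι ι κ).symm (.inr q)) = 0 :=
    congrFun₂ (congrArg (fun Y => Y.2.1) hX) p q
  ext (i | p) (j | q)
  · exact first_eq i j
  · exact X.2.apply _ _
  · rfl
  · exact second_eq p q

variable {ι κ : Type*} [Fintype ι] [DecidableEq ι] [Fintype κ] [DecidableEq κ]

lemma exists_forall_conj_exp_smul_mem_cornerSymplectic [Nonempty κ]
    {X : symmetricMatrices ((ι ⊕ ι) ⊕ κ)} (hX : diagonalBlocks ι κ X = 0) :
    ∃ q : Matrix ((ι ⊕ ι) ⊕ κ) ((ι ⊕ ι) ⊕ κ) ℝ, q.det = 1 ∧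
      ∀ t : ℝ, q⁻¹ * exp (t • X.1) * q ∈ cornerSymplectic ι κ := by
  obtain ⟨B, hB⟩ := exists_eq_submatrix_fromBlocks hX
  obtain ⟨Q, σ, hQ, hBQ⟩ := exists_fromBlocks_eq_mul_mul_transpose B
  obtain ⟨q, hq, hdet, hqQ⟩ :=
    exists_det_eq_one_of_eq_mul_fromBlocks_mul_transpose hQ (offDiagonal σ)
  have hunit : IsUnit q.det := hdet ▸ isUnit_one
  refine ⟨q, hdet, fun t => ⟨_, exp_smul_offDiagonal_mem_symplecticGroup σ t, ?_⟩⟩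
  have smul_eq : t • X.1 = q * Matrix.fromBlocks (t • offDiagonal σ) 0 0 0 * q⁻¹ := by
    rw [hB, hBQ, ← hqQ, Matrix.inv_eq_left_inv hq, ← Matrix.smul_mul, ← Matrix.mul_smul,
      Matrix.fromBlocks_smul, smul_zero, smul_zero, smul_zero]
  rw [smul_eq, Matrix.exp_conj _ _ ((Matrix.isUnit_iff_isUnit_det q).mpr hunit),
    exp_fromBlocks_zero, Matrix.mul_assoc q, Matrix.nonsing_inv_mul_cancel_left _ _ hunit,
    Matrix.nonsing_inv_mul_cancel_right _ _ hunit]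

lemma finrank_le_of_forall_conj_exp_smul_mem_cornerSymplectic [Nonempty κ]
    {P : Submodule ℝ (Matrix ((ι ⊕ ι) ⊕ κ) ((ι ⊕ ι) ⊕ κ) ℝ)} (hP : P ≤ symmetricMatrices _)
    (hproper : ∀ X ∈ P, ∀ q : Matrix ((ι ⊕ ι) ⊕ κ) ((ι ⊕ ι) ⊕ κ) ℝ, q.det = 1 →
      (∀ t : ℝ, q⁻¹ * exp (t • X) * q ∈ cornerSymplectic ι κ) → X = 0) :
    Module.finrank ℝ P ≤
      (Fintype.card ι + 1).choose 2 + (Fintype.card ι + Fintype.card κ + 1).choose 2 := by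
  have injective : Function.Injective (diagonalBlocks ι κ ∘ₗ Submodule.inclusion hP) := by
    rw [← LinearMap.ker_eq_bot, LinearMap.ker_eq_bot']
    intro X hX
    obtain ⟨q, hdet, hq⟩ := exists_forall_conj_exp_smul_mem_cornerSymplectic hX
    exact Subtype.ext (hproper X X.2 q hdet hq)
  refine (LinearMap.finrank_le_finrank_of_injective injective).trans_eq ?_
  rw [Module.finrank_prod, finrank_symmetricMatrices, finrank_symmetricMatrices,
    Fintype.card_sum]

lemma eq_zero_of_isSymm_of_forall_exp_smul_mem {n : Type*} [Fintype n] [DecidableEq n]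
    {K : Set (Matrix n n ℝ)} (hK : IsCompact K) {X : Matrix n n ℝ} (hX : X.IsSymm)
    (hmem : ∀ t : ℝ, exp (t • X) ∈ K) : X = 0 := by
  obtain ⟨C, hC⟩ := hK.bddAbove_image (f := fun A => A.trace ^ 2) (by fun_prop)
  have trace_sq_le (t : ℝ) : (exp (t • X)).trace ^ 2 ≤ C := hC ⟨_, hmem t, rfl⟩
  have sq_mul_trace_le (t : ℝ) : t ^ 2 * (X * X).trace ≤ C + C :=
    calc t ^ 2 * (X * X).trace = ((t • X) * (t • X)).trace := by
          rw [Matrix.smul_mul, Matrix.mul_smul, smul_smul, Matrix.trace_smul, smul_eq_mul, sq]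
      _ ≤ (exp (t • X)).trace ^ 2 + (exp (-(t • X))).trace ^ 2 := trace_mul_self_le (hX.smul t)
      _ ≤ C + C := add_le_add (trace_sq_le t) (neg_smul t X ▸ trace_sq_le (-t))
  refine eq_zero_of_isSymm_of_trace_mul_self_nonpos hX (not_lt.mp fun hpos => ?_)
  obtain ⟨N, hN⟩ := exists_nat_gt ((C + C) / (X * X).trace)
  have := sq_mul_trace_le √N
  rw [Real.sq_sqrt N.cast_nonneg] at this
  exact this.not_gt ((div_lt_iff₀ hpos).mp hN)

lemma mul_le_add_one_of_choose_two_le {a b : ℕ}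
    (h : (a + a + b + 1).choose 2 ≤
      (a + 1).choose 2 + (a + b + 1).choose 2 + 2 * (a + 1).choose 2 + 1) : a * b ≤ a + 1 := by
  have choose_two_mul_two (x : ℕ) : (x + 1).choose 2 * 2 = (x + 1) * x := by
    rw [Nat.choose_two_right, Nat.add_sub_cancel]
    exact Nat.div_mul_cancel (mul_comm x (x + 1) ▸ Nat.even_mul_succ_self x).two_dvd
  have := choose_two_mul_two a
  have := choose_two_mul_two (a + b)
  have := choose_two_mul_two (a + a + b)
  nlinarith

lemma IsSelfAdjointGroup.card_mul_card_le_card_add_one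
    {S : Submonoid (Matrix ((ι ⊕ ι) ⊕ κ) ((ι ⊕ ι) ⊕ κ) ℝ)} (hS : IsSelfAdjointGroup S)
    (hcomp : ∀ A : S, ∃ N ≠ 0, A ^ N ∈ connectedComponent 1)
    (hproper : ∀ q : Matrix ((ι ⊕ ι) ⊕ κ) ((ι ⊕ ι) ⊕ κ) ℝ, q.det = 1 →
      IsCompact {A | A ∈ S ∧ q⁻¹ * A * q ∈ cornerSymplectic ι κ})
    {R : ℝ} (hR : ∀ a : Matrix ((ι ⊕ ι) ⊕ κ) ((ι ⊕ ι) ⊕ κ) ℝ, a.det = 1 →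
      ∃ l ∈ S, ∃ b ∈ cornerSymplectic ι κ, ((l * a * b)ᵀ * (l * a * b)).trace ≤ R) :
    Fintype.card ι * Fintype.card κ ≤ Fintype.card ι + 1 := by
  cases isEmpty_or_nonempty κ
  · simp
  have finrank_symmPart_le :=
    finrank_le_of_forall_conj_exp_smul_mem_cornerSymplectic hS.symmPart_le_symmetricMatrices
      fun X hX q hdet hq => eq_zero_of_isSymm_of_forall_exp_smul_mem (hproper q hdet) hX.1
        fun t => ⟨hX.2 t, hq t⟩
  have choose_two_le := choose_two_le_finrank_add_finrank_of_bounded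
    (P := hS.symmPart) (Q := (symplecticSymm ι κ).range)
    (fun X hX => ⟨hX.1, hS.trace_eq_zero hX⟩)
    (fun _ ⟨X, hX⟩ => hX ▸ ⟨isSymm_symplecticSymm X, trace_symplecticSymm X⟩)
    (fun _ hl => hS.exists_mem_symmPart_exp_eq_transpose_mul_self hcomp hl)
    (fun _ hb => exists_exp_eq_mul_transpose_self_of_mem_cornerSymplectic hb) hR
  have finrank_range_le := finrank_range_symplecticSymm_le (ι := ι) (κ := κ)
  rw [Fintype.card_sum, Fintype.card_sum] at choose_two_le
  exact mul_le_add_one_of_choose_two_le (by omega)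

end DimensionBounds

section TopologicalGroup

variable {G : Type*} [Group G] [TopologicalSpace G]

lemma exists_pow_mem_connectedComponent_one [ContinuousMul G] [Finite (ConnectedComponents G)]
    (x : G) : ∃ N ≠ 0, x ^ N ∈ connectedComponent 1 := by
  obtain ⟨i, j, hij, h⟩ := Finite.exists_ne_map_eq_of_infinite
    fun i : ℕ => (ConnectedComponents.mk (x ^ i) : ConnectedComponents G)
  wlog hlt : i < j generalizing i j
  · exact this j i hij.symm h.symm (by omega)
  refine ⟨j - i, by omega, ?_⟩
  have pow_sub_eq : (x ^ i)⁻¹ * x ^ j = x ^ (j - i) := by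
    rw [inv_mul_eq_iff_eq_mul, ← pow_add, Nat.add_sub_cancel' hlt.le]
  have mem_image := (continuous_const_mul (x ^ i)⁻¹).image_connectedComponent_subset (x ^ i)
    (Set.mem_image_of_mem _ (ConnectedComponents.coe_eq_coe'.mp h.symm))
  rwa [inv_mul_cancel, pow_sub_eq] at mem_image

variable {L H : Subgroup G}

lemma isCompact_setOf_conj_mem
    (hproper : ∀ C : Set (G ⧸ H), IsCompact C →
      IsCompact {l : L | ((fun x => l • x) '' C ∩ C).Nonempty}) (x : G) :
    IsCompact {l : L | x⁻¹ * l * x ∈ H} := by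
  have conj_mem_iff (l : L) :
      x⁻¹ * l * x ∈ H ↔ ((fun y => l • y) '' {(x : G ⧸ H)} ∩ {(x : G ⧸ H)}).Nonempty := by
    rw [Set.image_singleton, Set.singleton_inter_nonempty, Set.mem_singleton_iff, eq_comm,
      mul_assoc]
    exact QuotientGroup.eq.symm
  simpa only [conj_mem_iff] using hproper {(x : G ⧸ H)} isCompact_singleton

lemma exists_forall_exists_mul_mul_le [ContinuousMul G]
    [CompactSpace (Quotient (MulAction.orbitRel L (G ⧸ H)))] {F : G → ℝ} (hF : Continuous F) :
    ∃ R, ∀ a : G, ∃ l ∈ L, ∃ h ∈ H, F (l * a * h) ≤ R := by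
  have : ContinuousConstSMul L (G ⧸ H) := ⟨fun l => continuous_const_smul (l : G)⟩
  let π : G → Quotient (MulAction.orbitRel L (G ⧸ H)) := fun c => Quotient.mk _ (c : G ⧸ H)
  have isOpenMap_π : IsOpenMap π :=
    (isOpenMap_quotient_mk'_mul (Γ := L) (T := G ⧸ H)).comp QuotientGroup.isOpenMap_coe
  have surjective_π : Function.Surjective π :=
    Quotient.mk_surjective.comp QuotientGroup.mk_surjective
  obtain ⟨R, hR⟩ := isCompact_univ.elim_directed_cover (fun r : ℝ => π '' {c | F c < r})
    (fun r => isOpenMap_π _ (isOpen_lt hF continuous_const))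
    (fun z _ => by
      obtain ⟨c, rfl⟩ := surjective_π z
      exact Set.mem_iUnion.mpr ⟨F c + 1, c, lt_add_one (F c), rfl⟩)
    (directed_of_isDirected_le fun _ _ hrs => Set.image_mono fun _ hc => lt_of_lt_of_le hc hrs)
  refine ⟨R, fun a => ?_⟩
  obtain ⟨c, hc, hca⟩ := hR (Set.mem_univ (π a))
  obtain ⟨l, hl⟩ := MulAction.orbitRel_apply.mp (Quotient.exact hca)
  refine ⟨l, l.2, (l * a)⁻¹ * c, QuotientGroup.eq.mp hl, ?_⟩
  rw [mul_inv_cancel_left]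
  exact le_of_lt hc

end TopologicalGroup

section MatrixRepresentation

lemma map_inv_eq_nonsing_inv {G n R : Type*} [Group G] [Fintype n] [DecidableEq n] [CommRing R]
    (ρ : G →* Matrix n n R) (x : G) : ρ x⁻¹ = (ρ x)⁻¹ :=
  (Matrix.inv_eq_left_inv (by rw [← map_mul, inv_mul_cancel, map_one])).symm

variable {G : Type*} [Group G] [TopologicalSpace G]

lemma isSelfAdjointGroup_map {n : Type*} [Fintype n] [DecidableEq n] {ρ : G →* Matrix n n ℝ}
    (hρ : IsClosedEmbedding ρ) (hdet : ∀ x, (ρ x).det = 1) {L : Subgroup G}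
    (hL : IsClosed (L : Set G)) (hinv : ∀ x ∈ L, ∃ y ∈ L, ((ρ x)ᵀ)⁻¹ = ρ y) :
    IsSelfAdjointGroup (L.toSubmonoid.map ρ) where
  isClosed := hρ.isClosedMap _ hL
  inv_mem := by
    rintro _ ⟨x, hx, rfl⟩
    exact ⟨x⁻¹, L.inv_mem hx, map_inv_eq_nonsing_inv ρ x⟩
  transpose_mem := by
    rintro _ ⟨x, hx, rfl⟩
    obtain ⟨y, hy, hxy⟩ := hinv x hx
    refine ⟨y⁻¹, L.inv_mem hy, ?_⟩
    rw [map_inv_eq_nonsing_inv, ← hxy, Matrix.nonsing_inv_nonsing_inv]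
    rw [Matrix.det_transpose, hdet]
    exact isUnit_one
  det_eq_one := by
    rintro _ ⟨x, -, rfl⟩
    exact hdet x

variable [IsTopologicalGroup G]

lemma exists_pow_mem_connectedComponent_one_of_map {M : Type*} [Monoid M] [TopologicalSpace M]
    {ρ : G →* M} (hρ : Continuous ρ) {L : Subgroup G} [Finite (ConnectedComponents L)]
    (A : L.toSubmonoid.map ρ) : ∃ N ≠ 0, A ^ N ∈ connectedComponent 1 := by
  let φ : L →* L.toSubmonoid.map ρ := ρ.submonoidMap L.toSubmonoid
  have continuous_φ : Continuous φ := (hρ.comp continuous_subtype_val).subtype_mk _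
  obtain ⟨x, rfl⟩ : ∃ x, φ x = A := ρ.submonoidMap_surjective L.toSubmonoid A
  obtain ⟨N, hN, hmem⟩ := exists_pow_mem_connectedComponent_one x
  refine ⟨N, hN, ?_⟩
  rw [← map_pow, ← map_one φ]
  exact continuous_φ.image_connectedComponent_subset 1 (Set.mem_image_of_mem φ hmem)

variable {ι κ : Type*} [Fintype ι] [DecidableEq ι] [Fintype κ] [DecidableEq κ]

lemma card_mul_card_le_card_add_one_of_cocompact
    {ρ : G →* Matrix ((ι ⊕ ι) ⊕ κ) ((ι ⊕ ι) ⊕ κ) ℝ} (hρ : IsClosedEmbedding ρ)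
    (hdet : ∀ A, A ∈ Set.range ρ ↔ A.det = 1) {L H : Subgroup G}
    (hH : ∀ x, x ∈ H ↔ ρ x ∈ cornerSymplectic ι κ) (hL : IsClosed (L : Set G))
    [Finite (ConnectedComponents L)] {g : G}
    (hinv : ∀ x ∈ L, ∃ y ∈ L, ((ρ (g * x * g⁻¹))ᵀ)⁻¹ = ρ (g * y * g⁻¹))
    (hproper : ∀ C : Set (G ⧸ H), IsCompact C →
      IsCompact {l : L | ((fun x => l • x) '' C ∩ C).Nonempty})
    [CompactSpace (Quotient (MulAction.orbitRel L (G ⧸ H)))] :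
    Fintype.card ι * Fintype.card κ ≤ Fintype.card ι + 1 := by
  let φ : G →* Matrix ((ι ⊕ ι) ⊕ κ) ((ι ⊕ ι) ⊕ κ) ℝ := ρ.comp (MulAut.conj g)
  have hφ : IsClosedEmbedding φ :=
    hρ.comp ((Homeomorph.mulLeft g).trans (Homeomorph.mulRight g⁻¹)).isClosedEmbedding
  obtain ⟨R, hR⟩ := exists_forall_exists_mul_mul_le (L := L) (H := H)
    (F := fun c => ((ρ (g * c))ᵀ * ρ (g * c)).trace)
    (have continuous_ρ := hρ.continuous.comp (continuous_const_mul g)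
     (continuous_ρ.matrix_transpose.matrix_mul continuous_ρ).matrix_trace)
  have isSelfAdjointGroup := isSelfAdjointGroup_map hφ (fun _ => (hdet _).mp ⟨_, rfl⟩) hL hinv
  refine isSelfAdjointGroup.card_mul_card_le_card_add_one
    (exists_pow_mem_connectedComponent_one_of_map hφ.continuous) (fun q hq => ?_) (R := R)
    fun a ha => ?_
  · obtain ⟨y, rfl⟩ := (hdet q).mpr hq
    have conj_mem_iff (l : G) :
        (ρ y)⁻¹ * φ l * ρ y ∈ cornerSymplectic ι κ ↔ (g⁻¹ * y)⁻¹ * l * (g⁻¹ * y) ∈ H := by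
      rw [hH, ← map_inv_eq_nonsing_inv]
      simp only [φ, MonoidHom.comp_apply, MonoidHom.coe_coe, MulAut.conj_apply, ← map_mul,
        mul_assoc, mul_inv_rev, inv_inv]
    convert (isCompact_setOf_conj_mem hproper (g⁻¹ * y)).image
      (hφ.continuous.comp continuous_subtype_val)
    ext A
    constructor
    · rintro ⟨⟨l, hl, rfl⟩, h⟩
      exact ⟨⟨l, hl⟩, (conj_mem_iff l).mp h, rfl⟩
    · rintro ⟨l, h, rfl⟩
      exact ⟨⟨l, l.2, rfl⟩, (conj_mem_iff l).mpr h⟩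
  · obtain ⟨y, rfl⟩ := (hdet a).mpr ha
    obtain ⟨l, hl, h, hh, hle⟩ := hR (g⁻¹ * y)
    refine ⟨_, ⟨l, hl, rfl⟩, ρ h, (hH h).mp hh, ?_⟩
    have map_mul_mul_eq : φ l * ρ y * ρ h = ρ (g * (l * (g⁻¹ * y) * h)) := by
      simp only [φ, MonoidHom.comp_apply, MonoidHom.coe_coe, MulAut.conj_apply, ← map_mul,
        mul_assoc]
    exact map_mul_mul_eq ▸ hle

end MatrixRepresentation

section SpecialLinearGroup

variable {n N : Type*} [Fintype n] [DecidableEq n] [Fintype N] [DecidableEq N] (e : n ≃ N)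

/-- The inclusion of `SL(N, ℝ)` into the matrices, with rows and columns relabelled along `e`. -/
def submatrixHom : Matrix.SpecialLinearGroup N ℝ →* Matrix n n ℝ :=
  (Matrix.reindexAlgEquiv ℝ ℝ e.symm : Matrix N N ℝ →* Matrix n n ℝ).comp
    Matrix.SpecialLinearGroup.coeMonoidHom

lemma submatrixHom_apply (A : Matrix.SpecialLinearGroup N ℝ) :
    submatrixHom e A = (A : Matrix N N ℝ).submatrix e e :=
  rfl

lemma isClosedEmbedding_submatrixHom : IsClosedEmbedding (submatrixHom e) :=
  (Homeomorph.mk (Matrix.reindex e.symm e.symm)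
    (continuous_id.matrix_reindex e.symm e.symm)
    (continuous_id.matrix_reindex e e)).isClosedEmbedding.comp
      Matrix.SpecialLinearGroup.isClosedEmbedding_val

lemma mem_range_submatrixHom_iff (A : Matrix n n ℝ) :
    A ∈ Set.range (submatrixHom e) ↔ A.det = 1 := by
  refine ⟨?_, fun hA => ⟨⟨A.submatrix e.symm e.symm, ?_⟩, ?_⟩⟩
  · rintro ⟨B, rfl⟩
    rw [submatrixHom_apply, Matrix.det_submatrix_equiv_self]
    exact B.2
  · rwa [Matrix.det_submatrix_equiv_self]
  · exact (Matrix.reindex e e).symm_apply_apply A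

instance : IsTopologicalGroup (Matrix.SpecialLinearGroup N ℝ) :=
  Matrix.SpecialLinearGroup.topologicalGroup

end SpecialLinearGroup

section Coordinates

lemma submatrix_eq_fromBlocks_iff {R n κ : Type*} [Zero R] [One R] [DecidableEq κ] {p q : ℕ}
    {f : n ≃ Fin p} {e : n ⊕ κ ≃ Fin q} (he_inl : ∀ i, (e (.inl i) : ℕ) = f i)
    (he_inr : ∀ j, p ≤ e (.inr j)) (A : Matrix (Fin q) (Fin q) R) (B : Matrix (Fin p) (Fin p) R) :
    A.submatrix e e = Matrix.fromBlocks (B.submatrix f f) 0 0 1 ↔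
      (∀ (i j : Fin q) (hi : (i : ℕ) < p) (hj : (j : ℕ) < p), A i j = B ⟨i, hi⟩ ⟨j, hj⟩) ∧
      ∀ i j : Fin q, p ≤ (i : ℕ) ∨ p ≤ (j : ℕ) → A i j = if i = j then 1 else 0 := by
  have inl_lt (i : n) : (e (.inl i) : ℕ) < p := he_inl i ▸ (f i).2
  have mk_inl (i : n) (hi : (e (.inl i) : ℕ) < p) : (⟨e (.inl i), hi⟩ : Fin p) = f i :=
    Fin.ext (he_inl i)
  simp only [← Matrix.ext_iff, e.surjective.forall, Sum.forall, Matrix.submatrix_apply,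
    Matrix.fromBlocks_apply₁₁, Matrix.fromBlocks_apply₁₂, Matrix.fromBlocks_apply₂₁,
    Matrix.fromBlocks_apply₂₂, Matrix.zero_apply, Matrix.one_apply, mk_inl, inl_lt, he_inr,
    (he_inr _).not_gt, (inl_lt _).not_ge, EmbeddingLike.apply_eq_iff_eq, Sum.inr.injEq,
    reduceCtorEq, if_false, forall_true_left, or_true, or_false,
    IsEmpty.forall_iff, implies_true, and_true, true_and, forall_and, and_assoc]

/-- The order-preserving relabelling `Fin m ⊕ Fin m ≃ Fin (2 * k - 2)` for `k = m + 1`. -/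
def symplecticIndexEquiv (m : ℕ) : Fin m ⊕ Fin m ≃ Fin (2 * (m + 1) - 2) :=
  finSumFinEquiv.trans (finCongr (by omega))

/-- The extension of `symplecticIndexEquiv` to `Fin (2 * k + 1)` that puts the three further
coordinates last. -/
def indexEquiv (m : ℕ) : (Fin m ⊕ Fin m) ⊕ Fin 3 ≃ Fin (2 * (m + 1) + 1) :=
  ((Equiv.sumCongr (symplecticIndexEquiv m) (Equiv.refl (Fin 3))).trans finSumFinEquiv).trans
    (finCongr (by omega))

lemma submatrix_symplecticIndexEquiv_eq_neg_J {m : ℕ}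
    {Ω : Matrix (Fin (2 * (m + 1) - 2)) (Fin (2 * (m + 1) - 2)) ℝ}
    (hΩ : ∀ i j : Fin (2 * (m + 1) - 2), Ω i j =
      if (i : ℕ) + (m + 1 - 1) = (j : ℕ) then 1
      else if (j : ℕ) + (m + 1 - 1) = (i : ℕ) then -1 else 0) :
    Ω.submatrix (symplecticIndexEquiv m) (symplecticIndexEquiv m) = -Matrix.J (Fin m) ℝ := by
  have add_ne (i j : Fin m) : (i : ℕ) + m ≠ j := by omega
  have add_add_ne (i j : Fin m) : (i : ℕ) + m + m ≠ j := by omega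
  ext (i | i) (j | j) <;>
    simp [symplecticIndexEquiv, hΩ, Matrix.J, Matrix.one_apply, Fin.ext_iff, add_ne, add_add_ne,
      neg_ite, eq_comm (a := (j : ℕ))]

lemma transpose_mul_mul_eq_iff_submatrix_mem_symplecticGroup {R l n : Type*} [CommRing R]
    [Fintype l] [DecidableEq l] [Fintype n] {f : l ⊕ l ≃ n} {Ω : Matrix n n R}
    (hΩ : Ω.submatrix f f = -Matrix.J l R) (B : Matrix n n R) :
    Bᵀ * Ω * B = Ω ↔ B.submatrix f f ∈ Matrix.symplecticGroup l R := by
  rw [SymplecticGroup.mem_iff', ← neg_inj (b := Matrix.J l R), ← hΩ, ← Matrix.neg_mul,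
    ← Matrix.mul_neg, ← hΩ, Matrix.transpose_submatrix, Matrix.submatrix_mul_equiv,
    Matrix.submatrix_mul_equiv]
  exact (Matrix.reindex f.symm f.symm).injective.eq_iff.symm

lemma exists_symplectic_block_iff {m : ℕ}
    {Ω : Matrix (Fin (2 * (m + 1) - 2)) (Fin (2 * (m + 1) - 2)) ℝ}
    (hΩ : ∀ i j : Fin (2 * (m + 1) - 2), Ω i j =
      if (i : ℕ) + (m + 1 - 1) = (j : ℕ) then 1
      else if (j : ℕ) + (m + 1 - 1) = (i : ℕ) then -1 else 0)
    (A : Matrix (Fin (2 * (m + 1) + 1)) (Fin (2 * (m + 1) + 1)) ℝ) :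
    (∃ B : Matrix (Fin (2 * (m + 1) - 2)) (Fin (2 * (m + 1) - 2)) ℝ,
      IsUnit B.det ∧ Bᵀ * Ω * B = Ω ∧
      (∀ (i j : Fin (2 * (m + 1) + 1)) (hi : (i : ℕ) < 2 * (m + 1) - 2)
        (hj : (j : ℕ) < 2 * (m + 1) - 2), A i j = B ⟨i, hi⟩ ⟨j, hj⟩) ∧
      ∀ i j : Fin (2 * (m + 1) + 1), 2 * (m + 1) - 2 ≤ (i : ℕ) ∨ 2 * (m + 1) - 2 ≤ (j : ℕ) →
        A i j = if i = j then 1 else 0) ↔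
    A.submatrix (indexEquiv m) (indexEquiv m) ∈ cornerSymplectic (Fin m) (Fin 3) := by
  simp only [← submatrix_eq_fromBlocks_iff (f := symplecticIndexEquiv m) (e := indexEquiv m)
      (fun i => by simp [indexEquiv]) (fun j => by simp [indexEquiv]),
    transpose_mul_mul_eq_iff_submatrix_mem_symplecticGroup
      (submatrix_symplecticIndexEquiv_eq_neg_J hΩ)]
  constructor
  · rintro ⟨B, -, hB, hA⟩
    exact ⟨_, hB, hA.symm⟩
  · rintro ⟨B, hB, hA⟩
    obtain ⟨B, rfl⟩ :=
      (Matrix.reindex (symplecticIndexEquiv m) (symplecticIndexEquiv m)).symm.surjective B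
    refine ⟨B, ?_, hB, hA.symm⟩
    rw [← Matrix.det_submatrix_equiv_self (symplecticIndexEquiv m)]
    exact SymplecticGroup.symplectic_det hB

end Coordinates

end CliffordKlein

theorem no_standard_compact_clifford_klein_form_Sp_general
    {ι κ N : Type*} [Fintype ι] [DecidableEq ι] [Fintype κ] [DecidableEq κ]
    [Fintype N] [DecidableEq N] (hcard : Fintype.card ι + 1 < Fintype.card ι * Fintype.card κ)
    (e : (ι ⊕ ι) ⊕ κ ≃ N) (H : Subgroup (Matrix.SpecialLinearGroup N ℝ))
    (hH : ∀ A : Matrix.SpecialLinearGroup N ℝ,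
      A ∈ H ↔ (A : Matrix N N ℝ).submatrix e e ∈ CliffordKlein.cornerSymplectic ι κ) :
    ¬ ∃ L : Subgroup (Matrix.SpecialLinearGroup N ℝ),
      IsClosed (L : Set (Matrix.SpecialLinearGroup N ℝ)) ∧
      Finite (ConnectedComponents L) ∧
      (∃ g : Matrix.SpecialLinearGroup N ℝ, ∀ A ∈ L, ∃ B ∈ L,
        ((g * A * g⁻¹ : Matrix.SpecialLinearGroup N ℝ) : Matrix N N ℝ)ᵀ⁻¹
          = (g * B * g⁻¹ : Matrix.SpecialLinearGroup N ℝ)) ∧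
      (∀ C : Set (Matrix.SpecialLinearGroup N ℝ ⧸ H), IsCompact C →
        IsCompact {l : L | ((fun x => l • x) '' C ∩ C).Nonempty}) ∧
      CompactSpace (Quotient (MulAction.orbitRel L (Matrix.SpecialLinearGroup N ℝ ⧸ H))) := by
  rintro ⟨L, hL, _, ⟨g, hg⟩, hproper, _⟩
  refine hcard.not_ge (CliffordKlein.card_mul_card_le_card_add_one_of_cocompact
    (CliffordKlein.isClosedEmbedding_submatrixHom e) (CliffordKlein.mem_range_submatrixHom_iff e)
    hH hL (g := g) (fun A hA => ?_) hproper)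
  obtain ⟨B, hB, hAB⟩ := hg A hA
  refine ⟨B, hB, ?_⟩
  rw [CliffordKlein.submatrixHom_apply, CliffordKlein.submatrixHom_apply, ← hAB,
    Matrix.transpose_submatrix, Matrix.inv_submatrix_equiv]

/-- For `k ≥ 5`, the homogeneous space `SL(2k+1, ℝ)/Sp(k-1, ℝ)` admits no
standard compact Clifford–Klein form: there is no closed subgroup `L` of `G = SL(2k+1, ℝ)` with
finitely many connected components, some conjugate of which is invariant under the Cartan
involution `A ↦ (Aᵀ)⁻¹` (i.e. `L` is reductive in `G`), acting properly on `G/H` with compact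
orbit space `L\(G/H)`. Here `H ≅ Sp(k-1, ℝ)` consists of the block-diagonal matrices
`diag(B, I₃)` with `Bᵀ Ω B = Ω`, `Ω` the standard symplectic `(2k-2) × (2k-2)` matrix. -/
theorem no_standard_compact_clifford_klein_form_Sp
    (k : ℕ) (hk : 5 ≤ k)
    (Ω : Matrix (Fin (2*k-2)) (Fin (2*k-2)) ℝ)
    (hΩ : ∀ i j : Fin (2*k-2), Ω i j =
      if (i : ℕ) + (k - 1) = (j : ℕ) then 1
      else if (j : ℕ) + (k - 1) = (i : ℕ) then -1 else 0)
    (H : Subgroup (Matrix.SpecialLinearGroup (Fin (2*k+1)) ℝ))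
    (hH : ∀ A : Matrix.SpecialLinearGroup (Fin (2*k+1)) ℝ,
      A ∈ H ↔ ∃ B : Matrix (Fin (2*k-2)) (Fin (2*k-2)) ℝ,
        -- `B ∈ GL(2k-2, ℝ)` and `B` is symplectic
        IsUnit B.det ∧ Bᵀ * Ω * B = Ω ∧
        -- the upper-left `(2k-2) × (2k-2)` block of `A` is `B`
        (∀ (i j : Fin (2*k+1)) (hi : (i : ℕ) < 2*k-2) (hj : (j : ℕ) < 2*k-2),
          (A : Matrix (Fin (2*k+1)) (Fin (2*k+1)) ℝ) i j = B ⟨(i : ℕ), hi⟩ ⟨(j : ℕ), hj⟩) ∧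
        -- outside that block, `A` agrees with the identity matrix
        (∀ i j : Fin (2*k+1), 2*k-2 ≤ (i : ℕ) ∨ 2*k-2 ≤ (j : ℕ) →
          (A : Matrix (Fin (2*k+1)) (Fin (2*k+1)) ℝ) i j = if i = j then 1 else 0)) :
    ¬ ∃ L : Subgroup (Matrix.SpecialLinearGroup (Fin (2*k+1)) ℝ),
      -- `L` is a closed subgroup of `G`
      IsClosed (L : Set (Matrix.SpecialLinearGroup (Fin (2*k+1)) ℝ)) ∧
      -- (a) `L` has finitely many connected components
      Finite (ConnectedComponents L) ∧
      -- (b) some conjugate `g L g⁻¹` is invariant under the Cartan involution `A ↦ (Aᵀ)⁻¹`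
      (∃ g : Matrix.SpecialLinearGroup (Fin (2*k+1)) ℝ, ∀ A ∈ L, ∃ B ∈ L,
        (((g * A * g⁻¹ : Matrix.SpecialLinearGroup (Fin (2*k+1)) ℝ) :
            Matrix (Fin (2*k+1)) (Fin (2*k+1)) ℝ)ᵀ)⁻¹
          = ((g * B * g⁻¹ : Matrix.SpecialLinearGroup (Fin (2*k+1)) ℝ) :
            Matrix (Fin (2*k+1)) (Fin (2*k+1)) ℝ)) ∧
      -- (c) the left-translation action of `L` on `G/H` is proper
      (∀ C : Set (Matrix.SpecialLinearGroup (Fin (2*k+1)) ℝ ⧸ H), IsCompact C →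
        IsCompact {l : L | ((fun x => l • x) '' C ∩ C).Nonempty}) ∧
      -- (d) the orbit space `L\(G/H)` is compact
      CompactSpace (Quotient (MulAction.orbitRel L
        (Matrix.SpecialLinearGroup (Fin (2*k+1)) ℝ ⧸ H))) := by
  obtain ⟨m, rfl⟩ : ∃ m, k = m + 1 := ⟨k - 1, by omega⟩
  refine no_standard_compact_clifford_klein_form_Sp_general ?_ (CliffordKlein.indexEquiv m) H
    fun A => (hH A).trans (CliffordKlein.exists_symplectic_block_iff hΩ A)
  rw [Fintype.card_fin, Fintype.card_fin]
  omega
end
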